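/- Let s ∈ (0,1), let F : ℝⁿ×(0,∞) → ℝ be smooth with ∫₀^∞∫_{ℝⁿ} |F(x,z)| dx dz < ∞, and let V : ℝⁿ×[0,∞) → ℝ be smooth with ∫₀^∞∫_{ℝⁿ} |∇̃V(x,z)|² z^{1−2s} dx dz < ∞, V(·,0) ≡ 0, and div_{x,z}(z^{1−2s} ∇̃V) = F on ℝⁿ×(0,∞). Then for every φ ∈ C_c^∞(ℝⁿ), writing Φ(x,z) := (P_z^{(s)} ∗ φ)(x), the limit as ε → 0⁺ and R → ∞ of [ ∫_{ℝⁿ} R^{1−2s} ∂_zV(x,R) φ(x) dx − ∫_{ℝⁿ} ε^{1−2s} ∂_zV(x,ε) φ(x) dx ] exists and equals ∫₀^∞∫_{ℝⁿ} F(x,z) Φ(x,z) dx dz, which in turn equals ∫_{ℝⁿ} ( ∫₀^∞ (P_z^{(s)} ∗ F(·,z))(x) dz ) φ(x) dx. -/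

import Mathlib

open MeasureTheory Filter Set
open scoped Topology ENNReal NNReal

noncomputable section

/-- `ℝⁿ` with the Euclidean norm. -/
abbrev En (n : ℕ) := EuclideanSpace ℝ (Fin n)

/-- The normalizing constant `p(n,s) = Γ(n/2+s)/(π^{n/2} Γ(s))` of the Poisson kernel. -/
def pns (n : ℕ) (s : ℝ) : ℝ :=
  Real.Gamma ((n : ℝ) / 2 + s) / (Real.pi ^ ((n : ℝ) / 2) * Real.Gamma s)

/-- The fractional Poisson kernel `P_z^{(s)}(x) = p(n,s) z^{2s} (|x|² + z²)^{-(n+2s)/2}`. -/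
def Pker (n : ℕ) (s z : ℝ) (x : En n) : ℝ :=
  pns n s * z ^ (2 * s) * (‖x‖ ^ 2 + z ^ 2) ^ (-((n : ℝ) + 2 * s) / 2)

/-- Convolution with the fractional Poisson kernel in the first variable, at fixed `z`. -/
def Pconv (n : ℕ) (s z : ℝ) (f : En n → ℝ) (x : En n) : ℝ :=
  ∫ y, Pker n s z (x - y) * f y

/-- The Caffarelli–Silvestre extension `U(x,z) = (P_z^{(s)} ∗ u)(x)`. -/
def CSext (n : ℕ) (s : ℝ) (u : En n → ℝ) (x : En n) (z : ℝ) : ℝ :=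
  Pconv n s z u x

/-- The constant `C(n,s) = 4^s Γ(n/2+s) / (π^{n/2} |Γ(-s)|)`. -/
def Cns (n : ℕ) (s : ℝ) : ℝ :=
  4 ^ s * Real.Gamma ((n : ℝ) / 2 + s) / (Real.pi ^ ((n : ℝ) / 2) * |Real.Gamma (-s)|)

/-- The fractional Laplacian `(-Δ)^s w(x)` as a principal-value singular integral. -/
def fracLap (n : ℕ) (s : ℝ) (w : En n → ℝ) (x : En n) : ℝ :=
  Cns n s * limUnder (𝓝[>] (0 : ℝ))
    (fun ε : ℝ => ∫ y in {y : En n | ε < ‖x - y‖}, (w x - w y) / ‖x - y‖ ^ ((n : ℝ) + 2 * s))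

/-- `Λ^s w := -(-Δ)^s w`. -/
def Lam (n : ℕ) (s : ℝ) (w : En n → ℝ) (x : En n) : ℝ := - fracLap n s w x

/-- The first-order carré du champ `Γ₁(u,v) = ½(Λ^s(uv) - u Λ^s v - v Λ^s u)`. -/
def Gamma1 (n : ℕ) (s : ℝ) (u v : En n → ℝ) (x : En n) : ℝ :=
  (Lam n s (fun y => u y * v y) x - u x * Lam n s v x - v x * Lam n s u x) / 2

/-- The constant `β_s = 2^{2s-1} Γ(s)/Γ(1-s)`. -/
def betaS (s : ℝ) : ℝ := 2 ^ (2 * s - 1) * Real.Gamma s / Real.Gamma (1 - s)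

/-- Partial derivative in the `i`-th coordinate direction. -/
def pd {n : ℕ} (i : Fin n) (f : En n → ℝ) (x : En n) : ℝ :=
  fderiv ℝ f x (EuclideanSpace.single i 1)

/-- The Laplacian in the `x`-variables. -/
def lapX {n : ℕ} (f : En n → ℝ) (x : En n) : ℝ := ∑ i, pd i (pd i f) x

/-- The degenerate operator `L_s W = div_{x,z}(z^{1-2s} ∇̃W)`, written out as
`z^{1-2s} Δ_x W + ∂_z(z^{1-2s} ∂_z W)`. -/
def LsOp {n : ℕ} (s : ℝ) (W : En n → ℝ → ℝ) (x : En n) (z : ℝ) : ℝ :=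
  z ^ (1 - 2 * s) * lapX (fun y => W y z) x
    + deriv (fun t => t ^ (1 - 2 * s) * deriv (W x) t) z

/-!
Pair `V` with the Poisson extension `Φ` of `φ`, which is `L_s`-harmonic, through Green's formula
on `ℝⁿ × (0, 2L)`. Since `V(·,0) = 0`, cutting `Φ` off at height and width `L` and sending
`L → ∞` shows that the weighted flux of `V` through height `ε` tends to `-∬ F Φ` as `ε → 0`. The
commutator terms of the cutoff vanish because the energy bound and AM-GM along vertical lines
give `|V(x,z)| ≤ z^s w(x)`, with `w` the sum of a constant and an integrable function.

The flux through height `R` tends to zero. The odd reflection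
`W(x,r) = V(x,R+r) - V(x,R-r)` vanishes at `r = 0`, where its vertical derivative is
`2 ∂_z V(x,R)`. Applying the same Green formula to `W` with the unweighted operator `s = 1/2` bounds
the flux through height `R` by the mass of `F` above height `R/2` plus `O(R^{-s})`.
-/

/-! ### Partial derivatives -/

section PartialDerivatives

variable {n : ℕ} {f g : En n → ℝ} {x : En n}

lemma contDiff_pd {k m : WithTop ℕ∞} (hf : ContDiff ℝ k f) (hmk : m + 1 ≤ k) (i : Fin n) :
    ContDiff ℝ m (pd i f) :=
  (hf.fderiv_right hmk).clm_apply contDiff_const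

lemma hasCompactSupport_pd (hf : HasCompactSupport f) (i : Fin n) : HasCompactSupport (pd i f) :=
  hf.fderiv_apply ℝ _

lemma continuous_lapX (hf : ContDiff ℝ 2 f) : Continuous (lapX f) :=
  continuous_finsetSum _ fun i _ =>
    (contDiff_pd (contDiff_pd hf (m := 1) (by norm_num) i) (m := 0) (by norm_num) i).continuous

lemma lapX_of_notMem_tsupport (hx : x ∉ tsupport f) : lapX f x = 0 :=
  Finset.sum_eq_zero fun _ _ => image_eq_zero_of_notMem_tsupport fun h =>
    hx (tsupport_fderiv_apply_subset ℝ _ (tsupport_fderiv_apply_subset ℝ _ h))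

lemma hasCompactSupport_lapX (hf : HasCompactSupport f) : HasCompactSupport (lapX f) :=
  HasCompactSupport.intro hf fun _ => lapX_of_notMem_tsupport

lemma pd_add (hf : DifferentiableAt ℝ f x) (hg : DifferentiableAt ℝ g x) (i : Fin n) :
    pd i (fun y => f y + g y) x = pd i f x + pd i g x := by
  simp only [pd, fderiv_fun_add hf hg, add_apply]

lemma pd_sub (hf : DifferentiableAt ℝ f x) (hg : DifferentiableAt ℝ g x) (i : Fin n) :
    pd i (fun y => f y - g y) x = pd i f x - pd i g x := by
  simp only [pd, fderiv_fun_sub hf hg, sub_apply]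

lemma pd_mul (hf : DifferentiableAt ℝ f x) (hg : DifferentiableAt ℝ g x) (i : Fin n) :
    pd i (fun y => f y * g y) x = f x * pd i g x + g x * pd i f x := by
  simp only [pd, fderiv_fun_mul hf hg, add_apply, smul_apply, smul_eq_mul]

lemma lapX_sub (hf : ContDiff ℝ 2 f) (hg : ContDiff ℝ 2 g) (x : En n) :
    lapX (fun y => f y - g y) x = lapX f x - lapX g x := by
  have hpd : ∀ {u : En n → ℝ}, ContDiff ℝ 2 u → ∀ i, Differentiable ℝ (pd i u) :=
    fun hu i => (contDiff_pd hu (m := 1) (by norm_num) i).differentiable one_ne_zero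
  have hpd_sub : ∀ i, (pd i fun y => f y - g y) = fun y => pd i f y - pd i g y := fun i =>
    funext fun y => pd_sub (hf.differentiable two_ne_zero y) (hg.differentiable two_ne_zero y) i
  simp only [lapX, hpd_sub, fun i => pd_sub (hpd hf i x) (hpd hg i x) i, Finset.sum_sub_distrib]

lemma lapX_mul (hf : ContDiff ℝ 2 f) (hg : ContDiff ℝ 2 g) (x : En n) :
    lapX (fun y => f y * g y) x
      = f x * lapX g x + 2 * (∑ i, pd i f x * pd i g x) + g x * lapX f x := by
  have hdiff : ∀ {u : En n → ℝ}, ContDiff ℝ 2 u → Differentiable ℝ u :=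
    fun hu => hu.differentiable two_ne_zero
  have hpd : ∀ {u : En n → ℝ}, ContDiff ℝ 2 u → ∀ i, Differentiable ℝ (pd i u) :=
    fun hu i => (contDiff_pd hu (m := 1) (by norm_num) i).differentiable one_ne_zero
  have hterm : ∀ i, pd i (pd i fun y => f y * g y) x
      = f x * pd i (pd i g) x + 2 * (pd i f x * pd i g x) + g x * pd i (pd i f) x := fun i => by
    rw [funext fun y => pd_mul (hdiff hf y) (hdiff hg y) i,
      pd_add ((hdiff hf x).fun_mul (hpd hg i x)) ((hdiff hg x).fun_mul (hpd hf i x)),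
      pd_mul (hdiff hf x) (hpd hg i x), pd_mul (hdiff hg x) (hpd hf i x)]
    ring
  simp only [lapX, hterm, Finset.sum_add_distrib, ← Finset.mul_sum]

lemma pd_radial {h h' : ℝ → ℝ} {a : En n} {c : ℝ}
    (hh : HasDerivAt h (h' (‖x - a‖ ^ 2 + c)) (‖x - a‖ ^ 2 + c)) (i : Fin n) :
    pd i (fun y => h (‖y - a‖ ^ 2 + c)) x = 2 * (x i - a i) * h' (‖x - a‖ ^ 2 + c) := by
  have hsq : HasFDerivAt (fun y => ‖y - a‖ ^ 2 + c) _ x :=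
    ((hasFDerivAt_id x).sub_const a).norm_sq.add_const c
  have hcomp : HasFDerivAt (fun y => h (‖y - a‖ ^ 2 + c)) _ x := hh.comp_hasFDerivAt x hsq
  rw [pd, hcomp.fderiv]
  simp only [id_eq, map_sub, ContinuousLinearMap.comp_id, smul_apply, sub_apply,
    coe_innerSL_apply, EuclideanSpace.inner_single_right, Real.ringHom_apply, one_mul,
    nsmul_eq_mul, Nat.cast_ofNat, smul_eq_mul]
  ring

lemma lapX_radial {h h' h'' : ℝ → ℝ} {a : En n} {c : ℝ}
    (hh : ∀ y, HasDerivAt h (h' (‖y - a‖ ^ 2 + c)) (‖y - a‖ ^ 2 + c))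
    (hh' : ∀ y, HasDerivAt h' (h'' (‖y - a‖ ^ 2 + c)) (‖y - a‖ ^ 2 + c)) (x : En n) :
    lapX (fun y => h (‖y - a‖ ^ 2 + c)) x
      = 2 * n * h' (‖x - a‖ ^ 2 + c) + 4 * ‖x - a‖ ^ 2 * h'' (‖x - a‖ ^ 2 + c) := by
  have hcoord : ∀ i, HasFDerivAt (fun y : En n => 2 * (y i - a i))
      ((2 : ℝ) • (EuclideanSpace.proj i : En n →L[ℝ] ℝ)) x := fun i =>
    ((EuclideanSpace.proj i : En n →L[ℝ] ℝ).hasFDerivAt.sub_const (a i)).const_mul 2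
  have hh'x : DifferentiableAt ℝ (fun y : En n => h' (‖y - a‖ ^ 2 + c)) x :=
    (hh' x).differentiableAt.comp x (f := fun y => ‖y - a‖ ^ 2 + c)
      (((differentiable_id.sub_const a).norm_sq ℝ).add_const c x)
  have hterm : ∀ i, pd i (pd i fun y => h (‖y - a‖ ^ 2 + c)) x
      = 2 * h' (‖x - a‖ ^ 2 + c) + 4 * h'' (‖x - a‖ ^ 2 + c) * (x i - a i) ^ 2 := fun i => by
    rw [funext fun y => pd_radial (hh y) i, pd_mul (hcoord i).differentiableAt hh'x,
      pd_radial (hh' x), pd, (hcoord i).fderiv]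
    simp only [smul_apply, PiLp.proj_apply, PiLp.single_eq_same, smul_eq_mul, mul_one]
    ring
  have hnorm : ‖x - a‖ ^ 2 = ∑ i, (x i - a i) ^ 2 := by simp [EuclideanSpace.norm_sq_eq]
  simp only [lapX, hterm, Finset.sum_add_distrib, ← Finset.mul_sum, ← hnorm, Finset.sum_const,
    Finset.card_univ, Fintype.card_fin, nsmul_eq_mul]
  ring

lemma integral_mul_pd (hf : ContDiff ℝ 1 f) (hfc : HasCompactSupport f) (hg : ContDiff ℝ 1 g)
    (i : Fin n) : ∫ x, f x * pd i g x = -∫ x, pd i f x * g x := by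
  have hpd : ∀ {u : En n → ℝ}, ContDiff ℝ 1 u → Continuous (pd i u) := fun hu =>
    (contDiff_pd hu (m := 0) (by norm_num) i).continuous
  refine integral_mul_fderiv_eq_neg_fderiv_mul_of_integrable
    (((hpd hf).mul hg.continuous).integrable_of_hasCompactSupport
      (hasCompactSupport_pd hfc i).mul_right)
    ((hf.continuous.mul (hpd hg)).integrable_of_hasCompactSupport hfc.mul_right)
    ((hf.continuous.mul hg.continuous).integrable_of_hasCompactSupport hfc.mul_right)
    (fun x _ => hf.differentiable one_ne_zero x) (fun x _ => hg.differentiable one_ne_zero x)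

lemma integral_mul_lapX (hf : ContDiff ℝ 2 f) (hfc : HasCompactSupport f) (hg : ContDiff ℝ 2 g) :
    ∫ x, f x * lapX g x = ∫ x, lapX f x * g x := by
  have hpd : ∀ {u : En n → ℝ}, ContDiff ℝ 2 u → ∀ i, ContDiff ℝ 1 (pd i u) := fun hu =>
    contDiff_pd hu (by norm_num)
  have hterm : ∀ i, Integrable fun x => f x * pd i (pd i g) x := fun i =>
    (hf.continuous.mul (contDiff_pd (hpd hg i) (m := 0)
      (by norm_num) i).continuous).integrable_of_hasCompactSupport hfc.mul_right
  have hterm' : ∀ i, Integrable fun x => pd i (pd i f) x * g x := fun i =>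
    ((contDiff_pd (hpd hf i) (m := 0) (by norm_num) i).continuous.mul
      hg.continuous).integrable_of_hasCompactSupport
        (hasCompactSupport_pd (hasCompactSupport_pd hfc i) i).mul_right
  simp_rw [lapX, Finset.mul_sum, Finset.sum_mul]
  rw [integral_finsetSum _ fun i _ => hterm i, integral_finsetSum _ fun i _ => hterm' i]
  refine Finset.sum_congr rfl fun i _ => ?_
  rw [integral_mul_pd (hf.of_le one_le_two) hfc (hpd hg i),
    integral_mul_pd (hpd hf i) (hasCompactSupport_pd hfc i) (hg.of_le one_le_two) i, neg_neg]

end PartialDerivatives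

/-! ### Functions on a slab -/

section Slab

variable {n : ℕ} {k m : WithTop ℕ∞} {I J : Set ℝ} {W : En n → ℝ → ℝ} {x : En n} {z : ℝ}

lemma fderiv_slice_apply (hW : DifferentiableAt ℝ (fun p : En n × ℝ => W p.1 p.2) (x, z))
    (v : En n) :
    fderiv ℝ (fun y => W y z) x v = fderiv ℝ (fun p : En n × ℝ => W p.1 p.2) (x, z) (v, 0) :=
  congrArg (· v) (HasFDerivAt.comp x (f := fun y => (y, z)) hW.hasFDerivAt
    (hasFDerivAt_prodMk_left x z)).fderiv

lemma deriv_slice (hW : DifferentiableAt ℝ (fun p : En n × ℝ => W p.1 p.2) (x, z)) :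
    deriv (W x) z = fderiv ℝ (fun p : En n × ℝ => W p.1 p.2) (x, z) (0, 1) :=
  (hW.hasFDerivAt.comp_hasDerivAt z (f := fun t => (x, t))
    ((hasDerivAt_const _ _).prodMk (hasDerivAt_id _))).deriv

/-- `W` is `Cᵏ` on the slab `ℝⁿ × I`. -/
def ContDiffOnSlab (k : WithTop ℕ∞) (I : Set ℝ) (W : En n → ℝ → ℝ) : Prop :=
  ContDiffOn ℝ k (fun p : En n × ℝ => W p.1 p.2) (univ ×ˢ I)

namespace ContDiffOnSlab

lemma mono (hW : ContDiffOnSlab k I W) (hJ : J ⊆ I) : ContDiffOnSlab k J W :=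
  ContDiffOn.mono hW (prod_mono_right hJ)

lemma of_le (hW : ContDiffOnSlab k I W) (hm : m ≤ k) : ContDiffOnSlab m I W :=
  ContDiffOn.of_le hW hm

lemma contDiffAt (hW : ContDiffOnSlab k I W) (hI : IsOpen I) (x : En n) (hz : z ∈ I) :
    ContDiffAt ℝ k (fun p : En n × ℝ => W p.1 p.2) (x, z) :=
  ContDiffOn.contDiffAt hW ((isOpen_univ.prod hI).mem_nhds ⟨mem_univ _, hz⟩)

lemma contDiff_left (hW : ContDiffOnSlab k I W) (hI : IsOpen I) (hz : z ∈ I) :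
    ContDiff ℝ k (fun x => W x z) :=
  contDiff_iff_contDiffAt.2 fun x =>
    ContDiffAt.comp (f := fun y : En n => (y, z)) x (hW.contDiffAt hI x hz) (by fun_prop)

lemma contDiffAt_right (hW : ContDiffOnSlab k I W) (hI : IsOpen I) (x : En n) (hz : z ∈ I) :
    ContDiffAt ℝ k (W x) z :=
  ContDiffAt.comp (f := fun t : ℝ => (x, t)) z (hW.contDiffAt hI x hz) (by fun_prop)

lemma hasDerivAt (hW : ContDiffOnSlab k I W) (hk : k ≠ 0) (hI : IsOpen I) (x : En n)
    (hz : z ∈ I) : HasDerivAt (W x) (deriv (W x) z) z :=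
  ((hW.contDiffAt_right hI x hz).differentiableAt hk).hasDerivAt

lemma deriv (hW : ContDiffOnSlab k I W) (hI : IsOpen I) (hmk : m + 1 ≤ k) :
    ContDiffOnSlab m I (fun x z => deriv (W x) z) :=
  ((ContDiffOn.fderiv_of_isOpen hW (isOpen_univ.prod hI) hmk).clm_apply
    (contDiffOn_const (c := ((0 : En n), (1 : ℝ))))).congr fun p hp =>
      deriv_slice ((hW.contDiffAt hI p.1 hp.2).differentiableAt (by rintro rfl; simp at hmk))

lemma pd (hW : ContDiffOnSlab k I W) (hI : IsOpen I) (hmk : m + 1 ≤ k) (i : Fin n) :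
    ContDiffOnSlab m I (fun x z => pd i (fun y => W y z) x) :=
  ((ContDiffOn.fderiv_of_isOpen hW (isOpen_univ.prod hI) hmk).clm_apply
    (contDiffOn_const (c := (EuclideanSpace.single i (1 : ℝ), (0 : ℝ))))).congr fun p hp =>
      fderiv_slice_apply
        ((hW.contDiffAt hI p.1 hp.2).differentiableAt (by rintro rfl; simp at hmk)) _

lemma lapX (hW : ContDiffOnSlab 2 I W) (hI : IsOpen I) :
    ContDiffOnSlab 0 I (fun x z => lapX (fun y => W y z) x) :=
  ContDiffOn.sum fun i _ =>
    (hW.pd hI (m := 1) (by norm_num) i).pd hI (m := 0) (by norm_num) i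

lemma continuousOn (hW : ContDiffOnSlab k I W) :
    ContinuousOn (fun p : En n × ℝ => W p.1 p.2) (univ ×ˢ I) :=
  ContDiffOn.continuousOn hW

lemma rpow_mul (hW : ContDiffOnSlab k I W) (hI : I ⊆ Ioi 0) (a : ℝ) :
    ContDiffOnSlab k I (fun x z => z ^ a * W x z) :=
  ContDiffOn.mul (fun _ hp =>
    (contDiffAt_snd.rpow_const_of_ne (ne_of_gt (hI hp.2))).contDiffWithinAt) hW

lemma LsOp (hW : ContDiffOnSlab 2 I W) (hI : IsOpen I) (hI0 : I ⊆ Ioi 0) (s : ℝ) :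
    ContDiffOnSlab 0 I (LsOp s W) :=
  ContDiffOn.add ((hW.lapX hI).rpow_mul hI0 _)
    (((hW.deriv hI (m := 1) (by norm_num)).rpow_mul hI0 _).deriv hI (by norm_num))

end ContDiffOnSlab

lemma volume_restrict_slab (I : Set ℝ) :
    (volume : Measure (En n × ℝ)).restrict (univ ×ˢ I)
      = (volume : Measure (En n)).prod (volume.restrict I) := by
  rw [Measure.volume_eq_prod, ← Measure.prod_restrict, Measure.restrict_univ]

end Slab

/-! ### The Poisson kernel as a probability density -/

section Mass

variable {n : ℕ} {s z : ℝ}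

lemma pns_pos (hs : 0 < s) : 0 < pns n s := by
  have hΓ : 0 < Real.Gamma ((n : ℝ) / 2 + s) := Real.Gamma_pos_of_pos (by positivity)
  have hΓs : 0 < Real.Gamma s := Real.Gamma_pos_of_pos hs
  unfold pns
  positivity

lemma Pker_nonneg (hs : 0 < s) (hz : 0 < z) (x : En n) : 0 ≤ Pker n s z x := by
  have := pns_pos (n := n) hs
  unfold Pker
  positivity

lemma contDiffOn_Pker {k : WithTop ℕ∞} :
    ContDiffOn ℝ k (fun p : En n × ℝ => Pker n s p.2 p.1) (univ ×ˢ Ioi 0) := by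
  intro p hp
  have hp2 : 0 < p.2 := hp.2
  have hρ : ‖p.1‖ ^ 2 + p.2 ^ 2 ≠ 0 := by positivity
  exact ((contDiffAt_const.mul (contDiffAt_snd.rpow_const_of_ne hp2.ne')).mul
    (((contDiffAt_fst.norm_sq ℝ).add (contDiffAt_snd.pow 2)).rpow_const_of_ne
      hρ)).contDiffWithinAt

lemma continuous_Pker (hz : 0 < z) : Continuous (Pker n s z) :=
  continuousOn_univ.mp <| (contDiffOn_Pker (n := n) (s := s) (k := 0)).continuousOn.comp
    (f := fun x : En n => (x, z)) (by fun_prop) fun _ _ => ⟨mem_univ _, hz⟩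

lemma lintegral_rpow_mul_exp_neg_mul_Ioi {a r : ℝ} (ha : 0 < a) (hr : 0 < r) :
    ∫⁻ t in Ioi (0 : ℝ), ENNReal.ofReal (t ^ (a - 1) * Real.exp (-(r * t)))
      = ENNReal.ofReal ((1 / r) ^ a * Real.Gamma a) := by
  have hval := Real.integral_rpow_mul_exp_neg_mul_Ioi ha hr
  have hpos : 0 < (1 / r) ^ a * Real.Gamma a := by
    have := Real.Gamma_pos_of_pos ha
    positivity
  rw [← hval, ofReal_integral_eq_lintegral_ofReal]
  · exact not_imp_comm.1 integral_undef (hval.trans_ne hpos.ne')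
  · filter_upwards [ae_restrict_mem measurableSet_Ioi] with t (ht : 0 < t)
    positivity

lemma lintegral_exp_neg_mul_norm_sq {t : ℝ} (ht : 0 < t) :
    ∫⁻ x : En n, ENNReal.ofReal (Real.exp (-t * ‖x‖ ^ 2))
      = ENNReal.ofReal ((Real.pi / t) ^ ((n : ℝ) / 2)) := by
  have hval := GaussianFourier.integral_rexp_neg_mul_sq_norm (V := En n) ht
  rw [finrank_euclideanSpace, Fintype.card_fin] at hval
  have hpos : 0 < (Real.pi / t) ^ ((n : ℝ) / 2) := by positivity
  rw [← hval, ofReal_integral_eq_lintegral_ofReal]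
  · exact not_imp_comm.1 integral_undef (hval.trans_ne hpos.ne')
  · exact ae_of_all _ fun x => by positivity

lemma Pker_eq_lintegral_exp (hs : 0 < s) (hz : 0 < z) (x : En n) :
    ENNReal.ofReal (Pker n s z x)
      = ENNReal.ofReal (pns n s * z ^ (2 * s) / Real.Gamma (n / 2 + s)) *
        ∫⁻ t in Ioi (0 : ℝ), ENNReal.ofReal
          (t ^ (n / 2 + s - 1) * Real.exp (-((‖x‖ ^ 2 + z ^ 2) * t))) := by
  have hm : 0 < (n : ℝ) / 2 + s := by positivity
  have hp := pns_pos (n := n) hs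
  have hΓ := Real.Gamma_pos_of_pos hm
  have hρ : 0 < ‖x‖ ^ 2 + z ^ 2 := by positivity
  rw [lintegral_rpow_mul_exp_neg_mul_Ioi hm hρ, ← ENNReal.ofReal_mul (by positivity), Pker,
    show -((n : ℝ) + 2 * s) / 2 = -(n / 2 + s) by ring, one_div, Real.inv_rpow hρ.le,
    Real.rpow_neg hρ.le]
  congr 1
  field_simp

lemma lintegral_rpow_mul_exp_neg_norm_sq_add {t : ℝ} (ht : 0 < t) :
    ∫⁻ x : En n, ENNReal.ofReal (t ^ (n / 2 + s - 1) * Real.exp (-((‖x‖ ^ 2 + z ^ 2) * t)))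
      = ENNReal.ofReal (Real.pi ^ ((n : ℝ) / 2)) *
        ENNReal.ofReal (t ^ (s - 1) * Real.exp (-(z ^ 2 * t))) := by
  have hsplit : ∀ x : En n,
      ENNReal.ofReal (t ^ (n / 2 + s - 1) * Real.exp (-((‖x‖ ^ 2 + z ^ 2) * t)))
        = ENNReal.ofReal (t ^ (n / 2 + s - 1) * Real.exp (-(z ^ 2 * t))) *
          ENNReal.ofReal (Real.exp (-t * ‖x‖ ^ 2)) := fun x => by
    rw [← ENNReal.ofReal_mul (by positivity), mul_assoc, ← Real.exp_add]
    congr 3; ring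
  have hpow : t ^ (n / 2 + s - 1) = t ^ (s - 1) * t ^ ((n : ℝ) / 2) := by
    rw [← Real.rpow_add ht]; congr 1; ring
  have hne : t ^ ((n : ℝ) / 2) ≠ 0 := by positivity
  simp_rw [hsplit]
  rw [lintegral_const_mul' _ _ ENNReal.ofReal_ne_top, lintegral_exp_neg_mul_norm_sq ht,
    ← ENNReal.ofReal_mul (by positivity), ← ENNReal.ofReal_mul (by positivity),
    Real.div_rpow Real.pi_pos.le ht.le, hpow]
  congr 1
  field_simp

/- Subordination: the kernel is a Gamma mixture of Gaussians, so Tonelli reduces its mass to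
two classical integrals. -/
lemma lintegral_Pker (hs : 0 < s) (hz : 0 < z) :
    ∫⁻ x, ENNReal.ofReal (Pker n s z x) = 1 := by
  have hp := pns_pos (n := n) hs
  have hΓ : 0 < Real.Gamma ((n : ℝ) / 2 + s) := Real.Gamma_pos_of_pos (by positivity)
  have hΓs := Real.Gamma_pos_of_pos hs
  simp_rw [Pker_eq_lintegral_exp hs hz]
  rw [lintegral_const_mul' _ _ ENNReal.ofReal_ne_top,
    lintegral_lintegral_swap (Measurable.aemeasurable (by fun_prop)),
    setLIntegral_congr_fun measurableSet_Ioi fun t ht =>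
      lintegral_rpow_mul_exp_neg_norm_sq_add ht,
    lintegral_const_mul' _ _ ENNReal.ofReal_ne_top,
    lintegral_rpow_mul_exp_neg_mul_Ioi hs (by positivity), ← ENNReal.ofReal_mul (by positivity),
    ← ENNReal.ofReal_mul (by positivity), ← ENNReal.ofReal_one, pns, one_div,
    Real.inv_rpow (by positivity), ← Real.rpow_natCast z 2, ← Real.rpow_mul hz.le]
  congr 1
  have hne : z ^ (2 * s) ≠ 0 := by positivity
  push_cast
  field_simp

lemma integrable_Pker (hs : 0 < s) (hz : 0 < z) : Integrable (Pker n s z) := by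
  refine ⟨(continuous_Pker hz).aestronglyMeasurable, ?_⟩
  rw [hasFiniteIntegral_iff_ofReal (ae_of_all _ (Pker_nonneg hs hz)), lintegral_Pker hs hz]
  exact ENNReal.one_lt_top

lemma integral_Pker (hs : 0 < s) (hz : 0 < z) : ∫ x, Pker n s z x = 1 := by
  rw [integral_eq_lintegral_of_nonneg_ae (ae_of_all _ (Pker_nonneg hs hz))
    (continuous_Pker hz).aestronglyMeasurable, lintegral_Pker hs hz, ENNReal.toReal_one]

lemma Pker_neg (x : En n) : Pker n s z (-x) = Pker n s z x := by simp [Pker]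

lemma Pker_smul (hz : 0 < z) (w : En n) :
    Pker n s z (z • w) = (z ^ n)⁻¹ * Pker n s 1 w := by
  have hρ : ‖z • w‖ ^ 2 + z ^ 2 = z ^ (2 : ℝ) * (‖w‖ ^ 2 + 1) := by
    rw [norm_smul, Real.norm_of_nonneg hz.le, Real.rpow_two]; ring
  rw [Pker, Pker, hρ, Real.mul_rpow (by positivity) (by positivity), ← Real.rpow_mul hz.le,
    ← Real.rpow_natCast z n, ← Real.rpow_neg hz.le, Real.one_rpow, one_pow]
  have hpow : z ^ (-(n : ℝ)) = z ^ (2 * s) * z ^ (2 * (-((n : ℝ) + 2 * s) / 2)) := by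
    rw [← Real.rpow_add hz]; congr 1; ring
  rw [hpow]; ring

lemma integral_Pker_sub_smul {G : Type*} [NormedAddCommGroup G] [NormedSpace ℝ G] (hz : 0 < z)
    (x : En n) (g : En n → G) :
    ∫ y, Pker n s z (x - y) • g y = ∫ w, Pker n s 1 w • g (x - z • w) := by
  rw [← integral_sub_left_eq_self (fun y => Pker n s z (x - y) • g y) volume x]
  have hscale := Measure.integral_comp_inv_smul_of_nonneg (volume : Measure (En n))
    (fun w => Pker n s 1 w • g (x - z • w)) hz.le
  rw [finrank_euclideanSpace, Fintype.card_fin] at hscale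
  rw [eq_comm, ← eq_inv_smul_iff₀ (pow_ne_zero n hz.ne'), ← integral_smul] at hscale
  rw [hscale]
  congr 1; ext y
  have hy := Pker_smul (s := s) hz (z⁻¹ • y)
  rw [smul_inv_smul₀ hz.ne'] at hy
  rw [sub_sub_cancel, hy, smul_inv_smul₀ hz.ne', mul_smul]

lemma integrable_Pker_mul_norm_rpow {a : ℝ} (ha : 0 ≤ a) (has : a < 2 * s) :
    Integrable (fun w : En n => Pker n s 1 w * ‖w‖ ^ a) := by
  have hs : 0 < s := by linarith
  have hint := (integrable_rpow_neg_one_add_norm_sq (E := En n) (μ := volume)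
    (r := n + 2 * s - a) (by rw [finrank_euclideanSpace, Fintype.card_fin]; linarith)).const_mul
      (pns n s)
  refine hint.mono' ((continuous_Pker one_pos).mul
    (continuous_norm.rpow_const fun _ => Or.inr ha)).aestronglyMeasurable (ae_of_all _ fun w => ?_)
  have hρ : 0 < 1 + ‖w‖ ^ 2 := by positivity
  have hw : ‖w‖ ^ a ≤ (1 + ‖w‖ ^ 2) ^ (a / 2) := by
    calc ‖w‖ ^ a = (‖w‖ ^ (2 : ℝ)) ^ (a / 2) := by
          rw [← Real.rpow_mul (norm_nonneg _)]; congr 1; ring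
      _ ≤ (1 + ‖w‖ ^ 2) ^ (a / 2) := by
          rw [Real.rpow_two]; gcongr; linarith
  have hp := pns_pos (n := n) hs
  rw [Real.norm_of_nonneg (mul_nonneg (Pker_nonneg hs one_pos _) (by positivity)), Pker,
    Real.one_rpow, one_pow, add_comm _ (1 : ℝ), mul_one, mul_assoc]
  gcongr
  calc _ ≤ (1 + ‖w‖ ^ 2) ^ (-((n : ℝ) + 2 * s) / 2) * (1 + ‖w‖ ^ 2) ^ (a / 2) := by gcongr
    _ = _ := by rw [← Real.rpow_add hρ]; congr 1; ring

end Mass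

section Convolution

variable {n : ℕ} {s z : ℝ} {f : En n → ℝ}

lemma Pconv_eq_integral_sub_smul (hz : 0 < z) (f : En n → ℝ) (x : En n) :
    Pconv n s z f x = ∫ w, Pker n s 1 w * f (x - z • w) :=
  integral_Pker_sub_smul hz x f

lemma integrable_Pker_mul_of_continuous (hz : 0 < z) (hf : Continuous f)
    (hfc : HasCompactSupport f) (x : En n) : Integrable fun y => Pker n s z (x - y) * f y :=
  (((continuous_Pker hz).comp (by fun_prop)).mul hf).integrable_of_hasCompactSupport
    hfc.mul_left

lemma norm_Pconv_le (hs : 0 < s) (hz : 0 < z) {M : ℝ} (hM : ∀ y, ‖f y‖ ≤ M) (x : En n) :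
    ‖Pconv n s z f x‖ ≤ M := by
  have hbound : ∀ y, ‖Pker n s z (x - y) * f y‖ ≤ Pker n s z (x - y) * M := fun y => by
    rw [norm_mul, Real.norm_of_nonneg (Pker_nonneg hs hz _)]
    exact mul_le_mul_of_nonneg_left (hM y) (Pker_nonneg hs hz _)
  calc ‖Pconv n s z f x‖ ≤ ∫ y, Pker n s z (x - y) * M :=
        norm_integral_le_of_norm_le (((integrable_Pker hs hz).comp_sub_left x).mul_const M)
          (ae_of_all _ hbound)
    _ = M := by
        rw [integral_mul_const, integral_sub_left_eq_self (Pker n s z) volume x,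
          integral_Pker hs hz, one_mul]

lemma lintegral_enorm_Pconv_le (hs : 0 < s) (hz : 0 < z) (hf : Measurable f) :
    ∫⁻ x, ‖Pconv n s z f x‖ₑ ≤ ∫⁻ y, ‖f y‖ₑ := by
  have hP : Measurable (Pker n s z) := (continuous_Pker hz).measurable
  calc ∫⁻ x, ‖Pconv n s z f x‖ₑ ≤ ∫⁻ x, ∫⁻ y, ENNReal.ofReal (Pker n s z (x - y)) * ‖f y‖ₑ := by
        refine lintegral_mono fun x => (enorm_integral_le_lintegral_enorm _).trans_eq ?_
        simp_rw [enorm_mul, Real.enorm_of_nonneg (Pker_nonneg hs hz _)]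
    _ = ∫⁻ y, ∫⁻ x, ENNReal.ofReal (Pker n s z (x - y)) * ‖f y‖ₑ :=
        lintegral_lintegral_swap (Measurable.aemeasurable (by fun_prop))
    _ = ∫⁻ y, ‖f y‖ₑ := by
        refine lintegral_congr fun y => ?_
        rw [lintegral_mul_const' _ _ enorm_ne_top,
          lintegral_sub_right_eq_self (fun x => ENNReal.ofReal (Pker n s z x)) y,
          lintegral_Pker hs hz, one_mul]

lemma measurable_Pconv (hz : 0 < z) (hf : Measurable f) : Measurable (Pconv n s z f) := by
  have hP : Measurable (Pker n s z) := (continuous_Pker hz).measurable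
  have hint : Measurable fun p : En n × En n => Pker n s z (p.1 - p.2) * f p.2 := by fun_prop
  exact hint.stronglyMeasurable.integral_prod_right.measurable

/- Sup norm against the integrable part of the weight, `L¹` norm against the constant part. -/
lemma lintegral_mul_enorm_Pconv_le (hs : 0 < s) (hz : 0 < z) (hf : Measurable f) {M : ℝ}
    (hM : ∀ y, ‖f y‖ ≤ M) (c : ℝ≥0∞) (e : En n → ℝ≥0∞) :
    ∫⁻ x, (c + e x) * ‖Pconv n s z f x‖ₑ
      ≤ c * (∫⁻ y, ‖f y‖ₑ) + ENNReal.ofReal M * ∫⁻ x, e x := by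
  have hPf := (measurable_Pconv (s := s) hz hf).enorm
  simp_rw [add_mul]
  rw [lintegral_add_left (hPf.const_mul c), lintegral_const_mul c hPf]
  gcongr ?_ + ?_
  · exact mul_le_mul_right (lintegral_enorm_Pconv_le hs hz hf) c
  · rw [← lintegral_const_mul' _ _ ENNReal.ofReal_ne_top]
    refine lintegral_mono fun x => ?_
    rw [mul_comm, ← ofReal_norm]
    exact mul_le_mul_left (ENNReal.ofReal_le_ofReal (norm_Pconv_le hs hz hM x)) _

end Convolution

/-! ### Differentiating the extension -/

section Differentiation

variable {n : ℕ} {s z : ℝ} {φ : En n → ℝ}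

/-- The derivative of `(x, z) ↦ φ (x - z • w)`, the integrand of the extension after the change
of variables which puts all the dependence on `(x, z)` into `φ`. -/
def dilationDeriv (φ : En n → ℝ) (p : En n × ℝ) (w : En n) : En n × ℝ →L[ℝ] ℝ :=
  (fderiv ℝ φ (p.1 - p.2 • w)).comp
    (ContinuousLinearMap.fst ℝ (En n) ℝ - (ContinuousLinearMap.snd ℝ (En n) ℝ).smulRight w)

lemma dilationDeriv_apply (p q : En n × ℝ) (w : En n) :
    dilationDeriv φ p w q = fderiv ℝ φ (p.1 - p.2 • w) (q.1 - q.2 • w) := rfl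

lemma hasFDerivAt_comp_sub_smul (hφ : Differentiable ℝ φ) (p : En n × ℝ) (w : En n) :
    HasFDerivAt (fun q : En n × ℝ => φ (q.1 - q.2 • w)) (dilationDeriv φ p w) p :=
  (hφ _).hasFDerivAt.comp p (hasFDerivAt_fst.sub (hasFDerivAt_snd.smul_const w))

lemma continuous_dilationDeriv (hφ : ContDiff ℝ 1 φ) (p : En n × ℝ) :
    Continuous (dilationDeriv φ p) := by
  have := hφ.continuous_fderiv one_ne_zero
  unfold dilationDeriv
  fun_prop

/- The derivative of `φ` confines `x - z • w`, hence `w`, to a ball. -/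
lemma exists_norm_dilationDeriv_le (hz : 0 < z) (hφ : ContDiff ℝ 1 φ) (hφc : HasCompactSupport φ)
    (x : En n) : ∃ C, ∀ p ∈ Metric.ball (x, z) (z / 2), ∀ w, ‖dilationDeriv φ p w‖ ≤ C := by
  obtain ⟨M, hM⟩ := (hφc.fderiv ℝ).exists_bound_of_continuous (hφ.continuous_fderiv one_ne_zero)
  obtain ⟨r, hr⟩ := (hφc.fderiv ℝ).isCompact.isBounded.subset_closedBall 0
  have hM0 : 0 ≤ M := (norm_nonneg _).trans (hM 0)
  set W := (|r| + ‖x‖ + z / 2) / (z / 2)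
  have hW : 0 ≤ W := by positivity
  refine ⟨M * (1 + W), fun p hp w => ?_⟩
  by_cases hw : p.1 - p.2 • w ∈ tsupport (fderiv ℝ φ)
  swap
  · rw [dilationDeriv, image_eq_zero_of_notMem_tsupport hw, ContinuousLinearMap.zero_comp,
      norm_zero]
    positivity
  rw [Metric.mem_ball, Prod.dist_eq, max_lt_iff, dist_eq_norm, Real.dist_eq, abs_lt] at hp
  have hwW : ‖w‖ ≤ W := by
    rw [le_div_iff₀' (by positivity)]
    have hp2 : z / 2 ≤ p.2 := by linarith [hp.2.1]
    have hsupp : ‖p.1 - p.2 • w‖ ≤ r := by simpa using hr hw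
    calc z / 2 * ‖w‖ ≤ ‖p.2 • w‖ := by
          rw [norm_smul, Real.norm_of_nonneg (by linarith)]; gcongr
      _ = ‖x + (p.1 - x) - (p.1 - p.2 • w)‖ := by congr 1; abel
      _ ≤ ‖x‖ + ‖p.1 - x‖ + ‖p.1 - p.2 • w‖ :=
          (norm_sub_le _ _).trans (by gcongr; exact norm_add_le _ _)
      _ ≤ |r| + ‖x‖ + z / 2 := by linarith [hp.1, le_abs_self r]
  calc ‖dilationDeriv φ p w‖
      ≤ ‖fderiv ℝ φ (p.1 - p.2 • w)‖ * (‖ContinuousLinearMap.fst ℝ (En n) ℝ‖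
          + ‖(ContinuousLinearMap.snd ℝ (En n) ℝ).smulRight w‖) :=
        (ContinuousLinearMap.opNorm_comp_le _ _).trans (by gcongr; exact norm_sub_le _ _)
    _ ≤ M * (1 + 1 * W) := by
        rw [ContinuousLinearMap.norm_smulRight_apply]
        gcongr
        exacts [hM _, ContinuousLinearMap.norm_fst_le .., ContinuousLinearMap.norm_snd_le ..]
    _ = M * (1 + W) := by rw [one_mul]

lemma integrable_Pker_smul_dilationDeriv (hs : 0 < s) (hz : 0 < z) (hφ : ContDiff ℝ 1 φ)
    (hφc : HasCompactSupport φ) (x : En n) :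
    Integrable fun w => Pker n s 1 w • dilationDeriv φ (x, z) w := by
  obtain ⟨C, hC⟩ := exists_norm_dilationDeriv_le hz hφ hφc x
  exact (integrable_Pker hs one_pos).smul_bdd C
    (continuous_dilationDeriv hφ _).aestronglyMeasurable
    (ae_of_all _ (hC _ (Metric.mem_ball_self (by positivity))))

lemma hasFDerivAt_Pconv (hs : 0 < s) (hz : 0 < z) (hφ : ContDiff ℝ 1 φ)
    (hφc : HasCompactSupport φ) (x : En n) :
    HasFDerivAt (fun p : En n × ℝ => Pconv n s p.2 φ p.1)
      (∫ w, Pker n s 1 w • dilationDeriv φ (x, z) w) (x, z) := by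
  obtain ⟨C, hC⟩ := exists_norm_dilationDeriv_le hz hφ hφc x
  have hball : Metric.ball (x, z) (z / 2) ∈ 𝓝 (x, z) := Metric.ball_mem_nhds _ (by positivity)
  have hP := continuous_Pker (n := n) (s := s) one_pos
  have hφm := hφ.continuous
  have hderiv : HasFDerivAt (fun p : En n × ℝ => ∫ w, Pker n s 1 w * φ (p.1 - p.2 • w))
      (∫ w, Pker n s 1 w • dilationDeriv φ (x, z) w) (x, z) := by
    refine hasFDerivAt_integral_of_dominated_of_fderiv_le hball
      (F' := fun p w => Pker n s 1 w • dilationDeriv φ p w)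
      (Eventually.of_forall fun p => Continuous.aestronglyMeasurable (by fun_prop)) ?_
      (hP.smul (continuous_dilationDeriv hφ _)).aestronglyMeasurable
      (ae_of_all _ fun w p hp => ?_) ((integrable_Pker hs one_pos).mul_const C)
      (ae_of_all _ fun w p _ =>
        (hasFDerivAt_comp_sub_smul (hφ.differentiable one_ne_zero) p w).const_mul _)
    · obtain ⟨M, hM⟩ := hφc.exists_bound_of_continuous hφm
      exact (integrable_Pker hs one_pos).mul_bdd (c := M)
        (Continuous.aestronglyMeasurable (by fun_prop)) (ae_of_all _ fun w => hM _)
    · rw [norm_smul, Real.norm_of_nonneg (Pker_nonneg hs one_pos _)]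
      exact mul_le_mul_of_nonneg_left (hC p hp w) (Pker_nonneg hs one_pos _)
  refine hderiv.congr_of_eventuallyEq ?_
  filter_upwards [continuousAt_snd.eventually (lt_mem_nhds hz)] with p hp
  exact Pconv_eq_integral_sub_smul hp φ p.1

lemma fderiv_Pconv_apply (hs : 0 < s) (hz : 0 < z) (hφ : ContDiff ℝ 1 φ)
    (hφc : HasCompactSupport φ) (x v : En n) (t : ℝ) :
    fderiv ℝ (fun p : En n × ℝ => Pconv n s p.2 φ p.1) (x, z) (v, t)
      = ∫ y, Pker n s z (x - y) * fderiv ℝ φ y (v - (t / z) • (x - y)) := by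
  rw [(hasFDerivAt_Pconv hs hz hφ hφc x).fderiv, ContinuousLinearMap.integral_apply
    (integrable_Pker_smul_dilationDeriv hs hz hφ hφc x)]
  refine Eq.trans ?_ (integral_Pker_sub_smul hz x _).symm
  congr 1; ext w
  simp [dilationDeriv_apply, smul_smul, div_mul_cancel₀ t hz.ne']

/-- The radial derivative `y · ∇φ(y)`. -/
def eulerDeriv (φ : En n → ℝ) (y : En n) : ℝ := fderiv ℝ φ y y

lemma continuous_eulerDeriv (hφ : ContDiff ℝ 1 φ) : Continuous (eulerDeriv φ) :=
  (hφ.continuous_fderiv one_ne_zero).clm_apply continuous_id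

lemma hasCompactSupport_eulerDeriv (hφc : HasCompactSupport φ) :
    HasCompactSupport (eulerDeriv φ) :=
  (hφc.fderiv ℝ).mono fun y hy h0 => hy (by rw [eulerDeriv, h0, zero_apply])

/- The extension is homogeneous: it commutes with the Euler field `x · ∇_x + z ∂_z`. -/
lemma fderiv_Pconv_apply_self (hs : 0 < s) (hz : 0 < z) (hφ : ContDiff ℝ 1 φ)
    (hφc : HasCompactSupport φ) (x : En n) :
    fderiv ℝ (fun p : En n × ℝ => Pconv n s p.2 φ p.1) (x, z) (x, z)
      = Pconv n s z (eulerDeriv φ) x := by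
  rw [fderiv_Pconv_apply hs hz hφ hφc, Pconv]
  simp [div_self hz.ne', eulerDeriv]

lemma pd_Pconv (hs : 0 < s) (hz : 0 < z) (hφ : ContDiff ℝ 1 φ) (hφc : HasCompactSupport φ)
    (i : Fin n) : pd i (Pconv n s z φ) = Pconv n s z (pd i φ) := by
  ext x
  refine (fderiv_slice_apply (W := fun x z => Pconv n s z φ x)
    (hasFDerivAt_Pconv hs hz hφ hφc x).differentiableAt _).trans ?_
  rw [fderiv_Pconv_apply hs hz hφ hφc, Pconv]
  simp only [zero_div, zero_smul, sub_zero, pd]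

lemma mul_deriv_Pconv (hs : 0 < s) (hz : 0 < z) (hφ : ContDiff ℝ 1 φ)
    (hφc : HasCompactSupport φ) (x : En n) :
    z * deriv (fun t => Pconv n s t φ x) z
      = -∫ y, Pker n s z (x - y) * fderiv ℝ φ y (x - y) := by
  rw [deriv_slice (W := fun x z => Pconv n s z φ x)
    (hasFDerivAt_Pconv hs hz hφ hφc x).differentiableAt, fderiv_Pconv_apply hs hz hφ hφc,
    ← integral_const_mul, ← integral_neg]
  congr 1; ext y
  simp only [zero_sub, map_neg, map_smul, smul_eq_mul]
  field_simp

lemma contDiffOnSlab_Pconv {k : ℕ∞} (hφ : ContDiff ℝ k φ) (hφc : HasCompactSupport φ) :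
    ContDiffOnSlab k (Ioi 0) fun x z => Pconv n s z φ x := by
  have hU : IsOpen ((univ : Set (En n)) ×ˢ Ioi (0 : ℝ)) := isOpen_univ.prod isOpen_Ioi
  have hconv := contDiffOn_convolution_right_with_param (μ := (volume : Measure (En n)))
    (f := fun _ : En n => (1 : ℝ)) (n := k) (ContinuousLinearMap.mul ℝ ℝ)
    (g := fun (p : En n × ℝ) (y : En n) => Pker n s p.2 (p.1 + y) * φ (-y))
    hU hφc.isCompact.neg ?_ (locallyIntegrable_const _) ?_
  · refine (hconv.comp (f := fun p : En n × ℝ => (p, (0 : En n))) (by fun_prop)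
      fun p hp => ⟨hp, mem_univ _⟩).congr fun p _ => ?_
    simp only [Function.comp, convolution, Pconv, ContinuousLinearMap.mul_apply', one_mul,
      zero_add, neg_neg, sub_eq_add_neg]
  · intro p y _ hy
    rw [image_eq_zero_of_notMem_tsupport (f := φ) fun h => hy (by simpa using h), mul_zero]
  · exact (contDiffOn_Pker.comp (f := fun q : (En n × ℝ) × En n => (q.1.1 + q.2, q.1.2))
      (by fun_prop) fun q hq => ⟨mem_univ _, hq.1.2⟩).mul (by fun_prop)

end Differentiation

/-! ### Differentiation under the integral sign -/

namespace ContDiffOnSlab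

variable {n : ℕ} {I : Set ℝ} {W : En n → ℝ → ℝ} {K : Set (En n)} {z : ℝ}

lemma continuous_left {k : WithTop ℕ∞} (hW : ContDiffOnSlab k I W) (hz : z ∈ I) :
    Continuous fun x => W x z :=
  continuousOn_univ.1 <| hW.continuousOn.comp (f := fun x : En n => (x, z)) (by fun_prop)
    fun _ _ => ⟨mem_univ _, hz⟩

lemma hasDerivAt_integral (hW : ContDiffOnSlab 1 I W) (hI : IsOpen I) (hK : IsCompact K)
    (hWK : ∀ t, ∀ x ∉ K, W x t = 0) (hz : z ∈ I) :
    HasDerivAt (fun t => ∫ x, W x t) (∫ x, _root_.deriv (W x) z) z := by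
  obtain ⟨δ, hδ, hball⟩ := Metric.nhds_basis_closedBall.mem_iff.1 (hI.mem_nhds hz)
  have hW' : ContDiffOnSlab 0 I fun x t => _root_.deriv (W x) t :=
    hW.deriv hI (by norm_num)
  obtain ⟨C, hC⟩ := (hK.prod (isCompact_closedBall z δ)).exists_bound_of_continuousOn
    (hW'.continuousOn.mono (prod_mono (subset_univ _) hball))
  have hW'K : ∀ t, ∀ x ∉ K, _root_.deriv (W x) t = 0 := fun t x hx => by
    rw [show W x = fun _ => 0 from funext fun t => hWK t x hx, deriv_const]
  refine (hasDerivAt_integral_of_dominated_loc_of_deriv_le (bound := K.indicator fun _ => C)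
    (Metric.closedBall_mem_nhds z hδ) ?_ ?_ (hW'.continuous_left hz).aestronglyMeasurable
    (ae_of_all _ fun x t ht => ?_) ?_ (ae_of_all _ fun x t ht =>
      hW.hasDerivAt one_ne_zero hI x (hball ht))).2
  · filter_upwards [hI.mem_nhds hz] with t ht
    exact (hW.continuous_left ht).aestronglyMeasurable
  · exact (hW.continuous_left hz).integrable_of_hasCompactSupport
      (HasCompactSupport.intro hK (hWK z))
  · by_cases hx : x ∈ K
    · rw [indicator_of_mem hx]
      exact hC (x, t) ⟨hx, ht⟩
    · rw [hW'K t x hx, indicator_of_notMem hx, norm_zero]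
  · exact (integrable_indicator_iff hK.measurableSet).2
      (integrableOn_const hK.measure_lt_top.ne)

end ContDiffOnSlab

/-! ### The extension solves the degenerate equation -/

section Equation

variable {n : ℕ} {s z : ℝ} {φ : En n → ℝ}

lemma Pker_sub_eq (x y : En n) :
    Pker n s z (x - y)
      = pns n s * z ^ (2 * s) * (‖y - x‖ ^ 2 + z ^ 2) ^ (-((n : ℝ) + 2 * s) / 2) := by
  rw [Pker, norm_sub_rev]

lemma lapX_Pker_sub (hz : 0 < z) (x y : En n) :
    lapX (fun y => Pker n s z (x - y)) y
      = pns n s * z ^ (2 * s) * (n + 2 * s)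
        * (((n + 2 * s + 2) * ‖y - x‖ ^ 2 - n * (‖y - x‖ ^ 2 + z ^ 2))
          * (‖y - x‖ ^ 2 + z ^ 2) ^ (-((n : ℝ) + 2 * s) / 2 - 2)) := by
  set m := -((n : ℝ) + 2 * s) / 2 with hm
  set c := pns n s * z ^ (2 * s)
  have hρ : ∀ y : En n, 0 < ‖y - x‖ ^ 2 + z ^ 2 := fun y => by positivity
  have hlap := lapX_radial (h := fun ρ => c * ρ ^ m) (h' := fun ρ => c * (m * ρ ^ (m - 1)))
    (h'' := fun ρ => c * (m * ((m - 1) * ρ ^ (m - 1 - 1)))) (a := x) (c := z ^ 2)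
    (fun y => (Real.hasDerivAt_rpow_const (.inl (hρ y).ne')).const_mul c)
    (fun y => ((Real.hasDerivAt_rpow_const (.inl (hρ y).ne')).const_mul m).const_mul c) y
  have hpow : (‖y - x‖ ^ 2 + z ^ 2) ^ (m - 1)
      = (‖y - x‖ ^ 2 + z ^ 2) ^ (m - 2) * (‖y - x‖ ^ 2 + z ^ 2) := by
    rw [← Real.rpow_add_one (hρ y).ne']; ring_nf
  simp_rw [Pker_sub_eq]
  refine hlap.trans ?_
  rw [hpow, show m - 1 - 1 = m - 2 by ring, hm]
  ring

lemma rpow_mul_deriv_Pker (hz : 0 < z) (x : En n) :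
    z ^ (1 - 2 * s) * deriv (fun t => Pker n s t x) z
      = pns n s * (2 * s * (‖x‖ ^ 2 + z ^ 2) ^ (-((n : ℝ) + 2 * s) / 2)
        - (n + 2 * s) * z ^ 2 * (‖x‖ ^ 2 + z ^ 2) ^ (-((n : ℝ) + 2 * s) / 2 - 1)) := by
  set m := -((n : ℝ) + 2 * s) / 2 with hm
  have hρ : HasDerivAt (fun t => (‖x‖ ^ 2 + t ^ 2) ^ m)
      (2 * z * m * (‖x‖ ^ 2 + z ^ 2) ^ (m - 1)) z := by
    simpa using ((hasDerivAt_pow 2 z).const_add (‖x‖ ^ 2)).rpow_const (.inl (by positivity))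
  have hderiv : HasDerivAt (fun t => Pker n s t x) _ z :=
    ((Real.hasDerivAt_rpow_const (p := 2 * s) (.inl hz.ne')).const_mul (pns n s)).mul hρ
  have hpow : z ^ (1 - 2 * s) * z ^ (2 * s - 1) = 1 := by
    rw [← Real.rpow_add hz, sub_add_sub_cancel, sub_self, Real.rpow_zero]
  have hpow' : z ^ (2 * s) = z ^ (2 * s - 1) * z := by
    rw [← Real.rpow_add_one hz.ne', sub_add_cancel]
  rw [hderiv.deriv, hpow', hm]
  linear_combination (pns n s * (2 * s * (‖x‖ ^ 2 + z ^ 2) ^ m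
        - (n + 2 * s) * z ^ 2 * (‖x‖ ^ 2 + z ^ 2) ^ (m - 1))) * hpow

lemma deriv_rpow_mul_deriv_Pker (hz : 0 < z) (x : En n) :
    deriv (fun t => t ^ (1 - 2 * s) * deriv (fun t => Pker n s t x) t) z
      = -(pns n s * z * (n + 2 * s)
        * (((n + 2 * s + 2) * ‖x‖ ^ 2 - n * (‖x‖ ^ 2 + z ^ 2))
          * (‖x‖ ^ 2 + z ^ 2) ^ (-((n : ℝ) + 2 * s) / 2 - 2))) := by
  set m := -((n : ℝ) + 2 * s) / 2 with hm
  have hρ0 : 0 < ‖x‖ ^ 2 + z ^ 2 := by positivity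
  have hρ : ∀ p : ℝ, HasDerivAt (fun t => (‖x‖ ^ 2 + t ^ 2) ^ p)
      (2 * z * p * (‖x‖ ^ 2 + z ^ 2) ^ (p - 1)) z := fun p => by
    simpa using ((hasDerivAt_pow 2 z).const_add (‖x‖ ^ 2)).rpow_const (.inl hρ0.ne')
  have hderiv : HasDerivAt (fun t => pns n s * (2 * s * (‖x‖ ^ 2 + t ^ 2) ^ m
      - (n + 2 * s) * t ^ 2 * (‖x‖ ^ 2 + t ^ 2) ^ (m - 1))) _ z :=
    (((hρ m).const_mul (2 * s)).sub
      (((hasDerivAt_pow 2 z).const_mul (n + 2 * s)).mul (hρ (m - 1)))).const_mul (pns n s)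
  have hpow : (‖x‖ ^ 2 + z ^ 2) ^ (m - 1)
      = (‖x‖ ^ 2 + z ^ 2) ^ (m - 2) * (‖x‖ ^ 2 + z ^ 2) := by
    rw [← Real.rpow_add_one hρ0.ne']; ring_nf
  rw [(hderiv.congr_of_eventuallyEq (eventually_of_mem (Ioi_mem_nhds hz)
    fun t ht => rpow_mul_deriv_Pker ht x)).deriv, hpow, show m - 1 - 1 = m - 2 by ring, hm]
  push_cast
  ring

lemma LsOp_Pker_sub (hz : 0 < z) (x y : En n) :
    LsOp s (fun y t => Pker n s t (x - y)) y z = 0 := by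
  have hpow : z ^ (1 - 2 * s) * z ^ (2 * s) = z := by
    rw [← Real.rpow_add hz, sub_add_cancel, Real.rpow_one]
  rw [LsOp, lapX_Pker_sub hz, deriv_rpow_mul_deriv_Pker hz, norm_sub_rev x y]
  linear_combination (pns n s * (n + 2 * s)
        * (((n + 2 * s + 2) * ‖y - x‖ ^ 2 - n * (‖y - x‖ ^ 2 + z ^ 2))
          * (‖y - x‖ ^ 2 + z ^ 2) ^ (-((n : ℝ) + 2 * s) / 2 - 2))) * hpow

lemma contDiffOnSlab_Pker_sub (x : En n) {k : WithTop ℕ∞} :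
    ContDiffOnSlab k (Ioi 0) fun y t => Pker n s t (x - y) :=
  contDiffOn_Pker.comp (f := fun p : En n × ℝ => (x - p.1, p.2)) (by fun_prop)
    fun _ hp => ⟨mem_univ _, hp.2⟩

lemma lapX_Pconv (hs : 0 < s) (hz : 0 < z) (hφ : ContDiff ℝ 2 φ) (hφc : HasCompactSupport φ)
    (x : En n) :
    lapX (Pconv n s z φ) x = ∫ y, lapX (fun y => Pker n s z (x - y)) y * φ y := by
  have hpd : ∀ i, ContDiff ℝ 1 (pd i φ) := contDiff_pd hφ (by norm_num)
  have hterm : ∀ i, pd i (pd i (Pconv n s z φ)) x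
      = ∫ y, Pker n s z (x - y) * pd i (pd i φ) y := fun i => by
    rw [pd_Pconv hs hz (hφ.of_le one_le_two) hφc,
      pd_Pconv hs hz (hpd i) (hasCompactSupport_pd hφc i), Pconv]
  have hint : ∀ i, Integrable fun y => Pker n s z (x - y) * pd i (pd i φ) y := fun i =>
    integrable_Pker_mul_of_continuous hz (contDiff_pd (hpd i) (m := 0) (by norm_num) i).continuous
      (hasCompactSupport_pd (hasCompactSupport_pd hφc i) i) x
  calc lapX (Pconv n s z φ) x = ∫ y, Pker n s z (x - y) * lapX φ y := by
        simp_rw [lapX, hterm, ← integral_finsetSum _ fun i _ => hint i, Finset.mul_sum]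
    _ = ∫ y, φ y * lapX (fun y => Pker n s z (x - y)) y := by
        rw [integral_mul_lapX hφ hφc ((contDiffOnSlab_Pker_sub x).contDiff_left isOpen_Ioi hz)]
        simp_rw [mul_comm]
    _ = ∫ y, lapX (fun y => Pker n s z (x - y)) y * φ y := by simp_rw [mul_comm]

lemma deriv_rpow_mul_deriv_Pconv (hz : 0 < z) (hφ : ContDiff ℝ 2 φ) (hφc : HasCompactSupport φ)
    (x : En n) :
    deriv (fun t => t ^ (1 - 2 * s) * deriv (fun t => Pconv n s t φ x) t) z
      = ∫ y, deriv (fun t => t ^ (1 - 2 * s) * deriv (fun t => Pker n s t (x - y)) t) z * φ y := by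
  have hP : ContDiffOnSlab 2 (Ioi 0) fun y t => Pker n s t (x - y) := contDiffOnSlab_Pker_sub x
  have hφ' : ContDiffOnSlab 2 (Ioi 0) fun y _ => φ y := (hφ.comp contDiff_fst).contDiffOn
  have hflux : ContDiffOnSlab 1 (Ioi 0)
      fun y t => t ^ (1 - 2 * s) * deriv (fun t => Pker n s t (x - y)) t :=
    (hP.deriv isOpen_Ioi (by norm_num)).rpow_mul subset_rfl _
  have hzero : ∀ y ∉ tsupport φ, φ y = 0 := fun y => image_eq_zero_of_notMem_tsupport
  have hfirst : ∀ t ∈ Ioi (0 : ℝ), t ^ (1 - 2 * s) * deriv (fun t => Pconv n s t φ x) t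
      = ∫ y, t ^ (1 - 2 * s) * deriv (fun t => Pker n s t (x - y)) t * φ y := fun t ht => by
    have h := ContDiffOnSlab.hasDerivAt_integral (W := fun y t => Pker n s t (x - y) * φ y)
      ((ContDiffOn.mul hP hφ').of_le one_le_two) isOpen_Ioi hφc
      (fun t y hy => by rw [hzero y hy, mul_zero]) ht
    simp only [deriv_mul_const_field] at h
    simp_rw [Pconv, h.deriv, mul_assoc, integral_const_mul]
  have h := ContDiffOnSlab.hasDerivAt_integral
    (W := fun y t => t ^ (1 - 2 * s) * deriv (fun t => Pker n s t (x - y)) t * φ y)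
    (ContDiffOn.mul hflux (hφ'.of_le one_le_two)) isOpen_Ioi hφc
    (fun t y hy => by rw [hzero y hy, mul_zero]) hz
  simp only [deriv_mul_const_field] at h
  exact (h.congr_of_eventuallyEq (eventually_of_mem (Ioi_mem_nhds hz) hfirst)).deriv

lemma LsOp_Pconv (hs : 0 < s) (hz : 0 < z) (hφ : ContDiff ℝ 2 φ) (hφc : HasCompactSupport φ)
    (x : En n) : LsOp s (fun x z => Pconv n s z φ x) x z = 0 := by
  have hint₁ : Integrable fun y => lapX (fun y => Pker n s z (x - y)) y * φ y :=
    ((continuous_lapX ((contDiffOnSlab_Pker_sub x).contDiff_left isOpen_Ioi hz)).mul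
      hφ.continuous).integrable_of_hasCompactSupport hφc.mul_left
  have hcont : ContDiffOnSlab 0 (Ioi 0) fun y t =>
      deriv (fun t => t ^ (1 - 2 * s) * deriv (fun t => Pker n s t (x - y)) t) t :=
    (((contDiffOnSlab_Pker_sub x).deriv isOpen_Ioi (m := 1) le_rfl).rpow_mul subset_rfl _).deriv
      isOpen_Ioi (by norm_num)
  have hint₂ : Integrable fun y =>
      deriv (fun t => t ^ (1 - 2 * s) * deriv (fun t => Pker n s t (x - y)) t) z * φ y :=
    ((hcont.continuous_left hz).mul hφ.continuous).integrable_of_hasCompactSupport hφc.mul_left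
  have hkernel : ∀ y, z ^ (1 - 2 * s) * (lapX (fun y => Pker n s z (x - y)) y * φ y)
      + deriv (fun t => t ^ (1 - 2 * s) * deriv (fun t => Pker n s t (x - y)) t) z * φ y = 0 :=
    fun y => by
      rw [← mul_assoc, ← add_mul]
      exact mul_eq_zero_of_left (LsOp_Pker_sub hz x y) _
  rw [LsOp, lapX_Pconv hs hz hφ hφc, deriv_rpow_mul_deriv_Pconv hz hφ hφc,
    ← integral_const_mul, ← integral_add (hint₁.const_mul _) hint₂]
  simp only [hkernel, integral_zero]

end Equation

/-! ### Boundary behaviour of the extension -/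

section Boundary

variable {n : ℕ} {s z : ℝ} {φ : En n → ℝ}

lemma norm_integral_Pker_mul_le_rpow {a C : ℝ} {g : En n → ℝ} {x : En n} (ha : 0 ≤ a)
    (has : a < 2 * s) (hz : 0 < z) (hg : ∀ y, ‖g y‖ ≤ C * ‖x - y‖ ^ a) :
    ‖∫ y, Pker n s z (x - y) * g y‖ ≤ C * z ^ a * ∫ w : En n, Pker n s 1 w * ‖w‖ ^ a := by
  have hbound : ∀ w, ‖Pker n s 1 w * g (x - z • w)‖ ≤ C * z ^ a * (Pker n s 1 w * ‖w‖ ^ a) :=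
    fun w => by
    have hP := Pker_nonneg (by linarith : 0 < s) one_pos w
    have h := mul_le_mul_of_nonneg_left (hg (x - z • w)) hP
    rw [sub_sub_cancel, norm_smul, Real.norm_of_nonneg hz.le,
      Real.mul_rpow hz.le (norm_nonneg w)] at h
    rw [norm_mul, Real.norm_of_nonneg hP]
    exact h.trans_eq (by ring)
  rw [← integral_const_mul]
  calc ‖∫ y, Pker n s z (x - y) * g y‖ = ‖∫ w, Pker n s 1 w * g (x - z • w)‖ :=
        congrArg _ (integral_Pker_sub_smul hz x g)
    _ ≤ _ := norm_integral_le_of_norm_le ((integrable_Pker_mul_norm_rpow ha has).const_mul _)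
        (ae_of_all _ hbound)

lemma exists_norm_Pconv_sub_le (hs0 : 0 < s) (hs1 : s ≤ 1) (hφ : ContDiff ℝ 1 φ)
    (hφc : HasCompactSupport φ) :
    ∃ C, ∀ z > 0, ∀ x, ‖Pconv n s z φ x - φ x‖ ≤ C * z ^ s := by
  obtain ⟨K, hK⟩ := hφ.lipschitzWith_of_hasCompactSupport hφc one_ne_zero
  obtain ⟨M, hM⟩ := hφc.exists_bound_of_continuous hφ.continuous
  lift s to ℝ≥0 using hs0.le
  lift M to ℝ≥0 using (norm_nonneg _).trans (hM 0)
  have hbdd : HolderWith (M + M) 0 φ := fun x y => by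
    rw [NNReal.coe_zero, ENNReal.rpow_zero, mul_one, edist_nndist]
    exact_mod_cast (dist_le_norm_add_norm _ _).trans (add_le_add (hM x) (hM y))
  have hholder : HolderWith (max (M + M) K) s φ :=
    hbdd.of_le_of_le (holderWith_one.2 hK) zero_le (mod_cast hs1)
  refine ⟨(max (M + M) K) * ∫ w : En n, Pker n s 1 w * ‖w‖ ^ (s : ℝ), fun z hz x => ?_⟩
  have hsub : Pconv n s z φ x - φ x = ∫ y, Pker n s z (x - y) * (φ y - φ x) := by
    simp_rw [mul_sub]
    rw [integral_sub (integrable_Pker_mul_of_continuous hz hφ.continuous hφc x)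
      (((integrable_Pker hs0 hz).comp_sub_left x).mul_const _), integral_mul_const,
      integral_sub_left_eq_self (Pker n s z) volume x, integral_Pker hs0 hz, one_mul, Pconv]
  rw [hsub, mul_right_comm]
  refine norm_integral_Pker_mul_le_rpow s.2 (by linarith) hz fun y => ?_
  rw [← dist_eq_norm, ← dist_eq_norm, dist_comm x]
  exact hholder.dist_le y x

lemma exists_norm_mul_deriv_Pconv_le (hs0 : 0 < s) (hs1 : s ≤ 1) (hφ : ContDiff ℝ 1 φ)
    (hφc : HasCompactSupport φ) (A : ℝ) :
    ∃ C, ∀ z > 0, ∀ x : En n, ‖x‖ ≤ A →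
      ‖z * deriv (fun t => Pconv n s t φ x) z‖ ≤ C * z ^ s := by
  obtain ⟨M, hM⟩ := (hφc.fderiv ℝ).exists_bound_of_continuous (hφ.continuous_fderiv one_ne_zero)
  obtain ⟨r, hr⟩ := (hφc.fderiv ℝ).isCompact.isBounded.subset_closedBall 0
  have hM0 : 0 ≤ M := (norm_nonneg _).trans (hM 0)
  refine ⟨M * |A + r| ^ (1 - s) * ∫ w : En n, Pker n s 1 w * ‖w‖ ^ s, fun z hz x hx => ?_⟩
  rw [mul_deriv_Pconv hs0 hz hφ hφc, norm_neg, mul_right_comm]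
  refine norm_integral_Pker_mul_le_rpow hs0.le (by linarith) hz fun y => ?_
  by_cases hy : y ∈ tsupport (fderiv ℝ φ)
  · have hxy : ‖x - y‖ ≤ |A + r| :=
      (norm_sub_le x y).trans <| (add_le_add hx (by simpa using hr hy)).trans (le_abs_self _)
    calc ‖fderiv ℝ φ y (x - y)‖ ≤ M * ‖x - y‖ :=
          ((fderiv ℝ φ y).le_opNorm _).trans (by gcongr; exact hM y)
      _ = M * (‖x - y‖ ^ (1 - s) * ‖x - y‖ ^ s) := by
          rw [← Real.rpow_add' (norm_nonneg _) (by simp), sub_add_cancel, Real.rpow_one]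
      _ ≤ M * (|A + r| ^ (1 - s) * ‖x - y‖ ^ s) := by gcongr
      _ = M * |A + r| ^ (1 - s) * ‖x - y‖ ^ s := by ring
  · rw [image_eq_zero_of_notMem_tsupport hy, zero_apply, norm_zero]
    positivity

end Boundary

/-! ### Cutting off the extension -/

section Cutoff

variable {n : ℕ} {s z L : ℝ} {φ : En n → ℝ}

lemma sum_mul_pd (f : En n → ℝ) (x v : En n) : ∑ i, v i * pd i f x = fderiv ℝ f x v := by
  have hv : v = ∑ i, v i • EuclideanSpace.single i (1 : ℝ) := by
    simpa using ((EuclideanSpace.basisFun (Fin n) ℝ).sum_repr v).symm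
  conv_rhs => rw [hv]
  simp [pd, map_sum]

lemma LsOp_mul {U W : En n → ℝ → ℝ} (hU : ContDiffOnSlab 2 (Ioi 0) U)
    (hW : ContDiffOnSlab 2 (Ioi 0) W) (hz : 0 < z) (x : En n) :
    LsOp s (fun x z => U x z * W x z) x z
      = U x z * LsOp s W x z + W x z * LsOp s U x z
        + 2 * z ^ (1 - 2 * s) * ((∑ i, pd i (fun y => U y z) x * pd i (fun y => W y z) x)
          + deriv (U x) z * deriv (W x) z) := by
  have hderiv : ∀ {H : En n → ℝ → ℝ}, ContDiffOnSlab 2 (Ioi 0) H → ∀ t ∈ Ioi (0 : ℝ),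
      HasDerivAt (H x) (deriv (H x) t) t := fun hH t ht =>
    hH.hasDerivAt two_ne_zero isOpen_Ioi x ht
  have hflux : ∀ {H : En n → ℝ → ℝ}, ContDiffOnSlab 2 (Ioi 0) H →
      HasDerivAt (fun t => t ^ (1 - 2 * s) * deriv (H x) t)
        (deriv (fun t => t ^ (1 - 2 * s) * deriv (H x) t) z) z := fun hH =>
    (((hH.deriv isOpen_Ioi (m := 1) (by norm_num)).rpow_mul subset_rfl _).hasDerivAt
      one_ne_zero isOpen_Ioi x hz)
  have hprod : HasDerivAt (fun t => t ^ (1 - 2 * s) * deriv (fun r => U x r * W x r) t) _ z :=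
    (((hderiv hU z hz).mul (hflux hW)).add ((hderiv hW z hz).mul
      (hflux hU))).congr_of_eventuallyEq <| eventually_of_mem (Ioi_mem_nhds hz) fun t ht => by
        simp only [((hderiv hU t ht).fun_mul (hderiv hW t ht)).deriv, Pi.add_apply, Pi.mul_apply]
        ring
  rw [LsOp, lapX_mul (hU.contDiff_left isOpen_Ioi hz) (hW.contDiff_left isOpen_Ioi hz),
    hprod.deriv, LsOp, LsOp]
  ring

lemma hasDerivAt_radial {h : ℝ → ℝ} (hh : Differentiable ℝ h) (x : En n) (z : ℝ) :
    HasDerivAt (fun t => h (‖x‖ ^ 2 + t ^ 2)) (2 * z * deriv h (‖x‖ ^ 2 + z ^ 2)) z := by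
  refine ((hh _).hasDerivAt.comp z ((hasDerivAt_pow 2 z).const_add (‖x‖ ^ 2))).congr_deriv ?_
  push_cast
  ring

lemma LsOp_radial {h : ℝ → ℝ} (hh : ContDiff ℝ 2 h) (hz : 0 < z) (x : En n) :
    LsOp s (fun x z => h (‖x‖ ^ 2 + z ^ 2)) x z
      = z ^ (1 - 2 * s) * ((2 * n + 4 - 4 * s) * deriv h (‖x‖ ^ 2 + z ^ 2)
        + 4 * (‖x‖ ^ 2 + z ^ 2) * deriv (deriv h) (‖x‖ ^ 2 + z ^ 2)) := by
  have hh1 : Differentiable ℝ h := hh.differentiable two_ne_zero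
  have hh2 : Differentiable ℝ (deriv h) := hh.differentiable_deriv_two
  have hlap := lapX_radial (a := (0 : En n)) (c := z ^ 2) (fun y => (hh1 _).hasDerivAt)
    (fun y => (hh2 _).hasDerivAt) x
  simp only [sub_zero] at hlap
  have hflux : HasDerivAt (fun t => t ^ (1 - 2 * s) * (2 * t * deriv h (‖x‖ ^ 2 + t ^ 2))) _ z :=
    (Real.hasDerivAt_rpow_const (.inl hz.ne')).mul
      (((hasDerivAt_id z).const_mul 2).mul (hasDerivAt_radial hh2 x z))
  have hpow : z ^ (1 - 2 * s) = z ^ (1 - 2 * s - 1) * z := by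
    rw [← Real.rpow_add_one hz.ne', sub_add_cancel]
  rw [LsOp, hlap]
  simp only [(hasDerivAt_radial hh1 x _).deriv]
  rw [hflux.deriv, hpow]
  simp only [id]
  ring

/-- The profile, in terms of `ρ = ‖x‖² + z²`, of a smooth cutoff which is `1` for `ρ ≤ L²` and
vanishes for `ρ ≥ 2 L²`. -/
def cutoffProfile (L ρ : ℝ) : ℝ := Real.smoothTransition (2 - ρ / L ^ 2)

lemma contDiff_cutoffProfile {k : ℕ∞} : ContDiff ℝ k (cutoffProfile L) :=
  Real.smoothTransition.contDiff.comp (by fun_prop)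

lemma cutoffProfile_of_le {ρ : ℝ} (hL : 0 < L) (hρ : ρ ≤ L ^ 2) : cutoffProfile L ρ = 1 :=
  Real.smoothTransition.one_of_one_le (by
    have := div_le_one_of_le₀ hρ (by positivity)
    linarith)

lemma cutoffProfile_of_ge {ρ : ℝ} (hL : 0 < L) (hρ : 2 * L ^ 2 ≤ ρ) : cutoffProfile L ρ = 0 :=
  Real.smoothTransition.zero_of_nonpos (by
    have := (le_div_iff₀ (by positivity : 0 < L ^ 2)).2 hρ
    linarith)

lemma norm_cutoffProfile_le (L ρ : ℝ) : ‖cutoffProfile L ρ‖ ≤ 1 := by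
  rw [cutoffProfile, Real.norm_of_nonneg (Real.smoothTransition.nonneg _)]
  exact Real.smoothTransition.le_one _

lemma cutoffProfile_eq (L : ℝ) : cutoffProfile L = fun ρ => cutoffProfile 1 ((L ^ 2)⁻¹ * ρ) := by
  ext ρ
  simp [cutoffProfile, div_eq_inv_mul]

lemma deriv_cutoffProfile (L ρ : ℝ) :
    deriv (cutoffProfile L) ρ = (L ^ 2)⁻¹ * deriv (cutoffProfile 1) ((L ^ 2)⁻¹ * ρ) := by
  rw [cutoffProfile_eq L, deriv_comp_mul_left, smul_eq_mul]

lemma deriv_deriv_cutoffProfile (L ρ : ℝ) :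
    deriv (deriv (cutoffProfile L)) ρ
      = (L ^ 2)⁻¹ * ((L ^ 2)⁻¹ * deriv (deriv (cutoffProfile 1)) ((L ^ 2)⁻¹ * ρ)) := by
  rw [funext (deriv_cutoffProfile L), deriv_const_mul_field, deriv_comp_mul_left, smul_eq_mul]

lemma hasCompactSupport_deriv_cutoffProfile : HasCompactSupport (deriv (cutoffProfile 1)) := by
  refine HasCompactSupport.intro (isCompact_Icc (a := (1 : ℝ)) (b := 2)) fun ρ hρ => ?_
  rw [mem_Icc, not_and_or, not_le, not_le] at hρ
  rcases hρ with hρ | hρ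
  · rw [EventuallyEq.deriv_eq (f := fun _ => 1) (eventually_of_mem (Iio_mem_nhds hρ)
      fun t ht => cutoffProfile_of_le one_pos (by simpa using le_of_lt ht)), deriv_const]
  · rw [EventuallyEq.deriv_eq (f := fun _ => 0) (eventually_of_mem (Ioi_mem_nhds hρ)
      fun t ht => cutoffProfile_of_ge one_pos (by simpa using le_of_lt ht)), deriv_const]

lemma exists_cutoffProfile_bound :
    ∃ C, ∀ L ρ, ‖deriv (cutoffProfile L) ρ‖ ≤ C * (L ^ 2)⁻¹
      ∧ ‖ρ * deriv (deriv (cutoffProfile L)) ρ‖ ≤ C * (L ^ 2)⁻¹ := by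
  have hc := hasCompactSupport_deriv_cutoffProfile
  have hθ : ContDiff ℝ 1 (deriv (cutoffProfile 1)) :=
    ((contDiff_succ_iff_deriv (n := 1)).1 (contDiff_cutoffProfile (k := 2))).2.2
  obtain ⟨C₁, hC₁⟩ := hc.exists_bound_of_continuous hθ.continuous
  obtain ⟨C₂, hC₂⟩ := hc.deriv.mul_left.exists_bound_of_continuous
    (continuous_id.mul (hθ.continuous_deriv le_rfl))
  refine ⟨max C₁ C₂, fun L ρ => ⟨?_, ?_⟩⟩
  · rw [deriv_cutoffProfile, norm_mul, Real.norm_of_nonneg (by positivity), mul_comm]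
    gcongr
    exact (hC₁ _).trans (le_max_left _ _)
  · have hsplit : ρ * deriv (deriv (cutoffProfile L)) ρ = (L ^ 2)⁻¹ *
        (((L ^ 2)⁻¹ * ρ) * deriv (deriv (cutoffProfile 1)) ((L ^ 2)⁻¹ * ρ)) := by
      rw [deriv_deriv_cutoffProfile]; ring
    rw [hsplit, norm_mul, Real.norm_of_nonneg (by positivity), mul_comm]
    gcongr
    exact (hC₂ _).trans (le_max_right _ _)

/-- The extension of `φ` multiplied by a smooth cutoff at distance `L` from the origin. -/
def cutoffExt (n : ℕ) (s L : ℝ) (φ : En n → ℝ) (x : En n) (z : ℝ) : ℝ :=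
  cutoffProfile L (‖x‖ ^ 2 + z ^ 2) * Pconv n s z φ x

lemma contDiffOnSlab_radial {h : ℝ → ℝ} {k : WithTop ℕ∞} (hh : ContDiff ℝ k h) (I : Set ℝ) :
    ContDiffOnSlab k I fun (x : En n) z => h (‖x‖ ^ 2 + z ^ 2) :=
  (hh.comp ((contDiff_fst.norm_sq ℝ).add (contDiff_snd.pow 2))).contDiffOn

lemma contDiffOnSlab_cutoffExt {k : ℕ∞} (hφ : ContDiff ℝ k φ) (hφc : HasCompactSupport φ) :
    ContDiffOnSlab k (Ioi 0) (cutoffExt n s L φ) :=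
  ContDiffOn.mul (contDiffOnSlab_radial contDiff_cutoffProfile _) (contDiffOnSlab_Pconv hφ hφc)

lemma cutoffExt_of_norm_ge (hL : 0 < L) {x : En n} (hx : 2 * L ≤ ‖x‖) (z : ℝ) :
    cutoffExt n s L φ x z = 0 := by
  rw [cutoffExt, cutoffProfile_of_ge hL (by nlinarith [sq_nonneg z]), zero_mul]

lemma cutoffExt_of_ge (hL : 0 < L) (hz : 3 / 2 * L ≤ z) (x : En n) :
    cutoffExt n s L φ x z = 0 := by
  rw [cutoffExt, cutoffProfile_of_ge hL (by nlinarith [sq_nonneg ‖x‖]), zero_mul]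

lemma norm_cutoffExt_le (x : En n) (z : ℝ) : ‖cutoffExt n s L φ x z‖ ≤ ‖Pconv n s z φ x‖ := by
  rw [cutoffExt, norm_mul]
  exact mul_le_of_le_one_left (norm_nonneg _) (norm_cutoffProfile_le _ _)

/- The cutoff is radial, so its gradient only sees the Euler derivative of the extension. -/
lemma LsOp_cutoffExt (hs : 0 < s) (hz : 0 < z) (hφ : ContDiff ℝ 2 φ) (hφc : HasCompactSupport φ)
    (L : ℝ) (x : En n) :
    LsOp s (cutoffExt n s L φ) x z
      = z ^ (1 - 2 * s) * (((2 * n + 4 - 4 * s) * deriv (cutoffProfile L) (‖x‖ ^ 2 + z ^ 2)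
          + 4 * ((‖x‖ ^ 2 + z ^ 2) * deriv (deriv (cutoffProfile L)) (‖x‖ ^ 2 + z ^ 2)))
            * Pconv n s z φ x
        + 4 * deriv (cutoffProfile L) (‖x‖ ^ 2 + z ^ 2) * Pconv n s z (eulerDeriv φ) x) := by
  have hχ : ContDiff ℝ 2 (cutoffProfile L) := contDiff_cutoffProfile (k := 2)
  have hχd : Differentiable ℝ (cutoffProfile L) := hχ.differentiable two_ne_zero
  have hΦ : ContDiffOnSlab 2 (Ioi 0) fun x z => Pconv n s z φ x :=
    contDiffOnSlab_Pconv (k := 2) hφ hφc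
  have hpd : ∀ i, pd i (fun y => cutoffProfile L (‖y‖ ^ 2 + z ^ 2)) x
      = 2 * deriv (cutoffProfile L) (‖x‖ ^ 2 + z ^ 2) * x i := fun i => by
    have h := pd_radial (x := x) (a := 0) (c := z ^ 2) (hχd _).hasDerivAt i
    simp only [sub_zero, PiLp.zero_apply] at h
    rw [h]; ring
  have hΦd := (hΦ.contDiffAt isOpen_Ioi x hz).differentiableAt two_ne_zero
  have heuler : (∑ i, x i * pd i (Pconv n s z φ) x) + z * deriv (fun t => Pconv n s t φ x) z
      = Pconv n s z (eulerDeriv φ) x := by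
    have hsplit : ((x, z) : En n × ℝ) = (x, 0) + z • (0, 1) := by simp
    rw [← fderiv_Pconv_apply_self hs hz (hφ.of_le one_le_two) hφc, sum_mul_pd,
      fderiv_slice_apply (W := fun x z => Pconv n s z φ x) hΦd,
      deriv_slice (W := fun x z => Pconv n s z φ x) hΦd, ← smul_eq_mul, ← map_smul,
      ← map_add, ← hsplit]
  have hmul := LsOp_mul (s := s) (contDiffOnSlab_radial hχ _) hΦ hz x
  rw [LsOp_Pconv hs hz hφ hφc, LsOp_radial hχ hz, (hasDerivAt_radial hχd x z).deriv] at hmul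
  simp only [hpd, mul_assoc, ← Finset.mul_sum] at hmul
  rw [← heuler]
  refine hmul.trans ?_
  ring

lemma exists_norm_LsOp_cutoffExt_le (hs : 0 < s) (hφ : ContDiff ℝ 2 φ)
    (hφc : HasCompactSupport φ) :
    ∃ C, ∀ L, ∀ z > 0, ∀ x, ‖LsOp s (cutoffExt n s L φ) x z‖
      ≤ C * (L ^ 2)⁻¹ * z ^ (1 - 2 * s) * (‖Pconv n s z φ x‖ + ‖Pconv n s z (eulerDeriv φ) x‖) := by
  obtain ⟨C, hC⟩ := exists_cutoffProfile_bound
  refine ⟨(|2 * n + 4 - 4 * s| + 4) * C, fun L z hz x => ?_⟩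
  obtain ⟨h₁, h₂⟩ := hC L (‖x‖ ^ 2 + z ^ 2)
  set a := Pconv n s z φ x
  set b := Pconv n s z (eulerDeriv φ) x
  set q := deriv (cutoffProfile L) (‖x‖ ^ 2 + z ^ 2)
  set q' := (‖x‖ ^ 2 + z ^ 2) * deriv (deriv (cutoffProfile L)) (‖x‖ ^ 2 + z ^ 2)
  have hcoef : ‖(2 * n + 4 - 4 * s) * q + 4 * q'‖ ≤ (|2 * n + 4 - 4 * s| + 4) * (C * (L ^ 2)⁻¹) :=
    calc _ ≤ |2 * n + 4 - 4 * s| * ‖q‖ + 4 * ‖q'‖ := by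
          refine (norm_add_le _ _).trans_eq ?_
          rw [norm_mul, norm_mul, Real.norm_eq_abs (2 * n + 4 - 4 * s), Real.norm_ofNat]
      _ ≤ |2 * n + 4 - 4 * s| * (C * (L ^ 2)⁻¹) + 4 * (C * (L ^ 2)⁻¹) := by gcongr
      _ = _ := by ring
  have hcoef' : ‖4 * q‖ ≤ (|2 * n + 4 - 4 * s| + 4) * (C * (L ^ 2)⁻¹) := by
    rw [norm_mul, Real.norm_ofNat]
    exact mul_le_mul (le_add_of_nonneg_left (abs_nonneg _)) h₁ (norm_nonneg _) (by positivity)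
  rw [LsOp_cutoffExt hs hz hφ hφc, norm_mul, Real.norm_of_nonneg (by positivity)]
  calc z ^ (1 - 2 * s) * ‖((2 * n + 4 - 4 * s) * q + 4 * q') * a + 4 * q * b‖
      ≤ z ^ (1 - 2 * s) * (‖(2 * n + 4 - 4 * s) * q + 4 * q'‖ * ‖a‖ + ‖4 * q‖ * ‖b‖) := by
        rw [← norm_mul, ← norm_mul]
        gcongr
        exact norm_add_le _ _
    _ ≤ z ^ (1 - 2 * s) * ((|2 * n + 4 - 4 * s| + 4) * (C * (L ^ 2)⁻¹) * ‖a‖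
          + (|2 * n + 4 - 4 * s| + 4) * (C * (L ^ 2)⁻¹) * ‖b‖) := by gcongr
    _ = _ := by ring

lemma exists_norm_mul_deriv_cutoffExt_le (hs0 : 0 < s) (hs1 : s ≤ 1) (hφ : ContDiff ℝ 1 φ)
    (hφc : HasCompactSupport φ) (L A : ℝ) :
    ∃ C, ∀ z ∈ Ioc (0 : ℝ) 1, ∀ x : En n, ‖x‖ ≤ A →
      ‖z * deriv (cutoffExt n s L φ x) z‖ ≤ C * z ^ s := by
  obtain ⟨C₁, hC₁⟩ := exists_cutoffProfile_bound
  obtain ⟨M, hM⟩ := hφc.exists_bound_of_continuous hφ.continuous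
  obtain ⟨C₂, hC₂⟩ := exists_norm_mul_deriv_Pconv_le hs0 hs1 hφ hφc A
  refine ⟨2 * (C₁ * (L ^ 2)⁻¹) * M + C₂, fun z hz x hx => ?_⟩
  have hχ : Differentiable ℝ (cutoffProfile L) :=
    (contDiff_cutoffProfile (k := 1)).differentiable one_ne_zero
  have hderiv := (hasDerivAt_radial hχ x z).mul
    ((contDiffOnSlab_Pconv (s := s) (k := 1) hφ hφc).hasDerivAt one_ne_zero isOpen_Ioi x hz.1)
  have hz2 : z ^ 2 ≤ z ^ s := by
    rw [← Real.rpow_natCast]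
    exact Real.rpow_le_rpow_of_exponent_ge hz.1 hz.2 (by push_cast; linarith)
  set q := deriv (cutoffProfile L) (‖x‖ ^ 2 + z ^ 2)
  set d := deriv (fun t => Pconv n s t φ x) z
  have hsplit : z * deriv (cutoffExt n s L φ x) z
      = z ^ 2 * (2 * q * Pconv n s z φ x) + cutoffProfile L (‖x‖ ^ 2 + z ^ 2) * (z * d) :=
    (congrArg (z * ·) hderiv.deriv).trans (by ring)
  rw [hsplit]
  calc _ ≤ ‖z ^ 2‖ * (‖(2 : ℝ)‖ * ‖q‖ * ‖Pconv n s z φ x‖)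
        + ‖cutoffProfile L (‖x‖ ^ 2 + z ^ 2)‖ * ‖z * d‖ := by
        refine (norm_add_le _ _).trans_eq ?_
        simp only [norm_mul]
    _ ≤ z ^ s * (2 * (C₁ * (L ^ 2)⁻¹) * M) + 1 * (C₂ * z ^ s) := by
        rw [Real.norm_of_nonneg (sq_nonneg z), Real.norm_ofNat]
        have := (norm_nonneg q).trans (hC₁ L _).1
        have := Real.rpow_nonneg hz.1.le s
        gcongr
        exacts [(hC₁ L _).1, norm_Pconv_le hs0 hz.1 hM x, norm_cutoffProfile_le _ _,
          hC₂ z hz.1 x hx]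
    _ = _ := by ring

lemma exists_norm_cutoffExt_sub_le (hs0 : 0 < s) (hs1 : s ≤ 1) (hφ : ContDiff ℝ 1 φ)
    (hφc : HasCompactSupport φ) (hL : 0 < L) (hφL : tsupport φ ⊆ Metric.closedBall 0 (L / 2)) :
    ∃ C, ∀ z ∈ Ioc (0 : ℝ) (L / 2), ∀ x, ‖cutoffExt n s L φ x z - φ x‖ ≤ C * z ^ s := by
  obtain ⟨C, hC⟩ := exists_norm_Pconv_sub_le hs0 hs1 hφ hφc
  refine ⟨C, fun z hz x => ?_⟩
  have hφx : cutoffProfile L (‖x‖ ^ 2 + z ^ 2) * φ x = φ x := by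
    by_cases hx : x ∈ tsupport φ
    · have hxL : ‖x‖ ≤ L / 2 := by simpa using hφL hx
      rw [cutoffProfile_of_le hL (by nlinarith [hz.1, hz.2, norm_nonneg x]), one_mul]
    · rw [image_eq_zero_of_notMem_tsupport hx, mul_zero]
  rw [cutoffExt, ← hφx, ← mul_sub, norm_mul]
  exact (mul_le_of_le_one_left (norm_nonneg _) (norm_cutoffProfile_le _ _)).trans (hC z hz.1 x)

end Cutoff

/-! ### Green's formula -/

section Green

variable {n : ℕ} {σ z b T : ℝ} {I : Set ℝ} {V ψ : En n → ℝ → ℝ} {K : Set (En n)}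

/-- The flux `∫ z^{1-2σ} (∂_z V ψ - V ∂_z ψ) dx` of the pair `(V, ψ)` through height `z`. -/
def greenFlux (σ : ℝ) (V ψ : En n → ℝ → ℝ) (z : ℝ) : ℝ :=
  ∫ x, z ^ (1 - 2 * σ) * (deriv (V x) z * ψ x z - V x z * deriv (ψ x) z)

/-- The bulk term `(L_σ V) ψ - V (L_σ ψ)` of Green's formula. -/
def greenDensity (σ : ℝ) (V ψ : En n → ℝ → ℝ) (x : En n) (z : ℝ) : ℝ :=
  LsOp σ V x z * ψ x z - V x z * LsOp σ ψ x z

lemma ContDiffOnSlab.greenDensity (hV : ContDiffOnSlab 2 I V) (hψ : ContDiffOnSlab 2 I ψ)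
    (hI : IsOpen I) (hI0 : I ⊆ Ioi 0) : ContDiffOnSlab 0 I (greenDensity σ V ψ) :=
  ((hV.LsOp hI hI0 σ).mul (hψ.of_le zero_le_two)).sub
    (ContDiffOn.mul (hV.of_le zero_le_two) (hψ.LsOp hI hI0 σ))

lemma greenDensity_of_notMem (hK : IsClosed K) (hψK : ∀ t, ∀ x ∉ K, ψ x t = 0) {x : En n}
    (hx : x ∉ K) (z : ℝ) : greenDensity σ V ψ x z = 0 := by
  have hlap : lapX (fun y => ψ y z) x = 0 := lapX_of_notMem_tsupport fun h =>
    hx (closure_minimal (Function.support_subset_iff'.2 (hψK z)) hK h)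
  simp [greenDensity, LsOp, hlap, show ψ x = fun _ => 0 from funext fun t => hψK t x hx]

lemma deriv_greenFlux_integrand (hV : ContDiffOnSlab 2 I V) (hψ : ContDiffOnSlab 2 I ψ)
    (hI : IsOpen I) (hI0 : I ⊆ Ioi 0) (x : En n) (hz : z ∈ I) :
    deriv (fun t => t ^ (1 - 2 * σ) * (deriv (V x) t * ψ x t - V x t * deriv (ψ x) t)) z
      = greenDensity σ V ψ x z + z ^ (1 - 2 * σ)
        * (V x z * lapX (fun y => ψ y z) x - lapX (fun y => V y z) x * ψ x z) := by
  have hweighted : ∀ {W : En n → ℝ → ℝ}, ContDiffOnSlab 2 I W → HasDerivAt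
      (fun t => t ^ (1 - 2 * σ) * deriv (W x) t)
      (deriv (fun t => t ^ (1 - 2 * σ) * deriv (W x) t) z) z := fun hW =>
    ((hW.deriv hI (m := 1) (by norm_num)).rpow_mul hI0 _).hasDerivAt one_ne_zero hI x hz
  have hderiv := ((hweighted hV).mul (hψ.hasDerivAt two_ne_zero hI x hz)).sub
    ((hV.hasDerivAt two_ne_zero hI x hz).mul (hweighted hψ))
  convert hderiv.deriv using 1
  · congr 1
    funext t
    simp only [Pi.mul_apply, Pi.sub_apply]
    ring
  · rw [greenDensity, LsOp, LsOp]
    ring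

lemma hasDerivAt_greenFlux (hV : ContDiffOnSlab 2 I V) (hψ : ContDiffOnSlab 2 I ψ)
    (hI : IsOpen I) (hI0 : I ⊆ Ioi 0) (hK : IsCompact K) (hψK : ∀ t, ∀ x ∉ K, ψ x t = 0)
    (hz : z ∈ I) :
    HasDerivAt (greenFlux σ V ψ) (∫ x, greenDensity σ V ψ x z) z := by
  have hflux : ContDiffOnSlab 1 I fun x t =>
      t ^ (1 - 2 * σ) * (deriv (V x) t * ψ x t - V x t * deriv (ψ x) t) :=
    ContDiffOnSlab.rpow_mul (W := fun x t => deriv (V x) t * ψ x t - V x t * deriv (ψ x) t)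
      (ContDiffOn.sub (ContDiffOn.mul (hV.deriv hI (by norm_num)) (hψ.of_le one_le_two))
        (ContDiffOn.mul (hV.of_le one_le_two) (hψ.deriv hI (by norm_num)))) hI0 _
  have hψc : HasCompactSupport fun x => ψ x z := HasCompactSupport.intro hK (hψK z)
  have hVz := hV.contDiff_left hI hz
  have hψz := hψ.contDiff_left hI hz
  have hlap₁ : Integrable fun x => V x z * lapX (fun y => ψ y z) x :=
    (hVz.continuous.mul (continuous_lapX hψz)).integrable_of_hasCompactSupport
      (hasCompactSupport_lapX hψc).mul_left
  have hlap₂ : Integrable fun x => lapX (fun y => V y z) x * ψ x z :=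
    ((continuous_lapX hVz).mul hψz.continuous).integrable_of_hasCompactSupport hψc.mul_left
  have hdensity : Integrable fun x => greenDensity σ V ψ x z :=
    ((hV.greenDensity hψ hI hI0).continuous_left hz).integrable_of_hasCompactSupport
      (HasCompactSupport.intro hK fun x hx => greenDensity_of_notMem hK.isClosed hψK hx z)
  have hlap : Integrable fun x =>
      V x z * lapX (fun y => ψ y z) x - lapX (fun y => V y z) x * ψ x z := hlap₁.sub hlap₂
  have hlap0 : ∫ x, (V x z * lapX (fun y => ψ y z) x - lapX (fun y => V y z) x * ψ x z) = 0 := by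
    rw [integral_sub hlap₁ hlap₂, sub_eq_zero]
    simp_rw [mul_comm (V _ z), mul_comm (lapX (fun y => V y z) _)]
    exact (integral_mul_lapX hψz hψc hVz).symm
  have hvalue : ∫ x, deriv (fun t => t ^ (1 - 2 * σ)
      * (deriv (V x) t * ψ x t - V x t * deriv (ψ x) t)) z = ∫ x, greenDensity σ V ψ x z := by
    simp_rw [deriv_greenFlux_integrand hV hψ hI hI0 _ hz]
    rw [integral_add hdensity (hlap.const_mul _), integral_const_mul, hlap0, mul_zero, add_zero]
  rw [← hvalue]
  refine hflux.hasDerivAt_integral hI hK (fun t x hx => ?_) hz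
  rw [show ψ x = fun _ => 0 from funext fun t => hψK t x hx]
  simp

lemma tendsto_greenFlux (hV : ContDiffOnSlab 2 (Ioo 0 T) V) (hψ : ContDiffOnSlab 2 (Ioo 0 T) ψ)
    (hK : IsCompact K) (hψK : ∀ t, ∀ x ∉ K, ψ x t = 0) (hb : 0 < b) (hbT : b < T)
    (hint : IntegrableOn (fun p : En n × ℝ => greenDensity σ V ψ p.1 p.2) (univ ×ˢ Ioc 0 b)) :
    Tendsto (greenFlux σ V ψ) (𝓝[>] 0) (𝓝 (greenFlux σ V ψ b
      - ∫ p in (univ : Set (En n)) ×ˢ Ioc 0 b, greenDensity σ V ψ p.1 p.2)) := by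
  rw [IntegrableOn, volume_restrict_slab] at hint
  have hslice : IntegrableOn (fun z => ∫ x, greenDensity σ V ψ x z) (Ioc 0 b) :=
    hint.integral_prod_right
  have hftc : ∀ ε ∈ Ioo 0 b, greenFlux σ V ψ b - ∫ z in ε..b, ∫ x, greenDensity σ V ψ x z
      = greenFlux σ V ψ ε := fun ε hε => by
    rw [intervalIntegral.integral_eq_sub_of_hasDerivAt (f := greenFlux σ V ψ), sub_sub_cancel]
    · rw [uIcc_of_le hε.2.le]
      exact fun z hz => hasDerivAt_greenFlux hV hψ isOpen_Ioo (fun _ ht => ht.1) hK hψK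
        ⟨hε.1.trans_le hz.1, hz.2.trans_lt hbT⟩
    · rw [intervalIntegrable_iff_integrableOn_Ioc_of_le hε.2.le]
      exact hslice.mono_set (Ioc_subset_Ioc_left hε.1.le)
  have hprim : Tendsto (fun ε => ∫ z in ε..b, ∫ x, greenDensity σ V ψ x z) (𝓝[>] 0)
      (𝓝 (∫ z in (0 : ℝ)..b, ∫ x, greenDensity σ V ψ x z)) := by
    have hcont := intervalIntegral.continuousOn_primitive_interval_left (a := 0) (b := b)
      (f := fun z => ∫ x, greenDensity σ V ψ x z) (μ := volume) (by
        rwa [uIcc_of_le hb.le, integrableOn_Icc_iff_integrableOn_Ioc])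
    rw [uIcc_of_le hb.le] at hcont
    exact (hcont 0 (left_mem_Icc.2 hb.le)).mono_left
      (nhdsWithin_le_iff.2 (mem_of_superset (Ioo_mem_nhdsGT hb) Ioo_subset_Icc_self))
  rw [volume_restrict_slab, integral_prod_symm _ hint, ← intervalIntegral.integral_of_le hb.le]
  exact (hprim.const_sub _).congr' (mem_of_superset (Ioo_mem_nhdsGT hb) hftc)

end Green

/-! ### The weighted flux and the Green flux -/

section Boundary

variable {n : ℕ} {s δ L T : ℝ} {V : En n → ℝ → ℝ} {φ : En n → ℝ} {K : Set (En n)}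

lemma ContDiffOnSlab.hasDerivWithinAt_Ico (hV : ContDiffOnSlab 1 (Ico 0 T) V) (x : En n) {z : ℝ}
    (hz : z ∈ Ico 0 T) :
    HasDerivWithinAt (V x) (fderivWithin ℝ (fun p : En n × ℝ => V p.1 p.2) (univ ×ˢ Ico 0 T)
      (x, z) (0, 1)) (Ico 0 T) z :=
  ((ContDiffOn.differentiableOn hV one_ne_zero (x, z) ⟨mem_univ _, hz⟩).hasFDerivWithinAt)
    |>.comp_hasDerivWithinAt z (f := fun t => (x, t))
      ((hasDerivWithinAt_const _ _ _).prodMk (hasDerivWithinAt_id _ _))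
      fun _ ht => ⟨mem_univ _, ht⟩

lemma exists_norm_deriv_le_of_contDiffOnSlab_Ico (hV : ContDiffOnSlab 1 (Ico 0 T) V)
    (hV0 : ∀ x, V x 0 = 0) (hK : IsCompact K) (hδT : δ < T) :
    ∃ C, ∀ x ∈ K, ∀ z ∈ Ioc 0 δ, ‖deriv (V x) z‖ ≤ C ∧ ‖V x z‖ ≤ C * z := by
  have hunique : UniqueDiffOn ℝ ((univ : Set (En n)) ×ˢ Ico 0 T) :=
    uniqueDiffOn_univ.prod (uniqueDiffOn_Ico 0 T)
  have hsub : Icc 0 δ ⊆ Ico 0 T := Icc_subset_Ico_right hδT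
  obtain ⟨C, hC⟩ := (hK.prod (isCompact_Icc (a := 0) (b := δ))).exists_bound_of_continuousOn
    (((ContDiffOn.continuousOn_fderivWithin hV hunique le_rfl).clm_apply
      (continuousOn_const (c := ((0 : En n), (1 : ℝ))))).mono (prod_mono (subset_univ _) hsub))
  refine ⟨C, fun x hx z hz => ⟨?_, ?_⟩⟩
  · rw [((hV.hasDerivWithinAt_Ico x (hsub ⟨hz.1.le, hz.2⟩)).hasDerivAt
      (Ico_mem_nhds hz.1 (hz.2.trans_lt hδT))).deriv]
    exact hC (x, z) ⟨hx, hz.1.le, hz.2⟩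
  · have hmvt := (convex_Icc 0 δ).norm_image_sub_le_of_norm_hasDerivWithin_le (f := V x)
      (fun t ht => (hV.hasDerivWithinAt_Ico x (hsub ht)).mono hsub)
      (fun t ht => hC (x, t) ⟨hx, ht⟩) (left_mem_Icc.2 (hz.1.le.trans hz.2)) ⟨hz.1.le, hz.2⟩
    simpa [hV0, abs_of_pos hz.1] using hmvt

lemma rpow_mul_norm_flux_sub_le {ε v v' p p' q C C₁ C₂ : ℝ} (hε : 0 < ε) (hv' : ‖v'‖ ≤ C)
    (hv : ‖v‖ ≤ C * ε) (hp : ‖p - q‖ ≤ C₁ * ε ^ s) (hp' : ‖ε * p'‖ ≤ C₂ * ε ^ s) :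
    ‖ε ^ (1 - 2 * s) * (v' * p - v * p') - ε ^ (1 - 2 * s) * v' * q‖
      ≤ C * (C₁ + C₂) * ε ^ (1 - s) := by
  have hpow : ε ^ (1 - s) = ε ^ (1 - 2 * s) * ε ^ s := by rw [← Real.rpow_add hε]; ring_nf
  have hC : 0 ≤ C := (norm_nonneg _).trans hv'
  rw [norm_mul, Real.norm_of_nonneg hε.le] at hp'
  calc _ = ‖ε ^ (1 - 2 * s) * (v' * (p - q) - v * p')‖ := by ring_nf
    _ ≤ ε ^ (1 - 2 * s) * (‖v'‖ * ‖p - q‖ + ‖v‖ * ‖p'‖) := by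
      rw [norm_mul, Real.norm_of_nonneg (by positivity), ← norm_mul, ← norm_mul]
      gcongr
      exact norm_sub_le _ _
    _ ≤ ε ^ (1 - 2 * s) * (C * (C₁ * ε ^ s) + C * ε * ‖p'‖) := by gcongr
    _ ≤ ε ^ (1 - 2 * s) * (C * (C₁ * ε ^ s) + C * (C₂ * ε ^ s)) := by
      rw [mul_assoc C ε]
      gcongr
    _ = _ := by rw [hpow]; ring

/-- The weighted normal derivative `∫ z^{1-2s} ∂_z V(x,z) φ(x) dx` at height `z`, tested
against `φ`. -/
def weightedFlux (s : ℝ) (V : En n → ℝ → ℝ) (φ : En n → ℝ) (z : ℝ) : ℝ :=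
  ∫ x, z ^ (1 - 2 * s) * deriv (V x) z * φ x

lemma norm_greenFlux_sub_weightedFlux_le {ψ : En n → ℝ → ℝ} {I : Set ℝ} {ε B : ℝ}
    (hV : ContDiffOnSlab 1 I V) (hψ : ContDiffOnSlab 1 I ψ) (hI : IsOpen I) (hφ : Continuous φ)
    (hK : IsCompact K) (hψK : ∀ t, ∀ x ∉ K, ψ x t = 0) (hφK : ∀ x ∉ K, φ x = 0) (hε : ε ∈ I)
    (hB : ∀ x ∈ K, ‖ε ^ (1 - 2 * s) * (deriv (V x) ε * ψ x ε - V x ε * deriv (ψ x) ε)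
      - ε ^ (1 - 2 * s) * deriv (V x) ε * φ x‖ ≤ B) :
    ‖greenFlux s V ψ ε - weightedFlux s V φ ε‖ ≤ B * volume.real K := by
  have hderiv : ∀ {W : En n → ℝ → ℝ}, ContDiffOnSlab 1 I W → Continuous fun x => deriv (W x) ε :=
    fun hW => (hW.deriv hI (m := 0) (by norm_num)).continuous_left hε
  have hzero : ∀ x ∉ K, ε ^ (1 - 2 * s) * (deriv (V x) ε * ψ x ε - V x ε * deriv (ψ x) ε) = 0 :=
    fun x hx => by simp [show ψ x = fun _ => 0 from funext fun t => hψK t x hx]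
  have hflux : Integrable fun x =>
      ε ^ (1 - 2 * s) * (deriv (V x) ε * ψ x ε - V x ε * deriv (ψ x) ε) :=
    (continuous_const.mul (((hderiv hV).mul (hψ.continuous_left hε)).sub
      ((hV.continuous_left hε).mul (hderiv hψ)))).integrable_of_hasCompactSupport
        (HasCompactSupport.intro hK hzero)
  have hweighted : Integrable fun x => ε ^ (1 - 2 * s) * deriv (V x) ε * φ x :=
    ((continuous_const.mul (hderiv hV)).mul hφ).integrable_of_hasCompactSupport
      (HasCompactSupport.intro hK hφK).mul_left
  rw [greenFlux, weightedFlux, ← integral_sub hflux hweighted,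
    ← setIntegral_eq_integral_of_forall_compl_eq_zero (s := K) fun x hx => by
      rw [hzero x hx, hφK x hx, mul_zero, sub_zero]]
  exact norm_setIntegral_le_of_norm_le_const hK.measure_lt_top hB

lemma tendsto_greenFlux_sub_weightedFlux (hs0 : 0 < s) (hs1 : s < 1)
    (hV : ContDiffOnSlab 1 (Ico 0 T) V) (hV0 : ∀ x, V x 0 = 0) (hT : 0 < T)
    (hφ : ContDiff ℝ 1 φ) (hφc : HasCompactSupport φ) (hL : 0 < L)
    (hφL : tsupport φ ⊆ Metric.closedBall 0 (L / 2)) :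
    Tendsto (fun ε => greenFlux s V (cutoffExt n s L φ) ε - weightedFlux s V φ ε)
      (𝓝[>] 0) (𝓝 0) := by
  set K := Metric.closedBall (0 : En n) (2 * L)
  have hK : IsCompact K := isCompact_closedBall 0 _
  have hVo : ContDiffOnSlab 1 (Ioo 0 T) V := hV.mono Ioo_subset_Ico_self
  have hψ : ContDiffOnSlab 1 (Ioo 0 T) (cutoffExt n s L φ) :=
    (contDiffOnSlab_cutoffExt (k := 1) hφ hφc).mono Ioo_subset_Ioi_self
  obtain ⟨C, hC⟩ := exists_norm_deriv_le_of_contDiffOnSlab_Ico hV hV0 hK (half_lt_self hT)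
  obtain ⟨C₁, hC₁⟩ := exists_norm_cutoffExt_sub_le hs0 hs1.le hφ hφc hL hφL
  obtain ⟨C₂, hC₂⟩ := exists_norm_mul_deriv_cutoffExt_le hs0 hs1.le hφ hφc L (2 * L)
  have hbound : ∀ᶠ ε in 𝓝[>] (0 : ℝ),
      ‖greenFlux s V (cutoffExt n s L φ) ε - weightedFlux s V φ ε‖
        ≤ C * (C₁ + C₂) * ε ^ (1 - s) * volume.real K := by
    filter_upwards [Ioc_mem_nhdsGT (half_pos hT), Ioc_mem_nhdsGT (half_pos hL),
      Ioc_mem_nhdsGT one_pos] with ε hεT hεL hε1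
    refine norm_greenFlux_sub_weightedFlux_le hVo hψ isOpen_Ioo hφ.continuous hK
      (fun t x hx => cutoffExt_of_norm_ge hL (le_of_lt (by simpa [K] using hx)) t)
      (fun x hx => image_eq_zero_of_notMem_tsupport fun h =>
        hx (Metric.closedBall_subset_closedBall (by linarith) (hφL h)))
      ⟨hεT.1, hεT.2.trans_lt (half_lt_self hT)⟩ fun x hx => ?_
    exact rpow_mul_norm_flux_sub_le hεT.1 (hC x hx ε hεT).1 (hC x hx ε hεT).2 (hC₁ ε hεL x)
      (hC₂ ε hε1 x (by simpa [K] using hx))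
  refine squeeze_zero_norm' hbound ?_
  have hpow : Tendsto (fun ε : ℝ => ε ^ (1 - s)) (𝓝[>] 0) (𝓝 0) := by
    have h := Real.continuousAt_rpow_const 0 (1 - s) (.inr (by linarith))
    rw [ContinuousAt, Real.zero_rpow (by linarith)] at h
    exact h.mono_left nhdsWithin_le_nhds
  simpa using (hpow.const_mul (C * (C₁ + C₂))).mul_const (volume.real K)

lemma tendsto_weightedFlux_of_integrableOn_greenDensity (hs0 : 0 < s) (hs1 : s < 1)
    (hV : ContDiffOnSlab 2 (Ico 0 T) V) (hV0 : ∀ x, V x 0 = 0) (hφ : ContDiff ℝ 2 φ)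
    (hφc : HasCompactSupport φ) (hL : 0 < L) (hLT : 2 * L < T)
    (hφL : tsupport φ ⊆ Metric.closedBall 0 (L / 2))
    (hint : IntegrableOn (fun p : En n × ℝ => greenDensity s V (cutoffExt n s L φ) p.1 p.2)
      (univ ×ˢ Ioc 0 (2 * L))) :
    Tendsto (weightedFlux s V φ) (𝓝[>] 0) (𝓝 (-∫ p in (univ : Set (En n)) ×ˢ Ioc 0 (2 * L),
      greenDensity s V (cutoffExt n s L φ) p.1 p.2)) := by
  have htop : greenFlux s V (cutoffExt n s L φ) (2 * L) = 0 := by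
    refine integral_eq_zero_of_ae (ae_of_all _ fun x => ?_)
    have hzero : cutoffExt n s L φ x =ᶠ[𝓝 (2 * L)] fun _ => 0 :=
      eventually_of_mem (Ici_mem_nhds (by linarith : 3 / 2 * L < 2 * L)) fun t ht =>
        cutoffExt_of_ge hL ht x
    simp [hzero.eq_of_nhds, hzero.deriv_eq]
  have hgreen := tendsto_greenFlux (hV.mono Ioo_subset_Ico_self)
    ((contDiffOnSlab_cutoffExt (k := 2) hφ hφc).mono Ioo_subset_Ioi_self)
    (isCompact_closedBall (0 : En n) (2 * L))
    (fun t x hx => cutoffExt_of_norm_ge hL (le_of_lt (by simpa using hx)) t) (by positivity) hLT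
    hint
  have hboundary := tendsto_greenFlux_sub_weightedFlux hs0 hs1 (hV.of_le one_le_two) hV0
    (by linarith) (hφ.of_le one_le_two) hφc hL hφL
  rw [htop, zero_sub] at hgreen
  simpa using hgreen.sub hboundary

end Boundary

/-! ### Weighted energy -/

section Energy

variable {n : ℕ} {s z : ℝ} {V : En n → ℝ → ℝ}

/-- The weighted energy `∫₀^∞ |∂_z V(x,z)|² z^{1-2s} dz` of `V` on the vertical line over `x`. -/
def verticalEnergy (s : ℝ) (V : En n → ℝ → ℝ) (x : En n) : ℝ≥0∞ :=
  ∫⁻ z in Ioi 0, ENNReal.ofReal (deriv (V x) z ^ 2 * z ^ (1 - 2 * s))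

lemma aemeasurable_sq_deriv_mul_rpow (hV : ContDiffOnSlab 1 (Ioi 0) V) :
    AEMeasurable (fun p : En n × ℝ => ENNReal.ofReal (deriv (V p.1) p.2 ^ 2 * p.2 ^ (1 - 2 * s)))
      (volume.prod (volume.restrict (Ioi 0))) := by
  have hcont : ContinuousOn (fun p : En n × ℝ => deriv (V p.1) p.2 ^ 2 * p.2 ^ (1 - 2 * s))
      (univ ×ˢ Ioi 0) :=
    ((hV.deriv isOpen_Ioi (m := 0) (by norm_num)).continuousOn.pow 2).mul
      (continuousOn_snd.rpow_const fun _ hp => .inl (ne_of_gt hp.2))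
  rw [← volume_restrict_slab]
  exact (hcont.aemeasurable (MeasurableSet.univ.prod measurableSet_Ioi)).ennreal_ofReal

lemma aemeasurable_verticalEnergy (hV : ContDiffOnSlab 1 (Ioi 0) V) :
    AEMeasurable (verticalEnergy s V) :=
  (aemeasurable_sq_deriv_mul_rpow hV).lintegral_prod_right'

lemma lintegral_verticalEnergy (hV : ContDiffOnSlab 1 (Ioi 0) V) :
    ∫⁻ x, verticalEnergy s V x = ∫⁻ p in (univ : Set (En n)) ×ˢ Ioi (0 : ℝ),
      ENNReal.ofReal (deriv (V p.1) p.2 ^ 2 * p.2 ^ (1 - 2 * s)) := by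
  rw [volume_restrict_slab]
  exact (lintegral_prod _ (aemeasurable_sq_deriv_mul_rpow hV)).symm

lemma le_inv_add_mul_sq {p : ℝ} (hp : 0 < p) (d : ℝ) : d ≤ p⁻¹ + p * d ^ 2 := by
  have hsquare : p⁻¹ + p * d ^ 2 - d = p⁻¹ * ((p * d - 1 / 2) ^ 2 + 3 / 4) := by
    field_simp; ring
  have hnonneg : 0 ≤ p⁻¹ * ((p * d - 1 / 2) ^ 2 + 3 / 4) := by positivity
  linarith

lemma lintegral_rpow_two_mul_sub_one (hs : 0 < s) (hz : 0 < z) :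
    ∫⁻ t in Ioc 0 z, ENNReal.ofReal (t ^ (2 * s - 1)) = ENNReal.ofReal (z ^ (2 * s) / (2 * s)) := by
  have hs' : -1 < 2 * s - 1 := by linarith
  rw [← ofReal_integral_eq_lintegral_ofReal
    (intervalIntegral.intervalIntegrable_rpow' hs').1
    ((ae_restrict_iff' measurableSet_Ioc).2 (ae_of_all _ fun t ht => Real.rpow_nonneg ht.1.le _)),
    ← intervalIntegral.integral_of_le hz.le, integral_rpow (.inl hs'), sub_add_cancel,
    Real.zero_rpow (by positivity), sub_zero]

/- The fundamental theorem of calculus, with the weights `t^{±(1-2s)}` split by AM-GM. -/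
lemma enorm_le_rpow_mul_verticalEnergy (hs : 0 < s) (hz : 0 < z)
    (hV : ContDiffOnSlab 1 (Ici 0) V) (hV0 : ∀ x, V x 0 = 0) (x : En n) :
    ‖V x z‖ₑ ≤ ENNReal.ofReal (z ^ s) * (ENNReal.ofReal (1 / (2 * s)) + verticalEnergy s V x) := by
  have hVx : ContDiffOn ℝ 1 (V x) (Icc 0 z) :=
    ContDiffOn.comp hV (g := fun p : En n × ℝ => V p.1 p.2) (f := fun t => (x, t)) (by fun_prop)
      fun _ ht => ⟨mem_univ _, ht.1⟩
  have hftc := enorm_sub_le_lintegral_deriv_of_contDiffOn_Icc hVx hz.le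
  rw [hV0, sub_zero, ← setLIntegral_congr Ioc_ae_eq_Icc] at hftc
  have hamgm : ∀ t ∈ Ioc 0 z, ‖deriv (V x) t‖ₑ ≤ ENNReal.ofReal ((z ^ s)⁻¹)
      * ENNReal.ofReal (t ^ (2 * s - 1)) + ENNReal.ofReal (z ^ s)
        * ENNReal.ofReal (deriv (V x) t ^ 2 * t ^ (1 - 2 * s)) := fun t ht => by
    have ht0 : 0 < t := ht.1
    have hinv : (t ^ (1 - 2 * s))⁻¹ = t ^ (2 * s - 1) := by rw [← Real.rpow_neg ht0.le]; ring_nf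
    rw [← ENNReal.ofReal_mul (by positivity), ← ENNReal.ofReal_mul (by positivity),
      ← ENNReal.ofReal_add (by positivity) (by positivity), ← ofReal_norm]
    refine ENNReal.ofReal_le_ofReal ?_
    have h := le_inv_add_mul_sq (p := z ^ s * t ^ (1 - 2 * s)) (by positivity) ‖deriv (V x) t‖
    rw [mul_inv, hinv, Real.norm_eq_abs, sq_abs] at h
    exact h.trans_eq (by ring)
  have hvalue : (z ^ s)⁻¹ * (z ^ (2 * s) / (2 * s)) = z ^ s * (1 / (2 * s)) := by
    rw [two_mul s, Real.rpow_add hz]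
    field_simp
  calc ‖V x z‖ₑ ≤ ∫⁻ t in Ioc 0 z, (ENNReal.ofReal ((z ^ s)⁻¹)
      * ENNReal.ofReal (t ^ (2 * s - 1)) + ENNReal.ofReal (z ^ s)
        * ENNReal.ofReal (deriv (V x) t ^ 2 * t ^ (1 - 2 * s))) :=
        hftc.trans (setLIntegral_mono' measurableSet_Ioc hamgm)
    _ ≤ ENNReal.ofReal ((z ^ s)⁻¹) * ENNReal.ofReal (z ^ (2 * s) / (2 * s))
        + ENNReal.ofReal (z ^ s) * verticalEnergy s V x := by
      rw [lintegral_add_left (by fun_prop), lintegral_const_mul' _ _ ENNReal.ofReal_ne_top,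
        lintegral_const_mul' _ _ ENNReal.ofReal_ne_top, lintegral_rpow_two_mul_sub_one hs hz]
      gcongr
      exact lintegral_mono_set Ioc_subset_Ioi_self
    _ = _ := by
      rw [← ENNReal.ofReal_mul (by positivity), hvalue, ENNReal.ofReal_mul (by positivity), mul_add]

end Energy

/-! ### Removing the cutoff -/

section RemoveCutoff

variable {n : ℕ} {s L T : ℝ} {I : Set ℝ} {V : En n → ℝ → ℝ} {φ : En n → ℝ}

lemma lintegral_slab_le {f : En n × ℝ → ℝ≥0∞} {B : ℝ≥0∞} (hI : MeasurableSet I)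
    (hf : AEMeasurable f (volume.restrict (univ ×ˢ I))) (hB : ∀ z ∈ I, ∫⁻ x, f (x, z) ≤ B) :
    ∫⁻ p in univ ×ˢ I, f p ≤ B * volume I := by
  rw [volume_restrict_slab] at hf ⊢
  rw [lintegral_prod_symm _ hf]
  exact (setLIntegral_mono' hI hB).trans_eq (setLIntegral_const _ _)

lemma exists_lintegral_mul_enorm_Pconv_le (hs : 0 < s) {f : En n → ℝ} (hf : Continuous f)
    (hfc : HasCompactSupport f) :
    ∃ C : ℝ≥0, ∀ z > 0, ∀ (c : ℝ≥0∞) (e : En n → ℝ≥0∞),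
      ∫⁻ x, (c + e x) * ‖Pconv n s z f x‖ₑ ≤ C * (c + ∫⁻ x, e x) := by
  obtain ⟨M, hM⟩ := hfc.exists_bound_of_continuous hf
  have hint : ∫⁻ x, ‖f x‖ₑ < ⊤ := (hf.integrable_of_hasCompactSupport hfc).2
  refine ⟨(∫⁻ x, ‖f x‖ₑ).toNNReal + M.toNNReal, fun z hz c e => ?_⟩
  refine (lintegral_mul_enorm_Pconv_le hs hz hf.measurable hM c e).trans ?_
  rw [ENNReal.coe_add, ENNReal.coe_toNNReal hint.ne, mul_add, mul_comm c]
  exact add_le_add (mul_le_mul_left (le_self_add) _) (mul_le_mul_left le_add_self _)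

lemma exists_enorm_LsOp_cutoffExt_le (hs : 0 < s) (hφ : ContDiff ℝ 2 φ)
    (hφc : HasCompactSupport φ) :
    ∃ C : ℝ≥0, ∀ L, ∀ z > 0, ∀ x, ‖LsOp s (cutoffExt n s L φ) x z‖ₑ
      ≤ C * ENNReal.ofReal ((L ^ 2)⁻¹) * ENNReal.ofReal (z ^ (1 - 2 * s))
        * (‖Pconv n s z φ x‖ₑ + ‖Pconv n s z (eulerDeriv φ) x‖ₑ) := by
  obtain ⟨C, hC⟩ := exists_norm_LsOp_cutoffExt_le hs hφ hφc
  refine ⟨C.toNNReal, fun L z hz x => ?_⟩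
  rw [← ofReal_norm, ← ofReal_norm (Pconv n s z φ x), ← ofReal_norm (Pconv n s z _ x),
    ← ENNReal.ofReal_add (norm_nonneg _) (norm_nonneg _), ENNReal.ofNNReal_toNNReal,
    ← ENNReal.ofReal_mul' (by positivity), ← ENNReal.ofReal_mul' (by positivity),
    ← ENNReal.ofReal_mul' (by positivity)]
  exact ENNReal.ofReal_le_ofReal (hC L z hz x)

lemma aestronglyMeasurable_mul_LsOp_cutoffExt (hV : ContDiffOnSlab 0 (Ioc 0 T) V)
    (hφ : ContDiff ℝ 2 φ) (hφc : HasCompactSupport φ) :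
    AEStronglyMeasurable (fun p : En n × ℝ => V p.1 p.2 * LsOp s (cutoffExt n s L φ) p.1 p.2)
      (volume.restrict (univ ×ˢ Ioc 0 T)) :=
  (hV.continuousOn.mul (((contDiffOnSlab_cutoffExt (k := 2) hφ hφc).LsOp isOpen_Ioi subset_rfl
    s).continuousOn.mono (prod_mono_right Ioc_subset_Ioi_self))).aestronglyMeasurable
      (MeasurableSet.univ.prod measurableSet_Ioc)

/- Both kernel averages of the weight `c + e` against `φ` and its Euler derivative are bounded
uniformly in the height, and the cutoff contributes the factor `L⁻²`. -/
lemma exists_lintegral_enorm_mul_LsOp_cutoffExt_le (hs : 0 < s) (hφ : ContDiff ℝ 2 φ)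
    (hφc : HasCompactSupport φ) :
    ∃ C : ℝ≥0, ∀ (L T : ℝ) (V : En n → ℝ → ℝ) (A : ℝ) (c : ℝ≥0∞) (e : En n → ℝ≥0∞),
      ContDiffOnSlab 0 (Ioc 0 T) V → AEMeasurable e →
      (∀ z ∈ Ioc 0 T, ∀ x,
        ENNReal.ofReal (z ^ (1 - 2 * s)) * ‖V x z‖ₑ ≤ ENNReal.ofReal A * (c + e x)) →
      ∫⁻ p in univ ×ˢ Ioc 0 T, ‖V p.1 p.2 * LsOp s (cutoffExt n s L φ) p.1 p.2‖ₑ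
        ≤ C * ENNReal.ofReal ((L ^ 2)⁻¹ * T) * ENNReal.ofReal A * (c + ∫⁻ x, e x) := by
  obtain ⟨C, hC⟩ := exists_enorm_LsOp_cutoffExt_le hs hφ hφc
  obtain ⟨C₁, hC₁⟩ := exists_lintegral_mul_enorm_Pconv_le hs hφ.continuous hφc
  obtain ⟨C₂, hC₂⟩ := exists_lintegral_mul_enorm_Pconv_le hs
    (continuous_eulerDeriv (hφ.of_le one_le_two)) (hasCompactSupport_eulerDeriv hφc)
  refine ⟨C * (C₁ + C₂), fun L T V A c e hV he hA => ?_⟩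
  set B : ℝ≥0∞ := C * ENNReal.ofReal ((L ^ 2)⁻¹) * ENNReal.ofReal A
  have hB : B ≠ ⊤ := ENNReal.mul_ne_top (ENNReal.mul_ne_top ENNReal.coe_ne_top
    ENNReal.ofReal_ne_top) ENNReal.ofReal_ne_top
  have hmeas := (aestronglyMeasurable_mul_LsOp_cutoffExt (s := s) (L := L) hV hφ hφc).enorm
  have hpointwise : ∀ z ∈ Ioc 0 T, ∀ x, ‖V x z * LsOp s (cutoffExt n s L φ) x z‖ₑ
      ≤ B * ((c + e x) * ‖Pconv n s z φ x‖ₑ + (c + e x) * ‖Pconv n s z (eulerDeriv φ) x‖ₑ) := by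
    intro z hz x
    calc _ ≤ ‖V x z‖ₑ * _ := (enorm_mul _ _).trans_le (mul_le_mul_right (hC L z hz.1 x) _)
      _ = C * ENNReal.ofReal ((L ^ 2)⁻¹) * (ENNReal.ofReal (z ^ (1 - 2 * s)) * ‖V x z‖ₑ)
          * (‖Pconv n s z φ x‖ₑ + ‖Pconv n s z (eulerDeriv φ) x‖ₑ) := by ring
      _ ≤ C * ENNReal.ofReal ((L ^ 2)⁻¹) * (ENNReal.ofReal A * (c + e x))
          * (‖Pconv n s z φ x‖ₑ + ‖Pconv n s z (eulerDeriv φ) x‖ₑ) :=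
        mul_le_mul_left (mul_le_mul_right (hA z hz x) _) _
      _ = _ := by ring
  refine (lintegral_slab_le (B := B * (C₁ * (c + ∫⁻ x, e x) + C₂ * (c + ∫⁻ x, e x)))
    measurableSet_Ioc hmeas fun z hz => ?_).trans_eq ?_
  · refine (lintegral_mono (hpointwise z hz)).trans ?_
    have hweight : AEMeasurable fun x => (c + e x) * ‖Pconv n s z φ x‖ₑ :=
      (he.const_add c).mul (measurable_Pconv hz.1 hφ.continuous.measurable).enorm.aemeasurable
    rw [lintegral_const_mul' _ _ hB, lintegral_add_left' hweight]
    exact mul_le_mul_right (add_le_add (hC₁ z hz.1 c e) (hC₂ z hz.1 c e)) _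
  · rw [Real.volume_Ioc, sub_zero, ENNReal.ofReal_mul (by positivity)]
    simp only [ENNReal.coe_mul, ENNReal.coe_add, B]
    ring

end RemoveCutoff

/-! ### The flux near the boundary -/

section Near

variable {n : ℕ} {s L : ℝ} {V F : En n → ℝ → ℝ} {φ : En n → ℝ}

lemma integrableOn_mul_Pconv (hs : 0 < s) (hφ : ContDiff ℝ 1 φ) (hφc : HasCompactSupport φ)
    (hF : IntegrableOn (fun p : En n × ℝ => F p.1 p.2) (univ ×ˢ Ioi 0)) :
    IntegrableOn (fun p : En n × ℝ => F p.1 p.2 * Pconv n s p.2 φ p.1) (univ ×ˢ Ioi 0) := by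
  obtain ⟨M, hM⟩ := hφc.exists_bound_of_continuous hφ.continuous
  exact hF.mul_bdd (c := M)
    ((contDiffOnSlab_Pconv (k := 1) hφ hφc).continuousOn.aestronglyMeasurable
      (MeasurableSet.univ.prod measurableSet_Ioi))
    ((ae_restrict_iff' (MeasurableSet.univ.prod measurableSet_Ioi)).2
      (ae_of_all _ fun p hp => norm_Pconv_le hs hp.2 hM p.1))

lemma integrableOn_mul_cutoffExt (hs : 0 < s) (hφ : ContDiff ℝ 1 φ) (hφc : HasCompactSupport φ)
    (hF : IntegrableOn (fun p : En n × ℝ => F p.1 p.2) (univ ×ˢ Ioi 0)) (L : ℝ) :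
    IntegrableOn (fun p : En n × ℝ => F p.1 p.2 * cutoffExt n s L φ p.1 p.2) (univ ×ˢ Ioi 0) :=
  Integrable.mono (integrableOn_mul_Pconv hs hφ hφc hF) (hF.1.mul
    ((contDiffOnSlab_cutoffExt (k := 1) hφ hφc).continuousOn.aestronglyMeasurable
      (MeasurableSet.univ.prod measurableSet_Ioi)))
    (ae_of_all _ fun p => by
      rw [norm_mul, norm_mul]
      exact mul_le_mul_of_nonneg_left (norm_cutoffExt_le _ _) (norm_nonneg _))

lemma tendsto_setIntegral_mul_cutoffExt (hs : 0 < s) (hφ : ContDiff ℝ 1 φ)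
    (hφc : HasCompactSupport φ)
    (hF : IntegrableOn (fun p : En n × ℝ => F p.1 p.2) (univ ×ˢ Ioi 0)) :
    Tendsto (fun L => ∫ p in (univ : Set (En n)) ×ˢ Ioc 0 (2 * L),
        F p.1 p.2 * cutoffExt n s L φ p.1 p.2) atTop
      (𝓝 (∫ p in (univ : Set (En n)) ×ˢ Ioi 0, F p.1 p.2 * Pconv n s p.2 φ p.1)) := by
  have hfull : ∀ᶠ L in atTop, ∫ p in (univ : Set (En n)) ×ˢ Ioi 0,
      F p.1 p.2 * cutoffExt n s L φ p.1 p.2 = ∫ p in (univ : Set (En n)) ×ˢ Ioc 0 (2 * L),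
        F p.1 p.2 * cutoffExt n s L φ p.1 p.2 := by
    filter_upwards [eventually_gt_atTop 0] with L hL
    refine setIntegral_eq_of_subset_of_forall_sdiff_eq_zero
      (MeasurableSet.univ.prod measurableSet_Ioi) (prod_mono_right Ioc_subset_Ioi_self)
      fun p hp => ?_
    have hz : 2 * L < p.2 := not_le.1 fun h => hp.2 ⟨mem_univ _, hp.1.2, h⟩
    rw [cutoffExt_of_ge hL (by linarith), mul_zero]
  refine (tendsto_integral_filter_of_dominated_convergence _
    (.of_forall fun L => (integrableOn_mul_cutoffExt hs hφ hφc hF L).1)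
    (.of_forall fun L => ae_of_all _ fun p => ?_) (integrableOn_mul_Pconv hs hφ hφc hF).norm
    (ae_of_all _ fun p => ?_)).congr' hfull
  · rw [norm_mul, norm_mul]
    exact mul_le_mul_of_nonneg_left (norm_cutoffExt_le _ _) (norm_nonneg _)
  · refine tendsto_const_nhds.congr' ?_
    filter_upwards [eventually_gt_atTop 0, eventually_ge_atTop (‖p.1‖ ^ 2 + p.2 ^ 2),
      eventually_ge_atTop 1] with L hL hpL hL1
    rw [cutoffExt, cutoffProfile_of_le hL (hpL.trans (by nlinarith)), one_mul]

lemma exists_lintegral_enorm_mul_LsOp_cutoffExt_le_rpow (hs0 : 0 < s) (hs1 : s < 1)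
    (hV : ContDiffOnSlab 1 (Ici 0) V) (hV0 : ∀ x, V x 0 = 0)
    (hVen : ∫⁻ x, verticalEnergy s V x < ⊤) (hφ : ContDiff ℝ 2 φ) (hφc : HasCompactSupport φ) :
    ∃ C : ℝ≥0, ∀ L > 0, ∫⁻ p in univ ×ˢ Ioc 0 (2 * L),
      ‖V p.1 p.2 * LsOp s (cutoffExt n s L φ) p.1 p.2‖ₑ ≤ C * ENNReal.ofReal (L ^ (-s)) := by
  obtain ⟨C, hC⟩ := exists_lintegral_enorm_mul_LsOp_cutoffExt_le hs0 hφ hφc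
  set M := ENNReal.ofReal (1 / (2 * s)) + ∫⁻ x, verticalEnergy s V x
  have hM : M ≠ ⊤ := ENNReal.add_ne_top.2 ⟨ENNReal.ofReal_ne_top, hVen.ne⟩
  refine ⟨C * (2 * 2 ^ (1 - s) : ℝ).toNNReal * M.toNNReal, fun L hL => ?_⟩
  have hweight : ∀ z ∈ Ioc 0 (2 * L), ∀ x, ENNReal.ofReal (z ^ (1 - 2 * s)) * ‖V x z‖ₑ
      ≤ ENNReal.ofReal ((2 * L) ^ (1 - s))
        * (ENNReal.ofReal (1 / (2 * s)) + verticalEnergy s V x) := fun z hz x => by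
    have hpow : z ^ (1 - 2 * s) * z ^ s ≤ (2 * L) ^ (1 - s) := by
      rw [← Real.rpow_add hz.1, show 1 - 2 * s + s = 1 - s by ring]
      exact Real.rpow_le_rpow hz.1.le hz.2 (by linarith)
    refine (mul_le_mul_right (enorm_le_rpow_mul_verticalEnergy hs0 hz.1 hV hV0 x) _).trans ?_
    rw [← mul_assoc, ← ENNReal.ofReal_mul' (Real.rpow_nonneg hz.1.le _)]
    exact mul_le_mul_left (ENNReal.ofReal_le_ofReal hpow) _
  have hscale : (L ^ 2)⁻¹ * (2 * L) * (2 * L) ^ (1 - s) = 2 * 2 ^ (1 - s) * L ^ (-s) := by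
    rw [Real.mul_rpow two_pos.le hL.le, sub_eq_add_neg 1 s, Real.rpow_add hL, Real.rpow_one]
    field_simp
  refine (hC L (2 * L) V ((2 * L) ^ (1 - s)) (ENNReal.ofReal (1 / (2 * s))) (verticalEnergy s V)
    ((hV.mono fun z hz => hz.1.le).of_le zero_le_one)
    (aemeasurable_verticalEnergy (hV.mono Ioi_subset_Ici_self)) hweight).trans_eq ?_
  rw [mul_assoc (C : ℝ≥0∞), ← ENNReal.ofReal_mul (by positivity), hscale,
    ENNReal.ofReal_mul (by positivity), ENNReal.coe_mul, ENNReal.coe_mul, ENNReal.coe_toNNReal hM,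
    ENNReal.ofNNReal_toNNReal]
  ring

lemma integrableOn_mul_LsOp_cutoffExt (hs0 : 0 < s) (hs1 : s < 1)
    (hV : ContDiffOnSlab 1 (Ici 0) V) (hV0 : ∀ x, V x 0 = 0)
    (hVen : ∫⁻ x, verticalEnergy s V x < ⊤) (hφ : ContDiff ℝ 2 φ) (hφc : HasCompactSupport φ)
    (hL : 0 < L) :
    IntegrableOn (fun p : En n × ℝ => V p.1 p.2 * LsOp s (cutoffExt n s L φ) p.1 p.2)
      (univ ×ˢ Ioc 0 (2 * L)) := by
  obtain ⟨C, hC⟩ := exists_lintegral_enorm_mul_LsOp_cutoffExt_le_rpow hs0 hs1 hV hV0 hVen hφ hφc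
  exact ⟨aestronglyMeasurable_mul_LsOp_cutoffExt ((hV.mono fun z hz => hz.1.le).of_le zero_le_one)
    hφ hφc,
    (hC L hL).trans_lt (ENNReal.mul_lt_top ENNReal.coe_lt_top ENNReal.ofReal_lt_top)⟩

lemma tendsto_setIntegral_mul_LsOp_cutoffExt (hs0 : 0 < s) (hs1 : s < 1)
    (hV : ContDiffOnSlab 1 (Ici 0) V) (hV0 : ∀ x, V x 0 = 0)
    (hVen : ∫⁻ x, verticalEnergy s V x < ⊤) (hφ : ContDiff ℝ 2 φ) (hφc : HasCompactSupport φ) :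
    Tendsto (fun L => ∫ p in (univ : Set (En n)) ×ˢ Ioc 0 (2 * L),
      V p.1 p.2 * LsOp s (cutoffExt n s L φ) p.1 p.2) atTop (𝓝 0) := by
  obtain ⟨C, hC⟩ := exists_lintegral_enorm_mul_LsOp_cutoffExt_le_rpow hs0 hs1 hV hV0 hVen hφ hφc
  have hbound : Tendsto (fun L : ℝ => C * ENNReal.ofReal (L ^ (-s))) atTop (𝓝 0) := by
    simpa using ENNReal.Tendsto.const_mul (a := C)
      (ENNReal.tendsto_ofReal (tendsto_rpow_neg_atTop hs0)) (.inr ENNReal.coe_ne_top)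
  refine tendsto_zero_iff_enorm_tendsto_zero.2 (tendsto_of_tendsto_of_tendsto_of_le_of_le'
    tendsto_const_nhds hbound (.of_forall fun _ => zero_le) ?_)
  filter_upwards [eventually_gt_atTop 0] with L hL
  exact (enorm_integral_le_lintegral_enorm _).trans (hC L hL)

lemma tendsto_weightedFlux_nhdsGT_zero (hs0 : 0 < s) (hs1 : s < 1)
    (hV : ContDiffOnSlab 2 (Ici 0) V) (hV0 : ∀ x, V x 0 = 0)
    (hVen : ∫⁻ x, verticalEnergy s V x < ⊤)
    (hLV : IntegrableOn (fun p : En n × ℝ => LsOp s V p.1 p.2) (univ ×ˢ Ioi 0))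
    (hφ : ContDiff ℝ 2 φ) (hφc : HasCompactSupport φ) :
    Tendsto (weightedFlux s V φ) (𝓝[>] 0) (𝓝 (-∫ p in (univ : Set (En n)) ×ˢ Ioi 0,
      LsOp s V p.1 p.2 * Pconv n s p.2 φ p.1)) := by
  have hφ₁ : ContDiff ℝ 1 φ := hφ.of_le one_le_two
  have hV₁ : ContDiffOnSlab 1 (Ici 0) V := hV.of_le one_le_two
  have hintF : ∀ L, IntegrableOn (fun p : En n × ℝ =>
      LsOp s V p.1 p.2 * cutoffExt n s L φ p.1 p.2) (univ ×ˢ Ioc 0 (2 * L)) := fun L =>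
    (integrableOn_mul_cutoffExt hs0 hφ₁ hφc hLV L).mono_set (prod_mono_right Ioc_subset_Ioi_self)
  have hintV : ∀ L > 0, IntegrableOn (fun p : En n × ℝ =>
      V p.1 p.2 * LsOp s (cutoffExt n s L φ) p.1 p.2) (univ ×ˢ Ioc 0 (2 * L)) := fun L hL =>
    integrableOn_mul_LsOp_cutoffExt hs0 hs1 hV₁ hV0 hVen hφ hφc hL
  have hgreen : Tendsto (fun L => -∫ p in (univ : Set (En n)) ×ˢ Ioc 0 (2 * L),
      greenDensity s V (cutoffExt n s L φ) p.1 p.2) atTop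
      (𝓝 (-∫ p in (univ : Set (En n)) ×ˢ Ioi 0, LsOp s V p.1 p.2 * Pconv n s p.2 φ p.1)) := by
    refine Tendsto.neg ?_
    have hlim := (tendsto_setIntegral_mul_cutoffExt hs0 hφ₁ hφc hLV).sub
      (tendsto_setIntegral_mul_LsOp_cutoffExt hs0 hs1 hV₁ hV0 hVen hφ hφc)
    rw [sub_zero] at hlim
    refine hlim.congr' ?_
    filter_upwards [eventually_gt_atTop 0] with L hL
    exact (integral_sub (hintF L) (hintV L hL)).symm
  have hflux : ∀ᶠ L in atTop, Tendsto (weightedFlux s V φ) (𝓝[>] 0)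
      (𝓝 (-∫ p in univ ×ˢ Ioc 0 (2 * L), greenDensity s V (cutoffExt n s L φ) p.1 p.2)) := by
    obtain ⟨r, hr⟩ := hφc.isBounded.subset_closedBall 0
    filter_upwards [eventually_gt_atTop 0, eventually_ge_atTop (2 * r)] with L hL hrL
    exact tendsto_weightedFlux_of_integrableOn_greenDensity (T := 3 * L) hs0 hs1
      (hV.mono Ico_subset_Ici_self) hV0 hφ hφc hL (by linarith)
      (hr.trans (Metric.closedBall_subset_closedBall (by linarith)))
      ((hintF L).sub (hintV L hL))
  obtain ⟨L, hL⟩ := hflux.exists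
  have hconst := tendsto_const_nhds.congr' (hflux.mono fun L' hL' => tendsto_nhds_unique hL hL')
  rwa [tendsto_nhds_unique hconst hgreen] at hL

end Near

/-! ### The flux at infinity -/

section Reflection

variable {n : ℕ} {k : WithTop ℕ∞} {s R r z : ℝ} {I J : Set ℝ} {V : En n → ℝ → ℝ}

/-- The odd part, up to a factor two, of `V` around height `R`. It vanishes at `r = 0`, so the
boundary-flux formula applies to it and computes the flux of `V` through height `R`. -/
def oddReflection (R : ℝ) (V : En n → ℝ → ℝ) (x : En n) (r : ℝ) : ℝ :=
  V x (R + r) - V x (R - r)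

lemma ContDiffOnSlab.comp_right {g : ℝ → ℝ} (hV : ContDiffOnSlab k J V) (hg : ContDiff ℝ k g)
    (hgI : MapsTo g I J) : ContDiffOnSlab k I fun x r => V x (g r) :=
  ContDiffOn.comp hV (f := fun p : En n × ℝ => (p.1, g p.2))
    (contDiff_fst.prodMk (hg.comp contDiff_snd)).contDiffOn fun _ hp => ⟨mem_univ _, hgI hp.2⟩

lemma ContDiffOnSlab.oddReflection (hV : ContDiffOnSlab k (Ioi 0) V) :
    ContDiffOnSlab k (Ioo (-R) R) (oddReflection R V) :=
  (hV.comp_right (by fun_prop) fun r hr => show 0 < R + r by linarith [hr.1]).sub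
    (hV.comp_right (by fun_prop) fun r hr => show 0 < R - r by linarith [hr.2])

lemma deriv_oddReflection (hV : ContDiffOnSlab 1 (Ioi 0) V) (x : En n) (hr : r ∈ Ioo (-R) R) :
    deriv (oddReflection R V x) r = deriv (V x) (R + r) + deriv (V x) (R - r) := by
  have hadd : HasDerivAt (V x) _ (R + r) :=
    hV.hasDerivAt one_ne_zero isOpen_Ioi x (show 0 < R + r by linarith [hr.1])
  have hsub : HasDerivAt (V x) _ (R - r) :=
    hV.hasDerivAt one_ne_zero isOpen_Ioi x (show 0 < R - r by linarith [hr.2])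
  refine ((hadd.comp_const_add R r).sub (hsub.comp_const_sub R r)).deriv.trans ?_
  rw [sub_neg_eq_add]

lemma LsOp_one_half (V : En n → ℝ → ℝ) (x : En n) (z : ℝ) :
    LsOp (1 / 2) V x z = lapX (fun y => V y z) x + deriv (deriv (V x)) z := by
  simp [LsOp]

lemma LsOp_one_half_oddReflection (hV : ContDiffOnSlab 2 (Ioi 0) V) (x : En n)
    (hr : r ∈ Ioo (-R) R) :
    LsOp (1 / 2) (oddReflection R V) x r
      = LsOp (1 / 2) V x (R + r) - LsOp (1 / 2) V x (R - r) := by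
  have hadd : R + r ∈ Ioi 0 := show 0 < R + r by linarith [hr.1]
  have hsub : R - r ∈ Ioi 0 := show 0 < R - r by linarith [hr.2]
  have hderiv : deriv (oddReflection R V x) =ᶠ[𝓝 r]
      fun t => deriv (V x) (R + t) + deriv (V x) (R - t) :=
    mem_of_superset (Ioo_mem_nhds hr.1 hr.2) fun t ht =>
      deriv_oddReflection (hV.of_le one_le_two) x ht
  have hV' : ContDiffOnSlab 1 (Ioi 0) fun x z => deriv (V x) z :=
    hV.deriv isOpen_Ioi (by norm_num)
  have hderiv₂ : deriv (fun t => deriv (V x) (R + t) + deriv (V x) (R - t)) r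
      = deriv (deriv (V x)) (R + r) + -deriv (deriv (V x)) (R - r) :=
    (((hV'.hasDerivAt one_ne_zero isOpen_Ioi x hadd).comp_const_add R r).add
      ((hV'.hasDerivAt one_ne_zero isOpen_Ioi x hsub).comp_const_sub R r)).deriv
  simp only [LsOp_one_half, hderiv.deriv_eq, hderiv₂, oddReflection,
    lapX_sub (hV.contDiff_left isOpen_Ioi hadd) (hV.contDiff_left isOpen_Ioi hsub)]
  ring

lemma LsOp_eq_rpow_mul_LsOp_one_half (hV : ContDiffOnSlab 2 (Ioi 0) V) (s : ℝ) (x : En n)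
    (hz : 0 < z) :
    LsOp s V x z = z ^ (1 - 2 * s) * LsOp (1 / 2) V x z
      + (1 - 2 * s) * z ^ (-(2 * s)) * deriv (V x) z := by
  have hV' : ContDiffOnSlab 1 (Ioi 0) fun x z => deriv (V x) z :=
    hV.deriv isOpen_Ioi (by norm_num)
  have hderiv := (Real.hasDerivAt_rpow_const (p := 1 - 2 * s) (.inl hz.ne')).mul
    (hV'.hasDerivAt one_ne_zero isOpen_Ioi x hz)
  rw [LsOp_one_half, LsOp, show deriv (fun t => t ^ (1 - 2 * s) * deriv (V x) t) z = _ from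
    hderiv.deriv, show 1 - 2 * s - 1 = -(2 * s) by ring]
  ring

lemma rpow_neg_mul_norm_le (hs0 : 0 < s) (hs1 : s < 1) (hR : 0 < R) (hz : R / 2 ≤ z) (d : ℝ) :
    z ^ (-(2 * s)) * ‖d‖ ≤ 2 * R ^ (-s) * (2 * R⁻¹ + d ^ 2 * z ^ (1 - 2 * s)) := by
  have hz0 : 0 < z := by linarith
  have hamgm := le_inv_add_mul_sq (Real.rpow_pos_of_pos hz0 (1 - s)) ‖d‖
  have hpow : z ^ (-s) ≤ 2 * R ^ (-s) := by
    calc z ^ (-s) ≤ (R / 2) ^ (-s) :=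
          Real.rpow_le_rpow_of_nonpos (by positivity) hz (by linarith)
      _ = 2 ^ s * R ^ (-s) := by
        rw [Real.div_rpow hR.le two_pos.le, Real.rpow_neg two_pos.le, div_inv_eq_mul, mul_comm]
      _ ≤ 2 ^ (1 : ℝ) * R ^ (-s) := by gcongr; norm_num
      _ = 2 * R ^ (-s) := by rw [Real.rpow_one]
  have hinv : z⁻¹ ≤ 2 * R⁻¹ := by
    rw [← div_eq_mul_inv, ← inv_div]; exact inv_anti₀ (by positivity) hz
  calc z ^ (-(2 * s)) * ‖d‖
      ≤ z ^ (-(2 * s)) * ((z ^ (1 - s))⁻¹ + z ^ (1 - s) * ‖d‖ ^ 2) := by gcongr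
    _ = z ^ (-s) * (z⁻¹ + d ^ 2 * z ^ (1 - 2 * s)) := by
      rw [← Real.rpow_neg hz0.le, ← Real.rpow_neg_one z, Real.norm_eq_abs, sq_abs, mul_add,
        mul_add, ← mul_assoc, ← Real.rpow_add hz0, ← Real.rpow_add hz0, ← Real.rpow_add hz0,
        mul_left_comm, ← Real.rpow_add hz0, mul_comm (d ^ 2)]
      ring_nf
    _ ≤ 2 * R ^ (-s) * (2 * R⁻¹ + d ^ 2 * z ^ (1 - 2 * s)) := by gcongr

lemma rpow_le_two_mul_rpow {a : ℝ} (ha0 : -1 ≤ a) (ha1 : a ≤ 1) (hR : 0 < R)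
    (hz : z ∈ Icc (R / 2) (2 * R)) : R ^ a ≤ 2 * z ^ a := by
  have hz0 : 0 < z := by linarith [hz.1]
  rw [← div_le_iff₀ (by positivity), ← Real.div_rpow hR.le hz0.le]
  rcases le_total 0 a with ha | ha
  · calc (R / z) ^ a ≤ 2 ^ a := Real.rpow_le_rpow (by positivity)
          (by rw [div_le_iff₀ hz0]; linarith [hz.1]) ha
      _ ≤ 2 ^ (1 : ℝ) := Real.rpow_le_rpow_of_exponent_le one_le_two ha1
      _ = 2 := Real.rpow_one 2
  · calc (R / z) ^ a ≤ 2⁻¹ ^ a := Real.rpow_le_rpow_of_nonpos (by positivity)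
          (by rw [le_div_iff₀ hz0]; linarith [hz.2]) ha
      _ = 2 ^ (-a) := by rw [Real.inv_rpow two_pos.le, Real.rpow_neg two_pos.le]
      _ ≤ 2 ^ (1 : ℝ) := Real.rpow_le_rpow_of_exponent_le one_le_two (by linarith)
      _ = 2 := Real.rpow_one 2

lemma rpow_mul_norm_LsOp_one_half_le (hs0 : 0 < s) (hs1 : s < 1)
    (hV : ContDiffOnSlab 2 (Ioi 0) V) (x : En n) (hR : 0 < R) (hz : z ∈ Icc (R / 2) (2 * R)) :
    R ^ (1 - 2 * s) * ‖LsOp (1 / 2) V x z‖ ≤ 2 * ‖LsOp s V x z‖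
      + 4 * R ^ (-s) * (2 * R⁻¹ + deriv (V x) z ^ 2 * z ^ (1 - 2 * s)) := by
  have hz0 : 0 < z := by linarith [hz.1]
  have hsplit : z ^ (1 - 2 * s) * ‖LsOp (1 / 2) V x z‖
      ≤ ‖LsOp s V x z‖ + z ^ (-(2 * s)) * ‖deriv (V x) z‖ := by
    have hcoef : ‖1 - 2 * s‖ ≤ 1 := by
      rw [Real.norm_eq_abs, abs_le]; constructor <;> linarith
    calc z ^ (1 - 2 * s) * ‖LsOp (1 / 2) V x z‖
        = ‖LsOp s V x z - (1 - 2 * s) * (z ^ (-(2 * s)) * deriv (V x) z)‖ := by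
          rw [LsOp_eq_rpow_mul_LsOp_one_half hV s x hz0, ← mul_assoc, add_sub_cancel_right,
            norm_mul, Real.norm_of_nonneg (Real.rpow_nonneg hz0.le _)]
      _ ≤ ‖LsOp s V x z‖ + ‖1 - 2 * s‖ * (z ^ (-(2 * s)) * ‖deriv (V x) z‖) := by
        refine (norm_sub_le _ _).trans_eq ?_
        rw [norm_mul, norm_mul, Real.norm_of_nonneg (Real.rpow_nonneg hz0.le _)]
      _ ≤ _ := add_le_add le_rfl (mul_le_of_le_one_left (by positivity) hcoef)
  have hweight : R ^ (1 - 2 * s) ≤ 2 * z ^ (1 - 2 * s) :=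
    rpow_le_two_mul_rpow (by linarith) (by linarith) hR hz
  calc R ^ (1 - 2 * s) * ‖LsOp (1 / 2) V x z‖
      ≤ 2 * (z ^ (1 - 2 * s) * ‖LsOp (1 / 2) V x z‖) := by rw [← mul_assoc]; gcongr
    _ ≤ _ := by linarith [rpow_neg_mul_norm_le hs0 hs1 hR hz.1 (deriv (V x) z)]

end Reflection

section Flux

variable {n : ℕ} {s R z : ℝ} {V : En n → ℝ → ℝ} {φ : En n → ℝ}

lemma continuousAt_weightedFlux (hV : ContDiffOnSlab 2 (Ioi 0) V) (hφ : ContDiff ℝ 1 φ)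
    (hφc : HasCompactSupport φ) (hz : 0 < z) : ContinuousAt (weightedFlux s V φ) z := by
  have hflux : ContDiffOnSlab 1 (Ioi 0) fun x t => t ^ (1 - 2 * s) * deriv (V x) t * φ x :=
    ContDiffOn.mul ((hV.deriv isOpen_Ioi (by norm_num)).rpow_mul subset_rfl _)
      (hφ.comp contDiff_fst).contDiffOn
  exact (hflux.hasDerivAt_integral isOpen_Ioi hφc (fun t x hx => by
    rw [image_eq_zero_of_notMem_tsupport hx, mul_zero]) hz).continuousAt

lemma weightedFlux_eq_rpow_mul (V : En n → ℝ → ℝ) (φ : En n → ℝ) (z : ℝ) :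
    weightedFlux s V φ z = z ^ (1 - 2 * s) * weightedFlux (1 / 2) V φ z := by
  simp [weightedFlux, mul_assoc, integral_const_mul]

lemma tendsto_weightedFlux_oddReflection (hV : ContDiffOnSlab 2 (Ioi 0) V) (hφ : ContDiff ℝ 1 φ)
    (hφc : HasCompactSupport φ) (hR : 0 < R) :
    Tendsto (weightedFlux (1 / 2) (oddReflection R V) φ) (𝓝[>] 0)
      (𝓝 (2 * weightedFlux (1 / 2) V φ R)) := by
  have hcomp : ∀ {g : ℝ → ℝ}, Continuous g → g 0 = R →
      Tendsto (fun r => weightedFlux (1 / 2) V φ (g r)) (𝓝[>] 0)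
        (𝓝 (weightedFlux (1 / 2) V φ R)) := fun hg hg0 =>
    (continuousAt_weightedFlux hV hφ hφc hR).tendsto.comp
      ((hg0 ▸ hg.tendsto 0).mono_left nhdsWithin_le_nhds)
  have hint : ∀ z > 0, Integrable fun x => deriv (V x) z * φ x := fun z hz =>
    (((hV.deriv isOpen_Ioi (m := 0) (by norm_num)).continuous_left hz).mul
      hφ.continuous).integrable_of_hasCompactSupport hφc.mul_left
  rw [two_mul]
  refine ((hcomp (g := fun r => R + r) (by fun_prop) (add_zero R)).add
    (hcomp (g := fun r => R - r) (by fun_prop) (sub_zero R))).congr' ?_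
  filter_upwards [Ioo_mem_nhdsGT hR] with r hr
  simp only [weightedFlux, mul_one_div_cancel (two_ne_zero' ℝ), sub_self, Real.rpow_zero, one_mul]
  rw [← integral_add (hint _ (by linarith [hr.1])) (hint _ (by linarith [hr.2]))]
  refine integral_congr_ae (ae_of_all _ fun x => ?_)
  simp only [deriv_oddReflection (hV.of_le one_le_two) x ⟨by linarith [hr.1], hr.2⟩, add_mul]

end Flux

section Far

variable {n : ℕ} {s R T r : ℝ} {I J : Set ℝ} {V : En n → ℝ → ℝ} {φ : En n → ℝ}

lemma setLIntegral_slab_comp_le {e : ℝ ≃ᵐ ℝ} (he : MeasurePreserving e) (heI : MapsTo e I J)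
    (G : En n × ℝ → ℝ≥0∞) :
    ∫⁻ p in univ ×ˢ I, G (p.1, e p.2) ≤ ∫⁻ p in univ ×ˢ J, G p := by
  have hpres : MeasurePreserving (Prod.map id e : En n × ℝ → En n × ℝ) :=
    (MeasurePreserving.id volume).prod he
  calc ∫⁻ p in univ ×ˢ I, G (p.1, e p.2)
      ≤ ∫⁻ p in univ ×ˢ (e ⁻¹' J), G (p.1, e p.2) := lintegral_mono_set (prod_mono_right heI)
    _ = ∫⁻ p in univ ×ˢ J, G p := hpres.setLIntegral_comp_preimage_emb
      ((MeasurableEquiv.refl (En n)).prodCongr e).measurableEmbedding G (univ ×ˢ J)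

lemma lintegral_add_reflection_le {G : En n × ℝ → ℝ≥0∞} (hG : ContinuousOn G (univ ×ˢ Ioi 0))
    (hR : 0 < R) :
    ∫⁻ p in univ ×ˢ Ioc 0 (R / 2), (G (p.1, R + p.2) + G (p.1, R - p.2))
      ≤ 2 * ∫⁻ p in univ ×ˢ Ici (R / 2), G p := by
  have hadd : ContinuousOn (fun p : En n × ℝ => G (p.1, R + p.2)) (univ ×ˢ Ioc 0 (R / 2)) :=
    hG.comp (f := fun p : En n × ℝ => (p.1, R + p.2)) (by fun_prop)
      fun p hp => ⟨mem_univ _, show 0 < R + p.2 by linarith [hp.2.1]⟩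
  rw [lintegral_add_left' (hadd.aemeasurable (MeasurableSet.univ.prod measurableSet_Ioc)), two_mul]
  exact add_le_add
    (setLIntegral_slab_comp_le (e := MeasurableEquiv.addLeft R) (measurePreserving_add_left _ R)
      (fun r hr => show R / 2 ≤ R + r by linarith [hr.1]) G)
    (setLIntegral_slab_comp_le (e := MeasurableEquiv.subLeft R)
      (Measure.measurePreserving_sub_left _ R)
      (fun r hr => show R / 2 ≤ R - r by linarith [hr.2]) G)

/-- The integrable density controlling, up to a constant, the one-dimensional Laplacian of the
odd reflection of `V` around height `R`. -/
def tailDensity (s R : ℝ) (V : En n → ℝ → ℝ) (p : En n × ℝ) : ℝ :=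
  2 * ‖LsOp s V p.1 p.2‖ + 4 * R ^ (-s) * (deriv (V p.1) p.2 ^ 2 * p.2 ^ (1 - 2 * s))

lemma continuousOn_tailDensity (hV : ContDiffOnSlab 2 (Ioi 0) V) :
    ContinuousOn (tailDensity s R V) (univ ×ˢ Ioi 0) :=
  (continuousOn_const.mul (hV.LsOp isOpen_Ioi subset_rfl s).continuousOn.norm).add
    (continuousOn_const.mul (((hV.deriv isOpen_Ioi (m := 1) (by norm_num)).continuousOn.pow 2).mul
      (continuousOn_snd.rpow_const fun _ hp => .inl (ne_of_gt hp.2))))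

lemma lintegral_tailDensity_le (hV : ContDiffOnSlab 2 (Ioi 0) V) (hR : 0 < R) :
    ∫⁻ p in univ ×ˢ Ici (R / 2), ENNReal.ofReal (tailDensity s R V p)
      ≤ 2 * (∫⁻ p in univ ×ˢ Ici (R / 2), ‖LsOp s V p.1 p.2‖ₑ)
        + 4 * ENNReal.ofReal (R ^ (-s)) * ∫⁻ x, verticalEnergy s V x := by
  have hJ : MeasurableSet ((univ : Set (En n)) ×ˢ Ici (R / 2)) :=
    MeasurableSet.univ.prod measurableSet_Ici
  have hJ0 : (univ : Set (En n)) ×ˢ Ici (R / 2) ⊆ univ ×ˢ Ioi 0 :=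
    prod_mono_right (Ici_subset_Ioi.2 (half_pos hR))
  have hmeas := ((hV.LsOp isOpen_Ioi subset_rfl s).continuousOn.mono hJ0).enorm.aemeasurable hJ
    (μ := volume)
  have hsplit : ∀ p ∈ (univ : Set (En n)) ×ˢ Ici (R / 2), ENNReal.ofReal (tailDensity s R V p)
      = 2 * ‖LsOp s V p.1 p.2‖ₑ + 4 * ENNReal.ofReal (R ^ (-s))
        * ENNReal.ofReal (deriv (V p.1) p.2 ^ 2 * p.2 ^ (1 - 2 * s)) := fun p hp => by
    have hp0 : 0 < p.2 := (hJ0 hp).2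
    rw [tailDensity, ENNReal.ofReal_add (by positivity) (by positivity),
      ENNReal.ofReal_mul two_pos.le, ENNReal.ofReal_mul (by positivity),
      ENNReal.ofReal_mul (by norm_num), ofReal_norm]
    norm_num
  rw [setLIntegral_congr_fun hJ hsplit, lintegral_add_left' (hmeas.const_mul 2),
    lintegral_const_mul' _ _ ENNReal.ofNat_ne_top, lintegral_const_mul' _ _
      (ENNReal.mul_ne_top ENNReal.ofNat_ne_top ENNReal.ofReal_ne_top),
    lintegral_verticalEnergy (hV.of_le one_le_two)]
  exact add_le_add le_rfl (mul_le_mul_right (lintegral_mono_set hJ0) _)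

lemma rpow_mul_enorm_LsOp_oddReflection_le (hs0 : 0 < s) (hs1 : s < 1)
    (hV : ContDiffOnSlab 2 (Ioi 0) V) (x : En n) (hr : r ∈ Ioc 0 (R / 2)) :
    ENNReal.ofReal (R ^ (1 - 2 * s)) * ‖LsOp (1 / 2) (oddReflection R V) x r‖ₑ
      ≤ ENNReal.ofReal (tailDensity s R V (x, R + r))
        + ENNReal.ofReal (tailDensity s R V (x, R - r))
        + ENNReal.ofReal (16 * (R ^ (-s) * R⁻¹)) := by
  have hr0 : 0 < r := hr.1
  have hrR : r ≤ R / 2 := hr.2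
  have hR : 0 < R := by linarith
  rw [LsOp_one_half_oddReflection hV x ⟨by linarith, by linarith⟩, ← ofReal_norm,
    ← ENNReal.ofReal_mul (Real.rpow_nonneg hR.le _)]
  have hbound : ∀ {z}, z ∈ Icc (R / 2) (2 * R) → R ^ (1 - 2 * s) * ‖LsOp (1 / 2) V x z‖
      ≤ tailDensity s R V (x, z) + 8 * (R ^ (-s) * R⁻¹) := fun hz =>
    (rpow_mul_norm_LsOp_one_half_le hs0 hs1 hV x hR hz).trans_eq (by rw [tailDensity]; ring)
  have hsum : R ^ (1 - 2 * s) * ‖LsOp (1 / 2) V x (R + r) - LsOp (1 / 2) V x (R - r)‖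
      ≤ tailDensity s R V (x, R + r) + tailDensity s R V (x, R - r) + 16 * (R ^ (-s) * R⁻¹) := by
    have hadd := hbound (z := R + r) ⟨by linarith, by linarith⟩
    have hsub := hbound (z := R - r) ⟨by linarith, by linarith⟩
    have htri := mul_le_mul_of_nonneg_left
      (norm_sub_le (LsOp (1 / 2) V x (R + r)) (LsOp (1 / 2) V x (R - r)))
      (Real.rpow_nonneg hR.le (1 - 2 * s))
    linarith
  exact (ENNReal.ofReal_le_ofReal hsum).trans (ENNReal.ofReal_add_le.trans
    (add_le_add ENNReal.ofReal_add_le le_rfl))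

lemma rpow_mul_enorm_LsOp_oddReflection_mul_cutoffExt_le (hs0 : 0 < s) (hs1 : s < 1)
    (hV : ContDiffOnSlab 2 (Ioi 0) V) {M : ℝ} (hM : ∀ x, ‖φ x‖ ≤ M) (L : ℝ) (x : En n)
    (hr : r ∈ Ioc 0 (R / 2)) :
    ENNReal.ofReal (R ^ (1 - 2 * s))
        * ‖LsOp (1 / 2) (oddReflection R V) x r * cutoffExt n (1 / 2) L φ x r‖ₑ
      ≤ ENNReal.ofReal M * (ENNReal.ofReal (tailDensity s R V (x, R + r))
          + ENNReal.ofReal (tailDensity s R V (x, R - r)))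
        + ENNReal.ofReal (16 * (R ^ (-s) * R⁻¹)) * ‖Pconv n (1 / 2) r φ x‖ₑ := by
  have hcutoff : ‖cutoffExt n (1 / 2) L φ x r‖ₑ ≤ ‖Pconv n (1 / 2) r φ x‖ₑ :=
    enorm_le_iff_norm_le.2 (norm_cutoffExt_le x r)
  have hPM : ‖Pconv n (1 / 2) r φ x‖ₑ ≤ ENNReal.ofReal M := by
    rw [← ofReal_norm]
    exact ENNReal.ofReal_le_ofReal (norm_Pconv_le one_half_pos hr.1 hM x)
  rw [enorm_mul, ← mul_assoc]
  refine (mul_le_mul' (rpow_mul_enorm_LsOp_oddReflection_le hs0 hs1 hV x hr) hcutoff).trans ?_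
  rw [add_mul, mul_comm (ENNReal.ofReal M)]
  gcongr

lemma aemeasurable_enorm_Pconv (hφ : ContDiff ℝ 1 φ) (hφc : HasCompactSupport φ) :
    AEMeasurable (fun p : En n × ℝ => ‖Pconv n s p.2 φ p.1‖ₑ)
      (volume.restrict (univ ×ˢ Ioc 0 T)) :=
  (((contDiffOnSlab_Pconv (k := 1) hφ hφc).mono Ioc_subset_Ioi_self).continuousOn.aemeasurable
    (MeasurableSet.univ.prod measurableSet_Ioc)).enorm

lemma lintegral_slab_enorm_Pconv_le (hs : 0 < s) (hφ : ContDiff ℝ 1 φ)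
    (hφc : HasCompactSupport φ) :
    ∫⁻ p in univ ×ˢ Ioc 0 T, ‖Pconv n s p.2 φ p.1‖ₑ ≤ (∫⁻ x, ‖φ x‖ₑ) * ENNReal.ofReal T :=
  (lintegral_slab_le measurableSet_Ioc (aemeasurable_enorm_Pconv hφ hφc) fun z hz =>
    lintegral_enorm_Pconv_le hs hz.1 hφ.continuous.measurable).trans_eq (by simp)

lemma exists_rpow_mul_lintegral_LsOp_oddReflection_mul_le (hs0 : 0 < s) (hs1 : s < 1)
    (hV : ContDiffOnSlab 2 (Ioi 0) V) (hφ : ContDiff ℝ 1 φ) (hφc : HasCompactSupport φ) :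
    ∃ C : ℝ≥0, ∀ R > 0, ENNReal.ofReal (R ^ (1 - 2 * s)) * ∫⁻ p in univ ×ˢ Ioc 0 (R / 2),
        ‖LsOp (1 / 2) (oddReflection R V) p.1 p.2 * cutoffExt n (1 / 2) (R / 4) φ p.1 p.2‖ₑ
      ≤ C * ((∫⁻ p in univ ×ˢ Ici (R / 2), ‖LsOp s V p.1 p.2‖ₑ)
        + ENNReal.ofReal (R ^ (-s)) * (1 + ∫⁻ x, verticalEnergy s V x)) := by
  obtain ⟨M, hM⟩ := hφc.exists_bound_of_continuous hφ.continuous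
  have hφint : ∫⁻ x, ‖φ x‖ₑ < ⊤ := (hφ.continuous.integrable_of_hasCompactSupport hφc).2
  refine ⟨8 * (M.toNNReal + (∫⁻ x, ‖φ x‖ₑ).toNNReal), fun R hR => ?_⟩
  have htail : ContinuousOn (fun p => ENNReal.ofReal (tailDensity s R V p)) (univ ×ˢ Ioi 0) :=
    ENNReal.continuous_ofReal.comp_continuousOn (continuousOn_tailDensity hV)
  have hslab : MeasurableSet ((univ : Set (En n)) ×ˢ Ioc 0 (R / 2)) :=
    MeasurableSet.univ.prod measurableSet_Ioc
  have hscale : ENNReal.ofReal (16 * (R ^ (-s) * R⁻¹)) * ENNReal.ofReal (R / 2)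
      = 8 * ENNReal.ofReal (R ^ (-s)) := by
    rw [← ENNReal.ofReal_mul (by positivity), show 16 * (R ^ (-s) * R⁻¹) * (R / 2) = 8 * R ^ (-s) by
      field_simp; norm_num, ENNReal.ofReal_mul (by norm_num), ENNReal.ofReal_ofNat]
  rw [← lintegral_const_mul' _ _ ENNReal.ofReal_ne_top]
  refine (setLIntegral_mono' hslab fun p hp =>
    rpow_mul_enorm_LsOp_oddReflection_mul_cutoffExt_le hs0 hs1 hV hM _ p.1 hp.2).trans ?_
  rw [lintegral_add_right' _ ((aemeasurable_enorm_Pconv hφ hφc).const_mul _),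
    lintegral_const_mul' _ _ ENNReal.ofReal_ne_top, lintegral_const_mul' _ _ ENNReal.ofReal_ne_top]
  have hreflect := (lintegral_add_reflection_le htail hR).trans
    (mul_le_mul_right (lintegral_tailDensity_le hV hR) 2)
  refine (add_le_add (mul_le_mul_right hreflect _) (mul_le_mul_right
    (lintegral_slab_enorm_Pconv_le one_half_pos hφ hφc) _)).trans ?_
  rw [mul_left_comm _ (∫⁻ x, ‖φ x‖ₑ), hscale, ENNReal.coe_mul, ENNReal.coe_add,
    ENNReal.coe_toNNReal hφint.ne, ENNReal.ofNNReal_toNNReal, ENNReal.coe_ofNat]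
  set a := ENNReal.ofReal M
  set b := ∫⁻ x, ‖φ x‖ₑ
  set ρ := ENNReal.ofReal (R ^ (-s))
  set τ := ∫⁻ p in univ ×ˢ Ici (R / 2), ‖LsOp s V p.1 p.2‖ₑ
  set e := ∫⁻ x, verticalEnergy s V x
  calc a * (2 * (2 * τ + 4 * ρ * e)) + b * (8 * ρ)
      ≤ a * (2 * (2 * τ + 4 * ρ * e)) + b * (8 * ρ)
        + (4 * a * τ + 8 * a * ρ + 8 * b * τ + 8 * b * ρ * e) := le_self_add
    _ = 8 * (a + b) * (τ + ρ * (1 + e)) := by ring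

lemma enorm_oddReflection_le (hs0 : 0 < s) (hs1 : s < 1) (hV : ContDiffOnSlab 1 (Ici 0) V)
    (hV0 : ∀ x, V x 0 = 0) (x : En n) (hr : r ∈ Ico 0 R) :
    ‖oddReflection R V x r‖ₑ ≤ ENNReal.ofReal (4 * R ^ s)
      * (ENNReal.ofReal (1 / (2 * s)) + verticalEnergy s V x) := by
  have hr0 : 0 ≤ r := hr.1
  have hrR : r < R := hr.2
  have hR : 0 < R := hr0.trans_lt hrR
  have hV_le : ∀ z ∈ Ioc 0 (2 * R), ‖V x z‖ₑ ≤ ENNReal.ofReal (2 * R ^ s)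
      * (ENNReal.ofReal (1 / (2 * s)) + verticalEnergy s V x) := fun z hz => by
    refine (enorm_le_rpow_mul_verticalEnergy hs0 hz.1 hV hV0 x).trans
      (mul_le_mul_left (ENNReal.ofReal_le_ofReal ?_) _)
    calc z ^ s ≤ (2 * R) ^ s := Real.rpow_le_rpow hz.1.le hz.2 hs0.le
      _ = 2 ^ s * R ^ s := Real.mul_rpow two_pos.le hR.le
      _ ≤ 2 ^ (1 : ℝ) * R ^ s := by gcongr; norm_num
      _ = 2 * R ^ s := by rw [Real.rpow_one]
  rw [show 4 * R ^ s = 2 * R ^ s + 2 * R ^ s by ring,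
    ENNReal.ofReal_add (by positivity) (by positivity), add_mul]
  exact enorm_sub_le.trans (add_le_add (hV_le _ ⟨by linarith, by linarith⟩)
    (hV_le _ ⟨by linarith, by linarith⟩))

lemma exists_rpow_mul_lintegral_oddReflection_mul_LsOp_le (hs0 : 0 < s) (hs1 : s < 1)
    (hV : ContDiffOnSlab 1 (Ici 0) V) (hV0 : ∀ x, V x 0 = 0) (hφ : ContDiff ℝ 2 φ)
    (hφc : HasCompactSupport φ) :
    ∃ C : ℝ≥0, ∀ R > 0, ENNReal.ofReal (R ^ (1 - 2 * s)) * ∫⁻ p in univ ×ˢ Ioc 0 (R / 2),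
        ‖oddReflection R V p.1 p.2 * LsOp (1 / 2) (cutoffExt n (1 / 2) (R / 4) φ) p.1 p.2‖ₑ
      ≤ C * (ENNReal.ofReal (R ^ (-s)) * (ENNReal.ofReal (1 / (2 * s))
        + ∫⁻ x, verticalEnergy s V x)) := by
  obtain ⟨C, hC⟩ := exists_lintegral_enorm_mul_LsOp_cutoffExt_le one_half_pos hφ hφc
  refine ⟨C * 32, fun R hR => ?_⟩
  have hweight : ∀ r ∈ Ioc 0 (R / 2), ∀ x,
      ENNReal.ofReal (r ^ (1 - 2 * (1 / 2) : ℝ)) * ‖oddReflection R V x r‖ₑ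
        ≤ ENNReal.ofReal (4 * R ^ s) * (ENNReal.ofReal (1 / (2 * s)) + verticalEnergy s V x) := by
    intro r hr x
    rw [mul_one_div_cancel two_ne_zero, sub_self, Real.rpow_zero, ENNReal.ofReal_one, one_mul]
    exact enorm_oddReflection_le hs0 hs1 hV hV0 x ⟨hr.1.le, hr.2.trans_lt (half_lt_self hR)⟩
  have hscale : R ^ (1 - 2 * s) * (((R / 4) ^ 2)⁻¹ * (R / 2) * (4 * R ^ s)) = 32 * R ^ (-s) := by
    rw [show 1 - 2 * s = -s + (1 - s) by ring, Real.rpow_add hR, Real.rpow_sub hR, Real.rpow_one]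
    field_simp
    norm_num
  have hV₀ : ContDiffOnSlab 0 (Ioc 0 (R / 2)) (oddReflection R V) :=
    ((hV.mono Ioi_subset_Ici_self).oddReflection.mono fun r hr =>
      ⟨by linarith [hr.1], by linarith [hr.1, hr.2]⟩).of_le zero_le_one
  refine (mul_le_mul_right (hC (R / 4) (R / 2) _ _ _ _ hV₀
    (aemeasurable_verticalEnergy (hV.mono Ioi_subset_Ici_self)) hweight) _).trans_eq ?_
  rw [mul_assoc (C : ℝ≥0∞), ← ENNReal.ofReal_mul (by positivity), mul_assoc (C : ℝ≥0∞),
    mul_left_comm, ← mul_assoc (ENNReal.ofReal (R ^ _)), ← ENNReal.ofReal_mul (by positivity),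
    hscale, ENNReal.ofReal_mul (by norm_num), ENNReal.ofReal_ofNat, ENNReal.coe_mul,
    ENNReal.coe_ofNat]
  ring

lemma tendsto_lintegral_slab_Ici {f : En n × ℝ → ℝ≥0∞} (hf : ∫⁻ p in univ ×ˢ Ioi 0, f p < ⊤) :
    Tendsto (fun R => ∫⁻ p in univ ×ˢ Ici R, f p) atTop (𝓝 0) := by
  have hslab : ∀ R : ℝ, MeasurableSet ((univ : Set (En n)) ×ˢ Ici R) := fun R =>
    MeasurableSet.univ.prod measurableSet_Ici
  have hempty : ⋂ R : ℝ, (univ : Set (En n)) ×ˢ Ici R = ∅ := eq_empty_of_forall_notMem fun p hp =>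
    (lt_add_one p.2).not_ge (mem_iInter.1 hp (p.2 + 1)).2
  have hlim := tendsto_measure_iInter_atTop (μ := volume.withDensity f)
    (fun R => (hslab R).nullMeasurableSet)
    (fun _ _ h => prod_mono_right (Ici_subset_Ici.2 h)) ⟨1, by
      rw [withDensity_apply _ (hslab 1)]
      exact ((lintegral_mono_set (prod_mono_right (Ici_subset_Ioi.2 one_pos))).trans_lt hf).ne⟩
  rw [hempty, measure_empty] at hlim
  exact hlim.congr fun R => withDensity_apply _ (hslab R)

/-- The total mass of the terms of the Green density of the odd reflection of `V` around
height `R`, weighted as the flux of `V` through height `R`. -/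
def reflectionMass (s R : ℝ) (V : En n → ℝ → ℝ) (φ : En n → ℝ) : ℝ≥0∞ :=
  ENNReal.ofReal (R ^ (1 - 2 * s)) *
    ((∫⁻ p in univ ×ˢ Ioc 0 (R / 2),
        ‖LsOp (1 / 2) (oddReflection R V) p.1 p.2 * cutoffExt n (1 / 2) (R / 4) φ p.1 p.2‖ₑ)
      + ∫⁻ p in univ ×ˢ Ioc 0 (R / 2),
        ‖oddReflection R V p.1 p.2 * LsOp (1 / 2) (cutoffExt n (1 / 2) (R / 4) φ) p.1 p.2‖ₑ)

lemma tendsto_reflectionMass_atTop (hs0 : 0 < s) (hs1 : s < 1) (hV : ContDiffOnSlab 2 (Ici 0) V)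
    (hV0 : ∀ x, V x 0 = 0) (hVen : ∫⁻ x, verticalEnergy s V x < ⊤)
    (hLV : IntegrableOn (fun p : En n × ℝ => LsOp s V p.1 p.2) (univ ×ˢ Ioi 0))
    (hφ : ContDiff ℝ 2 φ) (hφc : HasCompactSupport φ) :
    Tendsto (fun R => reflectionMass s R V φ) atTop (𝓝 0) := by
  obtain ⟨C, hC⟩ := exists_rpow_mul_lintegral_LsOp_oddReflection_mul_le hs0 hs1
    (hV.mono Ioi_subset_Ici_self) (hφ.of_le one_le_two) hφc
  obtain ⟨D, hD⟩ := exists_rpow_mul_lintegral_oddReflection_mul_LsOp_le hs0 hs1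
    (hV.of_le one_le_two) hV0 hφ hφc
  have hpow : ∀ a : ℝ≥0∞, a ≠ ⊤ →
      Tendsto (fun R : ℝ => ENNReal.ofReal (R ^ (-s)) * a) atTop (𝓝 0) := fun a ha => by
    simpa using ENNReal.Tendsto.mul_const (b := a)
      (ENNReal.tendsto_ofReal (tendsto_rpow_neg_atTop hs0)) (.inr ha)
  have htail := (tendsto_lintegral_slab_Ici hLV.2).comp (tendsto_id.atTop_div_const two_pos)
  have hbound := (ENNReal.Tendsto.const_mul (htail.add
      (hpow _ (ENNReal.add_ne_top.2 ⟨ENNReal.one_ne_top, hVen.ne⟩)))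
      (.inr (ENNReal.coe_ne_top (r := C)))).add
    (ENNReal.Tendsto.const_mul
      (hpow _ (ENNReal.add_ne_top.2 ⟨ENNReal.ofReal_ne_top (r := 1 / (2 * s)), hVen.ne⟩))
      (.inr (ENNReal.coe_ne_top (r := D))))
  simp only [add_zero, mul_zero] at hbound
  refine tendsto_of_tendsto_of_tendsto_of_le_of_le' tendsto_const_nhds hbound
    (.of_forall fun _ => zero_le) ?_
  filter_upwards [eventually_gt_atTop 0] with R hR
  rw [reflectionMass, mul_add]
  exact add_le_add (hC R hR) (hD R hR)

lemma rpow_mul_lintegral_greenDensity_oddReflection_le (hV : ContDiffOnSlab 2 (Ioi 0) V)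
    (hφ : ContDiff ℝ 2 φ) (hφc : HasCompactSupport φ) (hR : 0 < R) :
    ENNReal.ofReal (R ^ (1 - 2 * s)) * ∫⁻ p in univ ×ˢ Ioc 0 (R / 2),
        ‖greenDensity (1 / 2) (oddReflection R V) (cutoffExt n (1 / 2) (R / 4) φ) p.1 p.2‖ₑ
      ≤ reflectionMass s R V φ := by
  have hW : ContDiffOnSlab 0 (Ioc 0 (R / 2)) (oddReflection R V) :=
    (hV.oddReflection.mono fun r hr => ⟨by linarith [hr.1], by linarith [hr.1, hr.2]⟩).of_le
      zero_le_two
  exact mul_le_mul_right ((lintegral_mono fun _ => enorm_sub_le).trans_eq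
    (lintegral_add_right' _ (aestronglyMeasurable_mul_LsOp_cutoffExt hW hφ hφc).enorm)) _

lemma integrableOn_greenDensity_oddReflection (hV : ContDiffOnSlab 2 (Ioi 0) V)
    (hφ : ContDiff ℝ 2 φ) (hφc : HasCompactSupport φ) (hR : 0 < R)
    (hmass : reflectionMass s R V φ ≠ ⊤) :
    IntegrableOn (fun p : En n × ℝ => greenDensity (1 / 2) (oddReflection R V)
      (cutoffExt n (1 / 2) (R / 4) φ) p.1 p.2) (univ ×ˢ Ioc 0 (R / 2)) := by
  have hgreen : ContDiffOnSlab 0 (Ioo 0 R)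
      (greenDensity (1 / 2) (oddReflection R V) (cutoffExt n (1 / 2) (R / 4) φ)) :=
    (hV.oddReflection.mono (Ioo_subset_Ioo_left (neg_nonpos.2 hR.le))).greenDensity
      ((contDiffOnSlab_cutoffExt hφ hφc).mono Ioo_subset_Ioi_self) isOpen_Ioo Ioo_subset_Ioi_self
  exact ⟨(hgreen.mono (Ioc_subset_Ioo_right (half_lt_self hR))).continuousOn.aestronglyMeasurable
      (MeasurableSet.univ.prod measurableSet_Ioc),
    ENNReal.lt_top_of_mul_ne_top_right
      (ne_top_of_le_ne_top hmass (rpow_mul_lintegral_greenDensity_oddReflection_le hV hφ hφc hR))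
      (ENNReal.ofReal_pos.2 (Real.rpow_pos_of_pos hR _)).ne'⟩

lemma enorm_weightedFlux_le_reflectionMass (hV : ContDiffOnSlab 2 (Ioi 0) V)
    (hφ : ContDiff ℝ 2 φ) (hφc : HasCompactSupport φ) (hR : 0 < R)
    (hφR : tsupport φ ⊆ Metric.closedBall 0 (R / 8)) :
    ‖weightedFlux s V φ R‖ₑ ≤ reflectionMass s R V φ := by
  by_cases hmass : reflectionMass s R V φ = ⊤
  · exact hmass ▸ le_top
  have hheight : 2 * (R / 4) = R / 2 := by ring
  have hflux := tendsto_weightedFlux_of_integrableOn_greenDensity (L := R / 4) (T := R)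
    one_half_pos one_half_lt_one (hV.oddReflection.mono (Ico_subset_Ioo_left (neg_lt_zero.2 hR)))
    (fun x => by simp only [oddReflection, add_zero, sub_zero, sub_self]) hφ hφc
    (div_pos hR four_pos) (by linarith) (by rwa [div_div, show (4 : ℝ) * 2 = 8 by norm_num])
    (by rw [hheight]; exact integrableOn_greenDensity_oddReflection hV hφ hφc hR hmass)
  have hgreen := tendsto_nhds_unique (tendsto_weightedFlux_oddReflection hV
    (hφ.of_le one_le_two) hφc hR) hflux
  rw [hheight] at hgreen
  have hhalf : ‖weightedFlux (1 / 2) V φ R‖ₑ ≤ ‖2 * weightedFlux (1 / 2) V φ R‖ₑ := by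
    rw [enorm_le_iff_norm_le, norm_mul]
    exact le_mul_of_one_le_left (norm_nonneg _) (by norm_num)
  rw [weightedFlux_eq_rpow_mul, enorm_mul, Real.enorm_of_nonneg (Real.rpow_nonneg hR.le _)]
  refine (mul_le_mul_right (hhalf.trans ?_) _).trans
    (rpow_mul_lintegral_greenDensity_oddReflection_le hV hφ hφc hR)
  rw [hgreen, enorm_neg]
  exact enorm_integral_le_lintegral_enorm _

lemma tendsto_weightedFlux_atTop (hs0 : 0 < s) (hs1 : s < 1) (hV : ContDiffOnSlab 2 (Ici 0) V)
    (hV0 : ∀ x, V x 0 = 0) (hVen : ∫⁻ x, verticalEnergy s V x < ⊤)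
    (hLV : IntegrableOn (fun p : En n × ℝ => LsOp s V p.1 p.2) (univ ×ˢ Ioi 0))
    (hφ : ContDiff ℝ 2 φ) (hφc : HasCompactSupport φ) :
    Tendsto (weightedFlux s V φ) atTop (𝓝 0) := by
  obtain ⟨r, hr⟩ := hφc.isBounded.subset_closedBall 0
  refine tendsto_zero_iff_enorm_tendsto_zero.2 (tendsto_of_tendsto_of_tendsto_of_le_of_le'
    tendsto_const_nhds (tendsto_reflectionMass_atTop hs0 hs1 hV hV0 hVen hLV hφ hφc)
    (.of_forall fun _ => zero_le) ?_)
  filter_upwards [eventually_gt_atTop 0, eventually_ge_atTop (8 * r)] with R hR hrR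
  exact enorm_weightedFlux_le_reflectionMass (hV.mono Ioi_subset_Ici_self) hφ hφc hR
    (hr.trans (Metric.closedBall_subset_closedBall (by linarith)))

end Far

/-! ### The volume term -/

section Fubini

variable {n : ℕ} {s : ℝ} {F : En n → ℝ → ℝ} {φ : En n → ℝ}

lemma integrable_mul_Pker_sub (hs : 0 < s)
    (hF : IntegrableOn (fun p : En n × ℝ => F p.1 p.2) (univ ×ˢ Ioi 0)) :
    Integrable (fun q : (En n × ℝ) × En n => F q.1.1 q.1.2 * Pker n s q.1.2 (q.1.1 - q.2))
      ((volume.restrict (univ ×ˢ Ioi 0)).prod volume) := by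
  have hpos : ∀ᵐ p : En n × ℝ ∂volume.restrict (univ ×ˢ Ioi 0), 0 < p.2 :=
    (ae_restrict_mem (MeasurableSet.univ.prod measurableSet_Ioi)).mono fun p hp => hp.2
  have hPker : Measurable fun q : (En n × ℝ) × En n => Pker n s q.1.2 (q.1.1 - q.2) := by
    unfold Pker
    fun_prop
  have hmeas : AEStronglyMeasurable (fun q : (En n × ℝ) × En n =>
      F q.1.1 q.1.2 * Pker n s q.1.2 (q.1.1 - q.2))
      ((volume.restrict (univ ×ˢ Ioi 0)).prod volume) :=
    hF.1.comp_fst.mul hPker.aestronglyMeasurable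
  refine (integrable_prod_iff hmeas).2 ⟨?_, Integrable.congr hF.norm ?_⟩
  · filter_upwards [hpos] with p hp
    exact ((integrable_Pker hs hp).comp_sub_left p.1).const_mul _
  · filter_upwards [hpos] with p hp
    simp_rw [norm_mul, Real.norm_of_nonneg (Pker_nonneg hs hp _)]
    rw [integral_const_mul, integral_sub_left_eq_self (Pker n s p.2) volume p.1,
      integral_Pker hs hp, mul_one]

lemma setIntegral_mul_Pconv_eq (hs : 0 < s) (hφ : AEStronglyMeasurable φ) {M : ℝ}
    (hM : ∀ x, ‖φ x‖ ≤ M)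
    (hF : IntegrableOn (fun p : En n × ℝ => F p.1 p.2) (univ ×ˢ Ioi 0)) :
    ∫ p in (univ : Set (En n)) ×ˢ Ioi 0, F p.1 p.2 * Pconv n s p.2 φ p.1
      = ∫ x, (∫ z in Ioi 0, Pconv n s z (fun y => F y z) x) * φ x := by
  have hint := integrable_mul_Pker_sub hs hF
  have hintφ := hint.mul_bdd (c := M) hφ.comp_snd (ae_of_all _ fun q => hM q.2)
  calc ∫ p in (univ : Set (En n)) ×ˢ Ioi 0, F p.1 p.2 * Pconv n s p.2 φ p.1
      = ∫ p in (univ : Set (En n)) ×ˢ Ioi 0, ∫ x, F p.1 p.2 * Pker n s p.2 (p.1 - x) * φ x := by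
        simp_rw [Pconv, ← integral_const_mul, mul_assoc]
    _ = ∫ x, (∫ p in univ ×ˢ Ioi 0, F p.1 p.2 * Pker n s p.2 (p.1 - x)) * φ x := by
        rw [integral_integral_swap hintφ]
        simp_rw [integral_mul_const]
    _ = ∫ x, (∫ z in Ioi 0, Pconv n s z (fun y => F y z) x) * φ x := by
        refine integral_congr_ae (hint.prod_left_ae.mono fun x hx => ?_)
        simp only [volume_restrict_slab] at hx ⊢
        rw [integral_prod_symm _ hx]
        simp_rw [Pconv, ← Pker_neg (x - _), neg_sub, mul_comm]

end Fubini

lemma lintegral_sq_deriv_mul_rpow_le_energy {n : ℕ} (s : ℝ) (V : En n → ℝ → ℝ) :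
    ∫⁻ p in (univ : Set (En n)) ×ˢ Ioi (0 : ℝ),
        ENNReal.ofReal (deriv (V p.1) p.2 ^ 2 * p.2 ^ (1 - 2 * s))
      ≤ ∫⁻ p in (univ : Set (En n)) ×ˢ Ioi (0 : ℝ), ENNReal.ofReal
        (((∑ i, (pd i (fun y => V y p.2) p.1) ^ 2) + (deriv (V p.1) p.2) ^ 2)
          * p.2 ^ (1 - 2 * s)) :=
  setLIntegral_mono' (MeasurableSet.univ.prod measurableSet_Ioi) fun _ hp =>
    ENNReal.ofReal_le_ofReal (mul_le_mul_of_nonneg_right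
      (le_add_of_nonneg_left (Finset.sum_nonneg fun _ _ => sq_nonneg _))
      (Real.rpow_nonneg (mem_Ioi.1 hp.2).le _))

theorem duhamel_formula_general {n : ℕ} {s : ℝ} (hs0 : 0 < s) (hs1 : s < 1)
    {F V : En n → ℝ → ℝ}
    (hFint : ∫⁻ p in (univ : Set (En n)) ×ˢ Ioi (0 : ℝ), ‖F p.1 p.2‖ₑ < ⊤)
    (hV : ContDiffOn ℝ 2 (fun p : En n × ℝ => V p.1 p.2) (univ ×ˢ Ici 0))
    (hVen : ∫⁻ p in (univ : Set (En n)) ×ˢ Ioi (0 : ℝ),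
      ENNReal.ofReal (deriv (V p.1) p.2 ^ 2 * p.2 ^ (1 - 2 * s)) < ⊤)
    (hV0 : ∀ x, V x 0 = 0)
    (heq : ∀ x, ∀ z, 0 < z → LsOp s V x z = F x z)
    {φ : En n → ℝ} (hφ : ContDiff ℝ 2 φ) (hφc : HasCompactSupport φ) :
    Tendsto
      (fun p : ℝ × ℝ =>
        (∫ x, p.2 ^ (1 - 2 * s) * deriv (V x) p.2 * φ x)
          - ∫ x, p.1 ^ (1 - 2 * s) * deriv (V x) p.1 * φ x)
      ((𝓝[>] (0 : ℝ)) ×ˢ atTop)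
      (𝓝 (∫ p in (univ : Set (En n)) ×ˢ Ioi (0 : ℝ), F p.1 p.2 * Pconv n s p.2 φ p.1))
    ∧ (∫ p in (univ : Set (En n)) ×ˢ Ioi (0 : ℝ), F p.1 p.2 * Pconv n s p.2 φ p.1)
        = ∫ x, (∫ z in Ioi (0 : ℝ), Pconv n s z (fun y => F y z) x) * φ x := by
  have hslab : MeasurableSet ((univ : Set (En n)) ×ˢ Ioi (0 : ℝ)) :=
    MeasurableSet.univ.prod measurableSet_Ioi
  have hV₀ : ContDiffOnSlab 2 (Ioi 0) V := ContDiffOnSlab.mono hV Ioi_subset_Ici_self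
  have hLV : EqOn (fun p : En n × ℝ => LsOp s V p.1 p.2) (fun p => F p.1 p.2) (univ ×ˢ Ioi 0) :=
    fun p hp => heq p.1 p.2 hp.2
  have hF : IntegrableOn (fun p : En n × ℝ => F p.1 p.2) (univ ×ˢ Ioi 0) :=
    ⟨((hV₀.LsOp isOpen_Ioi subset_rfl s).continuousOn.congr hLV.symm).aestronglyMeasurable hslab,
      hFint⟩
  have hVen' := (lintegral_verticalEnergy (s := s) (hV₀.of_le one_le_two)).trans_lt hVen
  have hLVint := hF.congr_fun hLV.symm hslab
  obtain ⟨M, hM⟩ := hφc.exists_bound_of_continuous hφ.continuous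
  refine ⟨?_, setIntegral_mul_Pconv_eq hs0 hφ.continuous.aestronglyMeasurable hM hF⟩
  have hflux := ((tendsto_weightedFlux_atTop hs0 hs1 hV hV0 hVen' hLVint hφ hφc).comp
      (tendsto_snd (f := 𝓝[>] 0))).sub
    ((tendsto_weightedFlux_nhdsGT_zero hs0 hs1 hV hV0 hVen' hLVint hφ hφc).comp
      (tendsto_fst (g := atTop)))
  rw [zero_sub, neg_neg] at hflux
  rwa [← setIntegral_congr_fun hslab fun p hp => by rw [← heq p.1 p.2 hp.2]]

/-- **Duhamel-type formula for the extension** (Proposition: Euclidean case).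
If `V` solves `div_{x,z}(z^{1-2s} ∇̃V) = F` on `ℝⁿ×(0,∞)` with `V(·,0) = 0`, finite weighted
energy, and `F` absolutely integrable, then for every test function `φ`, the boundary-flux
difference converges (as `ε → 0⁺`, `R → ∞`) to `∬ F Φ`, which equals
`∫ (∫₀^∞ P_z^{(s)} ∗ F(·,z) dz) φ`. -/
theorem duhamel_formula (n : ℕ) (hn : 1 ≤ n) (s : ℝ) (hs0 : 0 < s) (hs1 : s < 1)
    (F : En n → ℝ → ℝ) (V : En n → ℝ → ℝ)
    (hFsm : ContDiffOn ℝ (⊤ : ℕ∞) (fun p : En n × ℝ => F p.1 p.2) (univ ×ˢ Ioi 0))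
    (hFint : ∫⁻ p in (univ : Set (En n)) ×ˢ Ioi (0 : ℝ),
      ENNReal.ofReal |F p.1 p.2| < ⊤)
    (hVsm : ContDiffOn ℝ (⊤ : ℕ∞) (fun p : En n × ℝ => V p.1 p.2) (univ ×ˢ Ici 0))
    (hVen : ∫⁻ p in (univ : Set (En n)) ×ˢ Ioi (0 : ℝ),
      ENNReal.ofReal
        (((∑ i, (pd i (fun y => V y p.2) p.1) ^ 2) + (deriv (V p.1) p.2) ^ 2)
          * p.2 ^ (1 - 2 * s)) < ⊤)
    (hV0 : ∀ x, V x 0 = 0)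
    (heq : ∀ x, ∀ z, 0 < z → LsOp s V x z = F x z)
    (φ : En n → ℝ) (hφ : ContDiff ℝ (⊤ : ℕ∞) φ) (hφc : HasCompactSupport φ) :
    Tendsto
      (fun p : ℝ × ℝ =>
        (∫ x, p.2 ^ (1 - 2 * s) * deriv (V x) p.2 * φ x)
          - ∫ x, p.1 ^ (1 - 2 * s) * deriv (V x) p.1 * φ x)
      ((𝓝[>] (0 : ℝ)) ×ˢ atTop)
      (𝓝 (∫ p in (univ : Set (En n)) ×ˢ Ioi (0 : ℝ), F p.1 p.2 * Pconv n s p.2 φ p.1))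
    ∧ (∫ p in (univ : Set (En n)) ×ˢ Ioi (0 : ℝ), F p.1 p.2 * Pconv n s p.2 φ p.1)
        = ∫ x, (∫ z in Ioi (0 : ℝ), Pconv n s z (fun y => F y z) x) * φ x := by
  exact duhamel_formula_general hs0 hs1 (by simpa only [Real.enorm_eq_ofReal_abs] using hFint)
    (hVsm.of_le ENat.LEInfty.out) ((lintegral_sq_deriv_mul_rpow_le_energy s V).trans_lt hVen)
    hV0 heq (hφ.of_le ENat.LEInfty.out) hφc
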